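/- arXiv:math/0410246 — 7 statements merged into one kernel-verified Lean document; each statement's English description precedes it below -/
import Mathlib

section
/- Let K be a field of characteristic 0, let F ∈ K[t_1,…,t_n, x] be a polynomial which, viewed as a polynomial in x over the rational function field K(t_1,…,t_n), is separable of degree m ≥ 1, let G be its Galois group over K(t_1,…,t_n), and let s ≤ n. Then there is a thin subset Υ of K^s such that for every (τ_1,…,τ_s) ∈ K^s outside Υ, the polynomial F(τ_1,…,τ_s, t_{s+1},…,t_n, x), viewed as a polynomial in x over K(t_{s+1},…,t_n), is separable of degree m and its Galois group over K(t_{s+1},…,t_n) is isomorphic to G. -/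
/-- `S ⊆ K^n` is a basic thin set of the first type: the zero locus of a nonzero
polynomial `F ∈ K[t_1,…,t_n]`. -/
def IsBasicThinOne (K : Type*) [Field K] (n : ℕ) (S : Set (Fin n → K)) : Prop :=
  ∃ F : MvPolynomial (Fin n) K, F ≠ 0 ∧ S = {τ | MvPolynomial.eval τ F = 0}

/-- `S ⊆ K^n` is a basic thin set of the second type: there is an irreducible
polynomial `F ∈ K[t_1,…,t_n][x]` with `deg_x F ≥ 2` such that `S` is the set of
`τ` for which the specialization `F(τ, x) ∈ K[x]` has a root in `K`. -/
def IsBasicThinTwo (K : Type*) [Field K] (n : ℕ) (S : Set (Fin n → K)) : Prop :=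
  ∃ F : Polynomial (MvPolynomial (Fin n) K), Irreducible F ∧ 2 ≤ F.natDegree ∧
    S = {τ | ∃ r : K, (F.map (MvPolynomial.eval τ)).eval r = 0}

/-- `S ⊆ K^n` is thin: it is contained in a finite union of basic thin sets. -/
def IsThin (K : Type*) [Field K] (n : ℕ) (S : Set (Fin n → K)) : Prop :=
  ∃ (m : ℕ) (B : Fin m → Set (Fin n → K)),
    (∀ i, IsBasicThinOne K n (B i) ∨ IsBasicThinTwo K n (B i)) ∧ S ⊆ ⋃ i, B i

open Polynomial

open scoped Pointwise in
theorem gs_core1 {R M L M' B κ : Type*} [CommRing R] [IsDomain R] [IsIntegrallyClosed R]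
    [Field M] [Algebra R M] [IsFractionRing R M] [Field L] [Algebra M L] [Algebra R L]
    [IsScalarTower R M L] [FiniteDimensional M L] [IsGalois M L]
    (P : Ideal R) [P.IsPrime] [IsIntegrallyClosed (R ⧸ P)] [Field M'] [CharZero M']
    [Algebra (R ⧸ P) M'] [IsFractionRing (R ⧸ P) M'] (F : R[X])
    [CommRing B] [Algebra R B] [Algebra B L] [IsScalarTower R B L]
    (hBL : Function.Injective (algebraMap B L))
    (hB : ∀ x : L, IsIntegral R x → ∃ y : B, algebraMap B L y = x)
    [MulSemiringAction Gal(L/M) B] [SMulCommClass Gal(L/M) R B]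
    (hcoe : ∀ (g : Gal(L/M)) (x : B), algebraMap B L (g • x) = g (algebraMap B L x))
    [Algebra.IsInvariant R B Gal(L/M)]
    (Q : Ideal B) [Q.IsPrime] [Q.LiesOver P]
    [Field κ] [Algebra (R ⧸ P) κ] [Algebra (B ⧸ Q) κ] [IsScalarTower (R ⧸ P) (B ⧸ Q) κ]
    [IsFractionRing (B ⧸ Q) κ] [Algebra M' κ] [IsScalarTower (R ⧸ P) M' κ]
    (hF : (F.map (algebraMap R L)).Splits)
    (hsep : (F.map (algebraMap R L)).Separable)
    (hgen : ∀ σ : Gal(L/M), (∀ x, aeval x F = 0 → σ x = x) → σ = 1)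
    (hlc : F.leadingCoeff ∉ P)
    (hsep' : (F.map ((algebraMap (R ⧸ P) M').comp (Ideal.Quotient.mk P))).Separable)
    (hD : ∀ D : Subgroup Gal(L/M), D ≠ ⊤ → ∃ θ : L, IsIntegral R θ ∧ (∀ σ ∈ D, σ θ = θ) ∧
      ∃ p : R[X], aeval θ p = 0 ∧ ∀ y : R ⧸ P, (p.map (Ideal.Quotient.mk P)).eval y ≠ 0) :
    Nonempty ((F.map ((algebraMap (R ⧸ P) M').comp (Ideal.Quotient.mk P))).Gal ≃* Gal(L/M)) := by
  classical
  have hinjRL : Function.Injective (algebraMap R L) := by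
    rw [IsScalarTower.algebraMap_eq R M L]
    exact (algebraMap M L).injective.comp (IsFractionRing.injective R M)
  have hinj' : Function.Injective (algebraMap (R ⧸ P) κ) := by
    rw [IsScalarTower.algebraMap_eq (R ⧸ P) (B ⧸ Q) κ]
    exact (IsFractionRing.injective (B ⧸ Q) κ).comp (FaithfulSMul.algebraMap_injective _ _)
  have hnorm : Normal M' κ := Ideal.IsFractionRing.normal Gal(L/M) P Q M' κ
  have : IsGalois M' κ := { __ := hnorm }
  have : FiniteDimensional M' κ := Ideal.IsFractionRing.finite_of_isInvariant Gal(L/M) P Q M' κ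
  let Φ : B →+* κ := (algebraMap (B ⧸ Q) κ).comp (Ideal.Quotient.mk Q)
  have hΦ : ∀ x : R, Φ (algebraMap R B x) =
      algebraMap M' κ (algebraMap (R ⧸ P) M' (Ideal.Quotient.mk P x)) := by
    intro x
    rw [← IsScalarTower.algebraMap_apply (R ⧸ P) M' κ,
      IsScalarTower.algebraMap_apply (R ⧸ P) (B ⧸ Q) κ]
    rfl
  have hΦ' : Φ.comp (algebraMap R B) = (algebraMap M' κ).comp ((algebraMap (R ⧸ P) M').comp
    (Ideal.Quotient.mk P)) := RingHom.ext hΦ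
  have hΦ'' : Φ.comp (algebraMap R B) = (algebraMap (R ⧸ P) κ).comp
    (Ideal.Quotient.mk P) := by
    rw [hΦ', IsScalarTower.algebraMap_eq (R ⧸ P) M' κ]; rfl
  let S := IsFractionRing.stabilizerHom Gal(L/M) P Q M' κ
  have hSsurj : Function.Surjective S := IsFractionRing.stabilizerHom_surjective _ _ _ _ _
  have hSa : ∀ (σ : MulAction.stabilizer Gal(L/M) Q) (x : B), S σ (Φ x) = Φ (σ.1 • x) :=
    fun σ x => IsFractionRing.stabilizerHom_apply_apply_mk _ _ _ _ _ σ x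
  -- the stabilizer is everything
  have htop : MulAction.stabilizer Gal(L/M) Q = ⊤ := by
    by_contra hne
    obtain ⟨θ', hθi, hθf, p, hp, hno⟩ := hD _ hne
    obtain ⟨θ, rfl⟩ := hB θ' hθi
    have h1 : Φ θ ∈ (⊥ : IntermediateField M' κ) := by
      rw [IsGalois.mem_bot_iff_fixed]
      intro f
      obtain ⟨σ, rfl⟩ := hSsurj f
      rw [hSa]
      congr 1
      apply hBL
      rw [hcoe]
      exact hθf σ.1 σ.2
    obtain ⟨y, hy⟩ := IntermediateField.mem_bot.1 h1
    have key : ∀ q : R[X], aeval (algebraMap B L θ) q = 0 →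
        eval₂ ((algebraMap (R ⧸ P) κ).comp (Ideal.Quotient.mk P)) (Φ θ) q = 0 := by
      intro q hq
      rw [aeval_algebraMap_apply] at hq
      have h3 := hBL (hq.trans (map_zero _).symm)
      have h4 := congrArg Φ h3
      rw [aeval_def, hom_eval₂, map_zero] at h4
      rw [← hΦ'', h4]
    have h2 : IsIntegral (R ⧸ P) y := by
      rw [← isIntegral_algebraMap_iff (algebraMap M' κ).injective (R := R ⧸ P) (x := y), hy]
      obtain ⟨q, hq, hq0⟩ := hθi
      refine ⟨q.map (Ideal.Quotient.mk P), hq.map _, ?_⟩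
      rw [eval₂_map]
      exact key q hq0
    obtain ⟨z, hz⟩ := IsIntegrallyClosed.isIntegral_iff.1 h2
    apply hno z
    apply hinj'
    rw [map_zero, ← eval₂_at_apply, eval₂_map]
    rw [IsScalarTower.algebraMap_apply (R ⧸ P) M' κ z, hz, hy]
    exact key p hp
  set Fτ := F.map ((algebraMap (R ⧸ P) M').comp (Ideal.Quotient.mk P)) with hFτ
  set a := F.leadingCoeff with ha
  have ha0 : algebraMap R L a ≠ 0 := by
    intro h
    apply hlc
    have : a = 0 := hinjRL (h.trans (map_zero _).symm)
    rw [this]; exact P.zero_mem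
  have haτ : Φ (algebraMap R B a) ≠ 0 := by
    rw [hΦ]
    intro h
    have h1 := (algebraMap M' κ).injective (h.trans (map_zero _).symm)
    have h2 := (IsFractionRing.injective (R ⧸ P) M') (h1.trans (map_zero _).symm)
    exact hlc (Ideal.Quotient.eq_zero_iff_mem.1 h2)
  let T : Finset L := (F.map (algebraMap R L)).roots.toFinset
  have hF0 : F.map (algebraMap R L) ≠ 0 := hsep.ne_zero
  have hT : ∀ x, x ∈ T ↔ aeval x F = 0 := by
    intro x
    simp [T, hF0, aeval_def, eval_map]
  have hint : ∀ x ∈ T, IsIntegral R (algebraMap R L a * x) := by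
    intro x hx
    rw [hT] at hx
    rw [← Algebra.smul_def]
    exact isIntegral_leadingCoeff_smul F x hx
  choose β hβ using fun x : T => hB _ (hint x.1 x.2)
  have hprodL : F.map (algebraMap R L) = C (algebraMap R L a) * ∏ x : T, (X - C x.1) := by
    have h1 := hF.eq_prod_roots
    rw [leadingCoeff_map_of_injective hinjRL] at h1
    rw [h1, Finset.prod_coe_sort T (fun x => X - C x)]
    congr 1
    rw [Finset.prod, Multiset.toFinset_val, (nodup_roots hsep).dedup]
  have hprodC : C (algebraMap R B a) ^ Fintype.card T * F.map (algebraMap R B)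
      = C (algebraMap R B a) * ∏ x : T, (C (algebraMap R B a) * X - C (β x)) := by
    apply map_injective _ hBL
    simp only [Polynomial.map_mul, Polynomial.map_pow, map_C, Polynomial.map_prod,
      Polynomial.map_sub, map_X, hβ, map_map, ← IsScalarTower.algebraMap_eq,
      ← IsScalarTower.algebraMap_apply]
    rw [hprodL]
    have : ∀ x : T, (C (algebraMap R L a) * X - C (algebraMap R L a * x.1)) =
      C (algebraMap R L a) * (X - C x.1) := by intro x; rw [C_mul]; ring
    simp only [this, Finset.prod_mul_distrib, Finset.prod_const, Finset.card_univ]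
    ring
  have hprod : C (Φ (algebraMap R B a)) ^ Fintype.card T * Fτ.map (algebraMap M' κ)
      = C (Φ (algebraMap R B a)) * ∏ x : T, (C (Φ (algebraMap R B a)) * X - C (Φ (β x))) := by
    have := congrArg (Polynomial.map Φ) hprodC
    simp only [Polynomial.map_mul, Polynomial.map_pow, map_C, Polynomial.map_prod,
      Polynomial.map_sub, map_X, map_map, hΦ'] at this
    rw [hFτ, map_map]
    exact this
  have hsepκ : (Fτ.map (algebraMap M' κ)).Separable := hsep'.map
  have hunit : ∀ c : κ, c ≠ 0 → ∀ n : ℕ, IsUnit (C c ^ n) := fun c hc n =>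
    (isUnit_C.2 hc.isUnit).pow n
  have hβinj : Function.Injective (fun x => Φ (β x)) := by
    intro x y hxy
    by_contra hne
    have h1 : (C (Φ (algebraMap R B a)) * X - C (Φ (β x))) *
        (C (Φ (algebraMap R B a)) * X - C (Φ (β x))) ∣ Fτ.map (algebraMap M' κ) := by
      rw [← (hunit _ haτ (Fintype.card T)).dvd_mul_left, hprod]
      apply Dvd.dvd.mul_left
      rw [← Finset.mul_prod_erase Finset.univ _ (Finset.mem_univ x)]
      apply mul_dvd_mul_left
      have h2 := Finset.dvd_prod_of_mem
        (fun x => (C (Φ (algebraMap R B a)) * X - C (Φ (β x)))) (s := Finset.univ.erase x) (a := y)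
        (by simp [Ne.symm hne])
      simp only at hxy
      rw [hxy]
      exact h2
    have h2 := hsepκ.squarefree _ h1
    have h3 := natDegree_eq_zero_of_isUnit h2
    rw [sub_eq_add_neg, ← C_neg, natDegree_linear haτ] at h3
    exact one_ne_zero h3
  have hroot : ∀ x : T, aeval (Φ (β x) / Φ (algebraMap R B a)) Fτ = 0 := by
    intro x
    have h1 := congrArg (eval (Φ (β x) / Φ (algebraMap R B a))) hprod
    simp only [eval_mul, eval_pow, eval_C, eval_prod, eval_sub, eval_X] at h1
    rw [Finset.prod_eq_zero (Finset.mem_univ x) (by field_simp; ring), mul_zero] at h1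
    rw [aeval_def, ← eval_map]
    exact (mul_eq_zero.1 h1).resolve_left (pow_ne_zero _ haτ)
  have : Fact ((Fτ.map (algebraMap M' κ)).Splits) := ⟨by
    have h1 : (C (Φ (algebraMap R B a)) ^ Fintype.card T * Fτ.map (algebraMap M' κ)).Splits := by
      rw [hprod]
      apply Splits.mul (Splits.C _)
      apply Splits.prod
      intro x _
      apply Splits.of_natDegree_le_one
      compute_degree
    refine h1.of_dvd ?_ (Dvd.intro_left _ rfl)
    exact mul_ne_zero (hunit _ haτ _).ne_zero hsepκ.ne_zero⟩
  let Ψ : MulAction.stabilizer Gal(L/M) Q →* Fτ.Gal := (Gal.restrict Fτ κ).comp S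
  have hΨs : Function.Surjective Ψ := (Gal.restrict_surjective Fτ κ).comp hSsurj
  have hΨi : Function.Injective Ψ := by
    rw [injective_iff_map_eq_one]
    intro σ hσ
    apply Subtype.ext
    apply hgen
    intro x hx
    rw [← hT] at hx
    have h1 : S σ (Φ (β ⟨x, hx⟩) / Φ (algebraMap R B a)) =
        Φ (β ⟨x, hx⟩) / Φ (algebraMap R B a) := by
      have hm : (Φ (β ⟨x, hx⟩) / Φ (algebraMap R B a)) ∈ Fτ.rootSet κ := by
        rw [mem_rootSet]
        exact ⟨hsep'.ne_zero, hroot _⟩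
      have h2 := Gal.restrict_smul (p := Fτ) (E := κ) (S σ) ⟨_, hm⟩
      have h3 : Gal.restrict Fτ κ (S σ) = 1 := hσ
      rw [h3, one_smul] at h2
      exact h2.symm
    have h2 : S σ (Φ (β ⟨x, hx⟩)) = Φ (β ⟨x, hx⟩) := by
      have e : S σ (Φ (algebraMap R B a)) = Φ (algebraMap R B a) := by
        rw [hΦ, AlgEquiv.commutes]
      rw [map_div₀, e, div_left_inj' haτ] at h1
      exact h1
    rw [hSa] at h2
    have hx' : σ.1 x ∈ T := by
      rw [hT] at hx ⊢
      have := aeval_algHom_apply ((σ.1 : L →ₐ[M] L).restrictScalars R) x F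
      rw [hx, map_zero] at this
      exact this
    have h3 : σ.1 • β ⟨x, hx⟩ = β ⟨σ.1 x, hx'⟩ := by
      apply hBL
      rw [hcoe, hβ, hβ, map_mul]
      congr 1
      rw [IsScalarTower.algebraMap_apply R M L]
      exact σ.1.commutes _
    rw [h3] at h2
    exact congrArg Subtype.val (hβinj h2)
  exact ⟨(MulEquiv.ofBijective Ψ ⟨hΨi, hΨs⟩).symm.trans
    ((MulEquiv.subgroupCongr htop).trans Subgroup.topEquiv)⟩

theorem gs_core2 {R R' M M' : Type*} [CommRing R] [IsDomain R] [IsIntegrallyClosed R]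
    [Field M] [Algebra R M] [IsFractionRing R M] [CharZero M]
    [CommRing R'] [IsDomain R'] [IsIntegrallyClosed R'] [Field M'] [CharZero M']
    [Algebra R' M'] [IsFractionRing R' M'] (φ : R →+* R') (hφ : Function.Surjective φ) (F : R[X])
    (hsep : (F.map (algebraMap R M)).Separable)
    (hlc : φ F.leadingCoeff ≠ 0)
    (hsep' : ((F.map φ).map (algebraMap R' M')).Separable)
    (hD : ∀ D : Subgroup (F.map (algebraMap R M)).Gal, D ≠ ⊤ →
      ∃ θ : (F.map (algebraMap R M)).SplittingField, IsIntegral R θ ∧ (∀ σ ∈ D, σ θ = θ) ∧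
      ∃ p : R[X], aeval θ p = 0 ∧ ∀ y : R', (p.map φ).eval y ≠ 0) :
    Nonempty (((F.map φ).map (algebraMap R' M')).Gal ≃* (F.map (algebraMap R M)).Gal) := by
  classical
  let L := (F.map (algebraMap R M)).SplittingField
  have hgal : IsGalois M L := IsGalois.of_separable_splitting_field hsep
  let B := integralClosure R L
  have hcoe : ∀ (g : Gal(L/M)) (x : B), algebraMap B L (g • x) = g (algebraMap B L x) :=
    fun g x => rfl
  have hBL : Function.Injective (algebraMap B L) := Subtype.val_injective
  have : Algebra.IsInvariant R B Gal(L/M) := by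
    refine ⟨fun b hb => ?_⟩
    have h1 : (b : L) ∈ (⊥ : IntermediateField M L) := by
      rw [IsGalois.mem_bot_iff_fixed]
      intro f
      exact (hcoe f b).symm.trans (congrArg _ (hb f))
    obtain ⟨y, hy⟩ := IntermediateField.mem_bot.1 h1
    have h2 : IsIntegral R y := by
      have := b.2
      rw [← isIntegral_algebraMap_iff (algebraMap M L).injective (R := R) (x := y), hy]
      exact this
    obtain ⟨z, hz⟩ := IsIntegrallyClosed.isIntegral_iff.1 h2
    refine ⟨z, Subtype.ext ?_⟩
    rw [← hy, ← hz]
    exact IsScalarTower.algebraMap_apply R M L z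
  have hinjRL : Function.Injective (algebraMap R L) := by
    rw [IsScalarTower.algebraMap_eq R M L]
    exact (algebraMap M L).injective.comp (IsFractionRing.injective R M)
  have : FaithfulSMul R B := by
    rw [faithfulSMul_iff_algebraMap_injective]
    intro x y h
    exact hinjRL (congrArg Subtype.val h)
  let P : Ideal R := RingHom.ker φ
  let e : R ⧸ P ≃+* R' := RingHom.quotientKerEquivOfSurjective hφ
  have he : ∀ x, e (Ideal.Quotient.mk P x) = φ x := fun x => rfl
  have : P.IsPrime := RingHom.ker_isPrime φ
  have : IsIntegrallyClosed (R ⧸ P) := IsIntegrallyClosed.of_equiv e.symm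
  let _ : Algebra (R ⧸ P) M' := ((algebraMap R' M').comp e.toRingHom).toAlgebra
  have hae : ∀ x, algebraMap (R ⧸ P) M' x = algebraMap R' M' (e x) := fun x => rfl
  have : IsFractionRing (R ⧸ P) M' := by
    have : FaithfulSMul (R ⧸ P) M' := by
      rw [faithfulSMul_iff_algebraMap_injective]
      exact (IsFractionRing.injective R' M').comp e.injective
    refine IsFractionRing.of_field _ _ fun z => ?_
    obtain ⟨x, y, -, rfl⟩ := IsFractionRing.div_surjective R' z
    exact ⟨e.symm x, e.symm y, by simp [hae]⟩
  obtain ⟨Q, hQ1, hQ2⟩ := (inferInstance : Nonempty (P.primesOver B))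
  have := hQ1
  have := hQ2
  let κ := FractionRing (B ⧸ Q)
  have hinj : Function.Injective (algebraMap (R ⧸ P) (B ⧸ Q)) :=
    FaithfulSMul.algebraMap_injective _ _
  have hinj' : Function.Injective (algebraMap (R ⧸ P) κ) := by
    rw [IsScalarTower.algebraMap_eq (R ⧸ P) (B ⧸ Q) κ]
    exact (IsFractionRing.injective (B ⧸ Q) κ).comp hinj
  let _ : Algebra M' κ := (IsFractionRing.lift hinj').toAlgebra
  have : IsScalarTower (R ⧸ P) M' κ := IsScalarTower.of_algebraMap_eq fun x =>
    (IsFractionRing.lift_algebraMap hinj' x).symm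
  have hFe : F.map ((algebraMap (R ⧸ P) M').comp (Ideal.Quotient.mk P)) =
      (F.map φ).map (algebraMap R' M') := by
    rw [map_map]; rfl
  rw [← hFe] at hsep' ⊢
  have hFL : F.map (algebraMap R L) = (F.map (algebraMap R M)).map (algebraMap M L) := by
    rw [map_map, ← IsScalarTower.algebraMap_eq]
  refine gs_core1 (R := R) (M := M) (L := L) (M' := M') (B := B) (κ := κ) P F hBL ?_ hcoe Q
    ?_ ?_ ?_ hlc hsep' ?_
  · exact fun x hx => ⟨⟨x, hx⟩, rfl⟩
  · rw [hFL]; exact SplittingField.splits _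
  · rw [hFL]; exact hsep.map
  · intro σ h
    refine Gal.ext (p := F.map (algebraMap R M)) (σ := σ) (τ := 1) ?_
    intro x hx
    refine h x ?_
    have := (mem_rootSet.1 hx).2
    rwa [aeval_map_algebraMap] at this
  · intro D hne
    obtain ⟨θ, h1, h2, p, hp, h3⟩ := hD D hne
    refine ⟨θ, h1, h2, p, hp, fun y hy => h3 (e y) ?_⟩
    have h4 := congrArg e hy
    rw [map_zero] at h4
    rw [← h4, eval_map, eval_map, ← RingEquiv.coe_toRingHom, hom_eval₂]
    rfl

theorem gs_thin_mono {K : Type*} [Field K] {n : ℕ} {S T : Set (Fin n → K)} (h : S ⊆ T)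
    (hT : IsThin K n T) : IsThin K n S := by
  obtain ⟨m, B, hB, hs⟩ := hT
  exact ⟨m, B, hB, h.trans hs⟩

theorem gs_thin_basic {K : Type*} [Field K] {n : ℕ} {S : Set (Fin n → K)}
    (hS : IsBasicThinOne K n S ∨ IsBasicThinTwo K n S) : IsThin K n S :=
  ⟨1, fun _ => S, fun _ => hS, fun _ hx => Set.mem_iUnion.2 ⟨0, hx⟩⟩

theorem gs_thin_iUnion {K : Type*} [Field K] {n : ℕ} {ι : Type*} [Finite ι]
    (S : ι → Set (Fin n → K)) (hS : ∀ i, IsThin K n (S i)) : IsThin K n (⋃ i, S i) := by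
  choose m B hB hs using hS
  obtain ⟨N, ⟨e⟩⟩ := Finite.exists_equiv_fin (Σ i, Fin (m i))
  refine ⟨N, fun j => B (e.symm j).1 (e.symm j).2, fun j => hB _ _, ?_⟩
  intro x hx
  obtain ⟨i, hi⟩ := Set.mem_iUnion.1 hx
  obtain ⟨k, hk⟩ := Set.mem_iUnion.1 (hs i hi)
  refine Set.mem_iUnion.2 ⟨e ⟨i, k⟩, ?_⟩
  change x ∈ (fun z : Σ i, Fin (m i) => B z.1 z.2) (e.symm (e ⟨i, k⟩))
  rw [Equiv.symm_apply_apply]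
  exact hk

theorem gs_thin_union {K : Type*} [Field K] {n : ℕ} (S T : Set (Fin n → K))
    (hS : IsThin K n S) (hT : IsThin K n T) : IsThin K n (S ∪ T) := by
  rw [Set.union_eq_iUnion]
  exact gs_thin_iUnion _ (by rintro (_ | _) <;> simpa)

/-- degree bound for roots -/
theorem gs_degree_bound {K σ : Type*} [Field K] (P : (MvPolynomial σ K)[X]) (hP : P.Monic) (d : ℕ)
    (hd : ∀ i, (P.coeff i).totalDegree ≤ d) (y : MvPolynomial σ K) (hy : P.eval y = 0) :
    y.totalDegree ≤ d := by
  by_contra hlt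
  push Not at hlt
  have hy0 : y ≠ 0 := by rintro rfl; simp at hlt
  have hpow : ∀ i : ℕ, (y ^ i).totalDegree = i * y.totalDegree := by
    intro i
    induction i with
    | zero => simp
    | succ i ih =>
      rw [pow_succ, MvPolynomial.totalDegree_mul_of_isDomain (pow_ne_zero _ hy0) hy0, ih]; ring
  rw [eval_eq_sum_range, Finset.sum_range_succ, hP.coeff_natDegree, one_mul] at hy
  have h1 : y ^ P.natDegree = -∑ i ∈ Finset.range P.natDegree, P.coeff i * y ^ i := by
    linear_combination hy
  have hn : P.natDegree ≠ 0 := by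
    intro h
    rw [h] at h1
    simp at h1
  have h2 : (y ^ P.natDegree).totalDegree ≤ d + (P.natDegree - 1) * y.totalDegree := by
    rw [h1, MvPolynomial.totalDegree_neg]
    apply MvPolynomial.totalDegree_finsetSum_le
    intro i hi
    rw [Finset.mem_range] at hi
    refine (MvPolynomial.totalDegree_mul _ _).trans ?_
    rw [hpow]
    exact add_le_add (hd i) (Nat.mul_le_mul_right _ (by omega))
  rw [hpow] at h2
  obtain ⟨n, hn'⟩ := Nat.exists_eq_succ_of_ne_zero hn
  rw [hn'] at h2
  simp only [Nat.succ_eq_add_one, Nat.add_sub_cancel, add_mul, one_mul] at h2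
  omega

theorem gs_thin_prime {K : Type*} [Field K] {s : ℕ} {σ J : Type*} [Fintype J]
    (ν : J → (σ →₀ ℕ)) (hν : Function.Injective ν)
    (P : (MvPolynomial σ (MvPolynomial (Fin s) K))[X]) (hP : P.Monic)
    (hno : ∀ y, P.eval y ≠ 0)
    {Ω : Type*} [CommRing Ω] [IsDomain Ω] (h : MvPolynomial J (MvPolynomial (Fin s) K) →+* Ω)
    (hp : MvPolynomial.map h (eval₂ (MvPolynomial.map MvPolynomial.C)
      (∑ j, MvPolynomial.monomial (ν j) (MvPolynomial.X j)) P) = 0) :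
    IsThin K s {τ | ∃ g : MvPolynomial J (MvPolynomial (Fin s) K) →+* K,
      g.comp MvPolynomial.C = MvPolynomial.eval τ ∧ RingHom.ker h ≤ RingHom.ker g} := by
  classical
  let A := MvPolynomial (Fin s) K
  let _ : Algebra A Ω := (h.comp MvPolynomial.C).toAlgebra
  let _ : Algebra (MvPolynomial σ A) (MvPolynomial σ Ω) := MvPolynomial.algebraMvPolynomial
  by_cases hinj : Function.Injective (h.comp MvPolynomial.C)
  · let Y : MvPolynomial σ Ω := ∑ j, MvPolynomial.monomial (ν j) (h (MvPolynomial.X j))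
    have hY : eval₂ (algebraMap (MvPolynomial σ A) (MvPolynomial σ Ω)) Y P = 0 := by
      rw [hom_eval₂] at hp
      rw [← hp]
      congr 1
      · ext <;> simp <;> rfl
      · simp [Y, map_sum, MvPolynomial.map_monomial]
    have hYc : ∀ j, Y.coeff (ν j) = h (MvPolynomial.X j) := by
      intro j
      simp [Y, MvPolynomial.coeff_sum, MvPolynomial.coeff_monomial, hν.eq_iff]
    have hint : ∀ j, IsIntegral A (h (MvPolynomial.X j)) := by
      have h1 : IsIntegral (MvPolynomial σ A) Y := ⟨P, hP, hY⟩
      rw [MvPolynomial.isIntegral_iff_isIntegral_coeff] at h1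
      intro j
      rw [← hYc]
      exact h1 _
    by_cases hall : ∀ j, h (MvPolynomial.X j) ∈ (algebraMap A Ω).range
    · exfalso
      choose c hc using hall
      apply hno (∑ j, MvPolynomial.monomial (ν j) (c j))
      have hinj2 : Function.Injective (algebraMap (MvPolynomial σ A) (MvPolynomial σ Ω)) :=
        MvPolynomial.map_injective _ hinj
      apply hinj2
      rw [map_zero, ← eval₂_at_apply, ← hY]
      congr 1
      rw [map_sum]
      refine Finset.sum_congr rfl fun j _ => ?_
      rw [← hc]
      exact MvPolynomial.map_monomial _ _ _
    · push Not at hall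
      obtain ⟨j, hj⟩ := hall
      let f := minpoly A (h (MvPolynomial.X j))
      refine gs_thin_mono ?_ (gs_thin_basic (Or.inr ⟨f, minpoly.irreducible (hint j), ?_, rfl⟩))
      · rintro τ ⟨g, hg, hpg⟩
        refine ⟨g (MvPolynomial.X j), ?_⟩
        have h1 : aeval (h (MvPolynomial.X j)) f = 0 := minpoly.aeval _ _
        have h2 : eval₂ MvPolynomial.C (MvPolynomial.X j) f ∈ RingHom.ker h := by
          rw [RingHom.mem_ker, hom_eval₂]
          exact h1
        have h3 := hpg h2
        rw [RingHom.mem_ker, hom_eval₂, hg] at h3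
        rw [eval_map, h3]
      · have h1 := minpoly.natDegree_pos (hint j)
        by_contra hlt
        apply hj
        apply minpoly.mem_range_of_degree_eq_one
        refine (degree_eq_iff_natDegree_eq_of_pos one_pos).2 ?_
        change f.natDegree = 1
        change 0 < f.natDegree at h1
        omega
  · rw [injective_iff_map_eq_zero] at hinj
    push Not at hinj
    obtain ⟨a, ha, ha0⟩ := hinj
    refine gs_thin_mono ?_ (gs_thin_basic (Or.inl ⟨a, ha0, rfl⟩))
    rintro τ ⟨g, hg, hpg⟩
    have h1 : MvPolynomial.C a ∈ RingHom.ker h := ha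
    have h2 := hpg h1
    rw [RingHom.mem_ker] at h2
    change MvPolynomial.eval τ a = 0
    rw [← hg, ← h2]; rfl

theorem gs_thin_root {K : Type*} [Field K] {s r : ℕ}
    (P : (MvPolynomial (Fin r) (MvPolynomial (Fin s) K))[X]) (hP : P.Monic)
    (hno : ∀ y, P.eval y ≠ 0) :
    IsThin K s {τ | ∃ y : MvPolynomial (Fin r) K,
      (P.map (MvPolynomial.map (MvPolynomial.eval τ))).eval y = 0} := by
  classical
  let A := MvPolynomial (Fin s) K
  let d : ℕ := P.support.sup fun i => (P.coeff i).totalDegree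
  have hd : ∀ i, (P.coeff i).totalDegree ≤ d := by
    intro i
    by_cases hi : i ∈ P.support
    · exact Finset.le_sup (f := fun i => (P.coeff i).totalDegree) hi
    · rw [notMem_support_iff.1 hi]; simp
  let J := Finset.Iic (Finsupp.equivFunOnFinite.symm (fun _ : Fin r => d))
  let E : MvPolynomial (Fin r) (MvPolynomial J A) := eval₂ (MvPolynomial.map MvPolynomial.C)
      (∑ j : J, MvPolynomial.monomial j.1 (MvPolynomial.X j)) P
  let I : Ideal (MvPolynomial J A) := Ideal.span (Set.range fun ν => E.coeff ν)
  have hI : ∀ (g : MvPolynomial J A →+* K), I ≤ RingHom.ker g ↔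
      MvPolynomial.map g E = 0 := by
    intro g
    rw [Ideal.span_le, MvPolynomial.ext_iff]
    constructor
    · intro h m
      rw [MvPolynomial.coeff_map]
      exact h ⟨m, rfl⟩
    · rintro h _ ⟨m, rfl⟩
      have := h m
      rw [MvPolynomial.coeff_map] at this
      exact this
  have hfin : Finite I.minimalPrimes :=
    (Ideal.finite_minimalPrimes_of_isNoetherianRing _ I).to_subtype
  refine gs_thin_mono ?_ (gs_thin_iUnion (fun p : I.minimalPrimes =>
    {τ | ∃ g : MvPolynomial J A →+* K,
      g.comp MvPolynomial.C = MvPolynomial.eval τ ∧ p.1 ≤ RingHom.ker g}) ?_)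
  · rintro τ ⟨y, hy⟩
    have hydeg := gs_degree_bound _ (hP.map _) d (fun i => by
      rw [coeff_map]
      exact (Finset.sup_mono (MvPolynomial.support_map_subset _ _)).trans (hd i)) y hy
    let g : MvPolynomial J A →+* K := MvPolynomial.eval₂Hom (MvPolynomial.eval τ)
      (fun j => y.coeff j.1)
    have hgC : g.comp MvPolynomial.C = MvPolynomial.eval τ := by
      ext <;> simp [g]
    have hsum : ∑ j : J, MvPolynomial.monomial j.1 (y.coeff j.1) = y := by
      rw [Finset.sum_coe_sort J (fun j => MvPolynomial.monomial j (y.coeff j))]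
      conv_rhs => rw [y.as_sum]
      symm
      apply Finset.sum_subset
      · intro m hm
        simp only [J, Finset.mem_Iic]
        intro i
        have h1 := (MvPolynomial.le_totalDegree hm).trans hydeg
        simp only [Finsupp.equivFunOnFinite_symm_apply_apply]
        refine le_trans ?_ h1
        rw [Finsupp.sum_fintype _ _ (by simp)]
        exact Finset.single_le_sum (f := fun i => m i) (by simp) (Finset.mem_univ i)
      · intro m _ hm
        rw [MvPolynomial.notMem_support_iff.1 hm, MvPolynomial.monomial_zero]
    have hgI : I ≤ RingHom.ker g := by
      rw [hI, ← hy]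
      simp only [E]
      rw [hom_eval₂, eval_map]
      congr 1
      · rw [← hgC]
        ext <;> simp
      · rw [map_sum]
        simp only [MvPolynomial.map_monomial]
        conv_rhs => rw [← hsum]
        simp [g]
    have := RingHom.ker_isPrime g
    obtain ⟨p, hp, hpg⟩ := Ideal.exists_minimalPrimes_le hgI
    exact Set.mem_iUnion.2 ⟨⟨p, hp⟩, g, hgC, hpg⟩
  · rintro ⟨p, hp⟩
    have : p.IsPrime := hp.1.1
    have h1 := gs_thin_prime (fun j : J => j.1) Subtype.val_injective P hP hno
      (Ω := MvPolynomial J (MvPolynomial (Fin s) K) ⧸ p) (Ideal.Quotient.mk p) ?_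
    · rwa [Ideal.mk_ker] at h1
    ext m
    rw [MvPolynomial.coeff_map]
    exact Ideal.Quotient.eq_zero_iff_mem.2 (hp.1.2 (Ideal.subset_span ⟨m, rfl⟩))


theorem gs_phi_eq {K : Type*} [Field K] {s r : ℕ} (τ : Fin s → K) :
    (MvPolynomial.aeval (R := K) (Sum.elim (fun i => (MvPolynomial.C (τ i) : MvPolynomial (Fin r) K))
      MvPolynomial.X)).toRingHom =
    (MvPolynomial.map (MvPolynomial.eval τ)).comp
      (((MvPolynomial.renameEquiv K (Equiv.sumComm (Fin s) (Fin r))).trans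
        (MvPolynomial.sumAlgEquiv K (Fin r) (Fin s))) :
        MvPolynomial (Fin s ⊕ Fin r) K ≃ₐ[K] MvPolynomial (Fin r) (MvPolynomial (Fin s) K)).toRingEquiv.toRingHom := by
  apply MvPolynomial.ringHom_ext
  · intro a
    simp
  · rintro (i | i)
    · simp
    · simp

theorem gs_thin_zero {K : Type*} [Field K] {s r : ℕ}
    (d : MvPolynomial (Fin r) (MvPolynomial (Fin s) K)) (hd : d ≠ 0) :
    IsThin K s {τ | MvPolynomial.map (MvPolynomial.eval τ) d = 0} := by
  obtain ⟨m, hm⟩ := MvPolynomial.ne_zero_iff.1 hd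
  refine gs_thin_mono ?_ (gs_thin_basic (Or.inl ⟨_, hm, rfl⟩))
  intro τ hτ
  change MvPolynomial.map (MvPolynomial.eval τ) d = 0 at hτ
  change MvPolynomial.eval τ _ = 0
  rw [← MvPolynomial.coeff_map, hτ, MvPolynomial.coeff_zero]

theorem gs_clear {R M : Type*} [CommRing R] [IsDomain R] [Field M] [Algebra R M]
    [IsFractionRing R M] (p : M[X]) : ∃ b : R, b ≠ 0 ∧ ∃ q : R[X],
      q.map (algebraMap R M) = C (algebraMap R M b) * p := by
  obtain ⟨b, hb0, hb⟩ := IsLocalization.integerNormalization_spec (nonZeroDivisors R) p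
  refine ⟨b, nonZeroDivisors.ne_zero hb0, _, hb.trans ?_⟩
  rw [Algebra.smul_def]
  rfl

theorem gs_sep {R M : Type*} [CommRing R] [IsDomain R] [Field M] [Algebra R M]
    [IsFractionRing R M] (F : R[X]) (hsep : (F.map (algebraMap R M)).Separable) :
    ∃ d : R, d ≠ 0 ∧ ∃ U V : R[X], U * F + V * derivative F = C d := by
  obtain ⟨u, v, h⟩ := hsep
  obtain ⟨b, hb, U, hU⟩ := gs_clear (R := R) u
  obtain ⟨c, hc, V, hV⟩ := gs_clear (R := R) v
  refine ⟨b * c, mul_ne_zero hb hc, C c * U, C b * V, ?_⟩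
  apply Polynomial.map_injective _ (IsFractionRing.injective R M)
  rw [derivative_map] at h
  simp only [Polynomial.map_add, Polynomial.map_mul, hU, hV, map_C, map_mul]
  linear_combination C (algebraMap R M b) * C (algebraMap R M c) * h

theorem gs_sep' {R R' M' : Type*} [CommRing R] [CommRing R'] [Field M'] [Algebra R' M']
    [IsDomain R'] [IsFractionRing R' M'] (φ : R →+* R') (F U V : R[X]) (d : R)
    (h : U * F + V * derivative F = C d) (hd : φ d ≠ 0) :
    ((F.map φ).map (algebraMap R' M')).Separable := by
  have h1 : algebraMap R' M' (φ d) ≠ 0 := by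
    rwa [Ne, FaithfulSMul.algebraMap_eq_zero_iff]
  have h2 := congrArg (fun q => (q.map φ).map (algebraMap R' M')) h
  simp only [Polynomial.map_add, Polynomial.map_mul, map_C] at h2
  refine ⟨C (algebraMap R' M' (φ d))⁻¹ * (U.map φ).map (algebraMap R' M'),
    C (algebraMap R' M' (φ d))⁻¹ * (V.map φ).map (algebraMap R' M'), ?_⟩
  rw [derivative_map, derivative_map]
  rw [mul_assoc, mul_assoc, ← mul_add, h2, ← C_mul, inv_mul_cancel₀ h1, C_1]

theorem gs_prim {R M L : Type*} [CommRing R] [IsDomain R] [IsIntegrallyClosed R] [Field M]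
    [Algebra R M] [IsFractionRing R M] [Field L] [Algebra M L] [Algebra R L] [IsScalarTower R M L]
    [FiniteDimensional M L] [IsGalois M L] (D : Subgroup (L ≃ₐ[M] L)) (hD : D ≠ ⊤) :
    ∃ θ : L, IsIntegral R θ ∧ (∀ σ ∈ D, σ θ = θ) ∧
      ∃ p : R[X], p.Monic ∧ aeval θ p = 0 ∧ ∀ y : R, p.eval y ≠ 0 := by
  have h1 : IntermediateField.fixedField D ≠ ⊥ := by
    intro h
    apply hD
    rw [← IntermediateField.fixingSubgroup_fixedField D, h, IntermediateField.fixingSubgroup_bot]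
  obtain ⟨x, hx, hxb⟩ := SetLike.exists_of_lt (bot_lt_iff_ne_bot.2 h1)
  have hinj : Function.Injective (algebraMap R L) := by
    rw [IsScalarTower.algebraMap_eq R M L]
    exact (algebraMap M L).injective.comp (IsFractionRing.injective R M)
  have : FaithfulSMul R L := (faithfulSMul_iff_algebraMap_injective R L).2 hinj
  have : Module.IsTorsionFree R L := inferInstance
  have hxa : IsAlgebraic R x := by
    rw [IsFractionRing.isAlgebraic_iff R M L]
    exact Algebra.IsAlgebraic.isAlgebraic x
  obtain ⟨b, hb, hint⟩ := hxa.exists_integral_multiple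
  have hb' : algebraMap R M b ≠ 0 := by
    rwa [Ne, FaithfulSMul.algebraMap_eq_zero_iff]
  have hbx : b • x = algebraMap R M b • x := by rw [algebraMap_smul]
  have hno : b • x ∉ (algebraMap R L).range := by
    rintro ⟨z, hz⟩
    apply hxb
    rw [IntermediateField.mem_bot]
    refine ⟨(algebraMap R M b)⁻¹ * algebraMap R M z, ?_⟩
    rw [map_mul, ← IsScalarTower.algebraMap_apply, hz, hbx, ← Algebra.smul_def, inv_smul_smul₀ hb']
  refine ⟨b • x, hint, ?_, minpoly R (b • x), minpoly.monic hint, minpoly.aeval _ _, ?_⟩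
  · intro σ hσ
    rw [hbx, map_smul]
    congr 1
    exact (IntermediateField.mem_fixedField_iff D x).1 hx σ hσ
  · intro y hy
    apply hno
    have hdvd : X - C y ∣ minpoly R (b • x) := dvd_iff_isRoot.2 hy
    have hirr := minpoly.irreducible hint
    obtain ⟨q, hq⟩ := hdvd
    have hu := (hirr.isUnit_or_isUnit hq).resolve_left (Polynomial.not_isUnit_X_sub_C y)
    apply minpoly.mem_range_of_degree_eq_one
    rw [hq, degree_mul, degree_X_sub_C, degree_eq_zero_of_isUnit hu, add_zero]

theorem gs_thin_zero2 {K : Type*} [Field K] {s r : ℕ}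
    (d : MvPolynomial (Fin s ⊕ Fin r) K) (hd : d ≠ 0) :
    IsThin K s {τ | (MvPolynomial.aeval (R := K)
      (Sum.elim (fun i => (MvPolynomial.C (τ i) : MvPolynomial (Fin r) K))
      MvPolynomial.X)).toRingHom d = 0} := by
  simp only [gs_phi_eq]
  refine gs_thin_zero _ ?_
  exact (map_ne_zero_iff _ (RingEquiv.injective _)).2 hd

theorem gs_thin_root2 {K : Type*} [Field K] {s r : ℕ}
    (P : (MvPolynomial (Fin s ⊕ Fin r) K)[X]) (hP : P.Monic)
    (hno : ∀ y, P.eval y ≠ 0) :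
    IsThin K s {τ | ∃ y : MvPolynomial (Fin r) K,
      (P.map (MvPolynomial.aeval (R := K)
      (Sum.elim (fun i => (MvPolynomial.C (τ i) : MvPolynomial (Fin r) K))
      MvPolynomial.X)).toRingHom).eval y = 0} := by
  simp only [gs_phi_eq, ← Polynomial.map_map]
  refine gs_thin_root _ (hP.map _) ?_
  intro y hy
  generalize ((MvPolynomial.renameEquiv K (Equiv.sumComm (Fin s) (Fin r))).trans
        (MvPolynomial.sumAlgEquiv K (Fin r) (Fin s))).toRingEquiv = e at hy
  apply hno (e.symm y)
  apply e.injective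
  rw [map_zero, ← hy]
  have h1 := Polynomial.eval₂_at_apply (p := P) e.toRingHom (e.symm y)
  rw [eval_map]
  change _ = eval₂ e.toRingHom y P
  refine h1.symm.trans ?_
  congr 1
  exact e.apply_symm_apply y



/-- **Theorem 2.2** (specialization of Galois groups outside a thin set).
Here the `n` variables `t_1,…,t_n` are indexed by `Fin s ⊕ Fin r` (so `n = s + r`
and `s ≤ n`): the first `s` of them get specialized.  Let
`F ∈ K[t_1,…,t_n][x]` be separable of degree `m ≥ 1` over `K(t_1,…,t_n)` with
Galois group `G` over `K(t_1,…,t_n)`.  Then there is a thin set `Υ ⊆ K^s` such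
that for every `τ ∈ K^s` outside `Υ` the specialized polynomial
`F(τ_1,…,τ_s,t_{s+1},…,t_n,x)` is separable of degree `m` over `K(t_{s+1},…,t_n)`
and its Galois group over `K(t_{s+1},…,t_n)` is isomorphic to `G`. -/
theorem galois_group_specialization (K : Type*) [Field K] [CharZero K]
    (s r m : ℕ) (hm : 1 ≤ m)
    (F : Polynomial (MvPolynomial (Fin s ⊕ Fin r) K))
    (hsep : (F.map (algebraMap (MvPolynomial (Fin s ⊕ Fin r) K)
        (FractionRing (MvPolynomial (Fin s ⊕ Fin r) K)))).Separable)
    (hdeg : (F.map (algebraMap (MvPolynomial (Fin s ⊕ Fin r) K)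
        (FractionRing (MvPolynomial (Fin s ⊕ Fin r) K)))).natDegree = m) :
    ∃ Υ : Set (Fin s → K), IsThin K s Υ ∧
      ∀ τ : Fin s → K, τ ∉ Υ →
        let Fτ : Polynomial (FractionRing (MvPolynomial (Fin r) K)) :=
          (F.map (MvPolynomial.aeval
              (Sum.elim (fun i => MvPolynomial.C (τ i)) MvPolynomial.X)).toRingHom).map
            (algebraMap (MvPolynomial (Fin r) K) (FractionRing (MvPolynomial (Fin r) K)))
        Fτ.Separable ∧ Fτ.natDegree = m ∧
          Nonempty (Fτ.Gal ≃*
            (F.map (algebraMap (MvPolynomial (Fin s ⊕ Fin r) K)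
              (FractionRing (MvPolynomial (Fin s ⊕ Fin r) K)))).Gal) := by

  classical
  have hinj := IsFractionRing.injective (MvPolynomial (Fin s ⊕ Fin r) K)
    (FractionRing (MvPolynomial (Fin s ⊕ Fin r) K))
  rw [natDegree_map_eq_of_injective hinj] at hdeg
  have hF0 : F ≠ 0 := by
    rintro rfl
    simp at hdeg
    omega
  obtain ⟨d, hd, U, V, hUV⟩ := gs_sep F hsep
  have hgal : IsGalois (FractionRing (MvPolynomial (Fin s ⊕ Fin r) K))
      (F.map (algebraMap (MvPolynomial (Fin s ⊕ Fin r) K)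
        (FractionRing (MvPolynomial (Fin s ⊕ Fin r) K)))).SplittingField :=
    IsGalois.of_separable_splitting_field hsep
  have key : ∀ D : {D : Subgroup (F.map (algebraMap (MvPolynomial (Fin s ⊕ Fin r) K)
        (FractionRing (MvPolynomial (Fin s ⊕ Fin r) K)))).Gal // D ≠ ⊤}, _ :=
    fun D => gs_prim (R := MvPolynomial (Fin s ⊕ Fin r) K) D.1 D.2
  choose θ hθ hfix p hpm hp0 hpno using key
  refine ⟨_, gs_thin_union _ _ (gs_thin_union _ _ (gs_thin_zero2 F.leadingCoeff
    (leadingCoeff_ne_zero.2 hF0)) (gs_thin_zero2 d hd))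
    (gs_thin_iUnion _ fun D => gs_thin_root2 (p D) (hpm D) (hpno D)), ?_⟩
  intro τ hτ
  simp only [Set.mem_union, Set.mem_iUnion, Set.mem_setOf_eq, not_or, not_exists] at hτ
  obtain ⟨⟨hlc, hdτ⟩, hr⟩ := hτ
  have hs := gs_sep' (M' := FractionRing (MvPolynomial (Fin r) K)) _ F U V d hUV hdτ
  refine ⟨hs, ?_, ?_⟩
  · rw [natDegree_map_eq_of_injective (IsFractionRing.injective _ _),
      natDegree_map_of_leadingCoeff_ne_zero _ hlc, hdeg]
  · refine gs_core2 _ ?_ F hsep hlc hs ?_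
    · intro q
      refine ⟨MvPolynomial.rename Sum.inr q, ?_⟩
      change MvPolynomial.aeval _ _ = _
      rw [MvPolynomial.aeval_rename, Sum.elim_comp_inr, MvPolynomial.aeval_X_left]
      rfl
    · intro D hD
      exact ⟨θ ⟨D, hD⟩, hθ _, hfix ⟨D, hD⟩, p _, hp0 _, hr ⟨D, hD⟩⟩
end

section
/- Let K be a field of characteristic 0 and K(x) the field of rational functions in one variable over K. Let u, v ∈ K(x)^× and suppose there exists α in an algebraic closure of K such that ord_α(v) = 1 or ord_α(v) = −1 while ord_α(u) = 0 (that is, v has a simple zero or a simple pole at α which is neither a zero nor a pole of u). Then for all positive integers k and ℓ, and all elements U, V of a fixed algebraic closure of K(x) with U^k = u and V^ℓ = v, one has [K(x, U, V) : K(x, U)] = ℓ. -/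
/-- The order of vanishing `ord_α(w)` of a nonzero rational function `w ∈ K(x)` at a
point `α` of the algebraic closure of `K` (negative in case of a pole). -/
noncomputable def ordAt {K : Type*} [Field K] (α : AlgebraicClosure K) (w : RatFunc K) : ℤ :=
  ((w.num.map (algebraMap K (AlgebraicClosure K))).rootMultiplicity α : ℤ) -
    ((w.denom.map (algebraMap K (AlgebraicClosure K))).rootMultiplicity α : ℤ)

open Polynomial in
/-- every unit power series has `k`-th roots -/
theorem aux_root {L : Type*} [Field L] [IsAlgClosed L] [CharZero L] (f : (PowerSeries L)ˣ) (k : ℕ)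
    (hk : 1 ≤ k) : ∃ g : PowerSeries L, g ^ k = f := by
  have hf : PowerSeries.constantCoeff (f : PowerSeries L) ≠ 0 :=
    (f.isUnit.map (PowerSeries.constantCoeff (R := L))).ne_zero
  obtain ⟨c, hc⟩ := IsAlgClosed.exists_pow_nat_eq (PowerSeries.constantCoeff (f : PowerSeries L)) hk
  have hc0 : c ≠ 0 := by
    rintro rfl
    apply hf
    rw [← hc, zero_pow (by omega)]
  have H : HenselianRing (PowerSeries L) (Ideal.span {PowerSeries.X}) := inferInstance
  obtain ⟨a, ha, -⟩ := H.is_henselian (X ^ k - C (f : PowerSeries L))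
    (monic_X_pow_sub_C _ (by omega)) (PowerSeries.C c) (by
      rw [Ideal.mem_span_singleton, PowerSeries.X_dvd_iff]
      simp [hc]) (by
      apply IsUnit.map
      rw [PowerSeries.isUnit_iff_constantCoeff]
      have : (k : L) ≠ 0 := by exact_mod_cast (by omega : k ≠ 0)
      simp [derivative_X_pow, hc0, this])
  refine ⟨a, ?_⟩
  simpa [sub_eq_zero] using ha

open Polynomial in
/-- substitution `x = α + t` -/
noncomputable def auxPS {K : Type*} [Field K] (α : AlgebraicClosure K) :
    K[X] →+* LaurentSeries (AlgebraicClosure K) :=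
  (HahnSeries.ofPowerSeries ℤ (AlgebraicClosure K)).comp
    ((Polynomial.coeToPowerSeries.ringHom).comp
      ((taylorAlgHom α).toRingHom.comp (mapRingHom (algebraMap K (AlgebraicClosure K)))))

open Polynomial in
theorem auxPS_spec {K : Type*} [Field K] (α : AlgebraicClosure K) (p : K[X]) (hp : p ≠ 0) :
    ∃ f : (PowerSeries (AlgebraicClosure K))ˣ, auxPS α p =
      HahnSeries.single
        ((p.map (algebraMap K (AlgebraicClosure K))).rootMultiplicity α : ℤ) 1 *
      HahnSeries.ofPowerSeries ℤ _ (f : PowerSeries (AlgebraicClosure K)) := by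
  have hp' : p.map (algebraMap K (AlgebraicClosure K)) ≠ 0 := by
    simpa using hp
  obtain ⟨q, hq, hqr⟩ := exists_eq_pow_rootMultiplicity_mul_and_not_dvd _ hp' α
  have hq0 : q.eval α ≠ 0 := by
    intro h
    exact hqr (dvd_iff_isRoot.mpr h)
  have hu : IsUnit ((taylor α q : (AlgebraicClosure K)[X]) : PowerSeries (AlgebraicClosure K)) := by
    rw [PowerSeries.isUnit_iff_constantCoeff]
    simpa [taylor_coeff_zero] using hq0
  refine ⟨hu.unit, ?_⟩
  have h1 : auxPS α p = HahnSeries.ofPowerSeries ℤ _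
    ((taylor α (p.map (algebraMap K (AlgebraicClosure K))) : (AlgebraicClosure K)[X]) :
      PowerSeries (AlgebraicClosure K)) := rfl
  rw [h1]
  conv_lhs => rw [hq]
  rw [taylor_mul, taylor_pow]
  simp [HahnSeries.ofPowerSeries_X_pow]

open Polynomial in
theorem auxPS_inj {K : Type*} [Field K] (α : AlgebraicClosure K) :
    Function.Injective (auxPS α) := by
  rw [injective_iff_map_eq_zero]
  intro p h
  by_contra hp
  obtain ⟨f, hf⟩ := auxPS_spec α p hp
  rw [hf] at h
  rcases mul_eq_zero.mp h with h | h
  · simp at h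
  · rw [map_eq_zero_iff _ HahnSeries.ofPowerSeries_injective] at h
    exact f.ne_zero h

/-- The embedding `K(x) → L((t))`. -/
noncomputable def auxEmb {K : Type*} [Field K] (α : AlgebraicClosure K) :
    RatFunc K →+* LaurentSeries (AlgebraicClosure K) :=
  IsFractionRing.lift (A := Polynomial K) (auxPS_inj α)

theorem auxEmb_spec {K : Type*} [Field K] (α : AlgebraicClosure K) (w : RatFunc K) (hw : w ≠ 0) :
    ∃ f : (PowerSeries (AlgebraicClosure K))ˣ, auxEmb α w =
      HahnSeries.single (ordAt α w) 1 *
      HahnSeries.ofPowerSeries ℤ _ (f : PowerSeries (AlgebraicClosure K)) := by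
  obtain ⟨f, hf⟩ := auxPS_spec α w.num (RatFunc.num_ne_zero hw)
  obtain ⟨g, hg⟩ := auxPS_spec α w.denom w.denom_ne_zero
  refine ⟨f * g⁻¹, ?_⟩
  have h1 : auxEmb α w * auxPS α w.denom = auxPS α w.num := by
    have e (p : Polynomial K) : auxPS α p = auxEmb α (algebraMap _ _ p) :=
      (IsFractionRing.lift_algebraMap (auxPS_inj α) p).symm
    rw [e, e, ← map_mul]
    congr 1
    have h2 := RatFunc.num_div_denom w
    rw [div_eq_iff (by simpa using w.denom_ne_zero)] at h2
    exact h2.symm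
  have h0 : auxPS α w.denom ≠ 0 := by
    rw [Ne, map_eq_zero_iff _ (auxPS_inj α)]
    exact w.denom_ne_zero
  apply mul_right_cancel₀ h0
  rw [h1, hf, hg]
  have h3 : HahnSeries.ofPowerSeries ℤ (AlgebraicClosure K) ((g⁻¹ : (PowerSeries (AlgebraicClosure K))ˣ) : PowerSeries (AlgebraicClosure K))
    * HahnSeries.ofPowerSeries ℤ (AlgebraicClosure K) (g : PowerSeries (AlgebraicClosure K)) = 1 := by
    rw [← map_mul]; simp
  have h4 : (HahnSeries.single (ordAt α w) 1 : LaurentSeries (AlgebraicClosure K)) * HahnSeries.single ((w.denom.map (algebraMap K (AlgebraicClosure K))).rootMultiplicity α : ℤ) 1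
    = HahnSeries.single ((w.num.map (algebraMap K (AlgebraicClosure K))).rootMultiplicity α : ℤ) 1 := by
    rw [HahnSeries.single_mul_single]
    simp [ordAt]
  rw [← h4, Units.val_mul, map_mul]
  linear_combination (-(HahnSeries.single (ordAt α w) 1 : LaurentSeries (AlgebraicClosure K)) * HahnSeries.single ((w.denom.map (algebraMap K (AlgebraicClosure K))).rootMultiplicity α : ℤ) 1 * HahnSeries.ofPowerSeries ℤ (AlgebraicClosure K) (f : PowerSeries (AlgebraicClosure K))) * h3

theorem auxEmb_order {K : Type*} [Field K] (α : AlgebraicClosure K) (w : RatFunc K) (hw : w ≠ 0) :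
    (auxEmb α w).order = ordAt α w := by
  obtain ⟨f, hf⟩ := auxEmb_spec α w hw
  have hne (f : (PowerSeries (AlgebraicClosure K))ˣ) : HahnSeries.ofPowerSeries ℤ (AlgebraicClosure K) (f : PowerSeries (AlgebraicClosure K)) ≠ 0 := by
    rw [Ne, map_eq_zero_iff _ HahnSeries.ofPowerSeries_injective]
    exact f.ne_zero
  have hc : PowerSeries.constantCoeff (f : PowerSeries (AlgebraicClosure K)) ≠ 0 :=
    (f.isUnit.map (PowerSeries.constantCoeff (R := AlgebraicClosure K))).ne_zero
  have ho : (HahnSeries.ofPowerSeries ℤ (AlgebraicClosure K)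
      (f : PowerSeries (AlgebraicClosure K))).order = 0 := by
    apply le_antisymm
    · apply HahnSeries.order_le_of_coeff_ne_zero
      have := HahnSeries.ofPowerSeries_apply_coeff (Γ := ℤ) (f : PowerSeries (AlgebraicClosure K)) 0
      rw [Nat.cast_zero] at this
      rw [this]
      simpa using hc
    · rw [HahnSeries.le_order_iff_forall (hne f)]
      intro i hi
      rw [HahnSeries.ofPowerSeries_apply]
      apply HahnSeries.embDomain_of_notMem_range
      rintro ⟨n, hn⟩
      simp at hn
      omega
  rw [hf, HahnSeries.order_mul (by simp) (hne f), ho, HahnSeries.order_single one_ne_zero, add_zero]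

theorem aux_degree {F A L : Type*} [Field F] [Field A] [Algebra F A] [Field L]
    (σ : F →+* LaurentSeries L) (v : F) (hvo : (σ v).order = 1 ∨ (σ v).order = -1)
    (ℓ : ℕ) (hℓ : 1 ≤ ℓ) (V : A) (hV : V ^ ℓ = algebraMap F A v) :
    Module.finrank F (IntermediateField.adjoin F {V}) = ℓ := by
  have hm : (Polynomial.X ^ ℓ - Polynomial.C v).Monic :=
    Polynomial.monic_X_pow_sub_C _ (by omega)
  have hr : Polynomial.aeval V (Polynomial.X ^ ℓ - Polynomial.C v) = 0 := by simp [hV]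
  have hVint : IsIntegral F V := ⟨_, hm, hr⟩
  have : FiniteDimensional F (IntermediateField.adjoin F {V}) :=
    IntermediateField.adjoin.finiteDimensional hVint
  have hle : Module.finrank F (IntermediateField.adjoin F {V}) ≤ ℓ := by
    rw [IntermediateField.adjoin.finrank hVint]
    have h := Polynomial.natDegree_le_of_dvd (minpoly.dvd F V hr) hm.ne_zero
    rwa [Polynomial.natDegree_X_pow_sub_C] at h
  have hpos : 0 < Module.finrank F (IntermediateField.adjoin F {V}) := Module.finrank_pos
  have hdvd : ℓ ∣ Module.finrank F (IntermediateField.adjoin F {V}) := by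
    have h1 : (IntermediateField.AdjoinSimple.gen F V) ^ ℓ = algebraMap F _ v := by
      apply Subtype.ext
      simpa using hV
    have h2 := congrArg (Algebra.norm F) h1
    rw [map_pow, Algebra.norm_algebraMap] at h2
    have h3 := congrArg HahnSeries.order (congrArg σ h2)
    rw [map_pow, map_pow, HahnSeries.order_pow, HahnSeries.order_pow] at h3
    rw [← Int.natCast_dvd_natCast]
    simp only [nsmul_eq_mul] at h3
    rcases hvo with h | h <;> rw [h] at h3
    · exact ⟨(σ (Algebra.norm F (IntermediateField.AdjoinSimple.gen F V))).order, by linarith⟩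
    · exact ⟨-(σ (Algebra.norm F (IntermediateField.AdjoinSimple.gen F V))).order, by linarith⟩
  exact le_antisymm hle (Nat.le_of_dvd hpos hdvd)

/-- **Proposition 3.1.**  Let `K` have characteristic `0` and let `u, v ∈ K(x)ˣ`.
Suppose some `α` in the algebraic closure of `K` is a simple zero or a simple pole
of `v` and is neither a zero nor a pole of `u`.  Then for all positive integers
`k, ℓ` and all `U, V` in an algebraic closure of `K(x)` with `U^k = u` and
`V^ℓ = v` we have `[K(x, U, V) : K(x, U)] = ℓ`. -/
theorem adjoin_root_unit_degree (K : Type*) [Field K] [CharZero K]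
    (u v : RatFunc K) (hu : u ≠ 0) (hv : v ≠ 0)
    (α : AlgebraicClosure K) (hvα : ordAt α v = 1 ∨ ordAt α v = -1)
    (huα : ordAt α u = 0)
    (k ℓ : ℕ) (hk : 1 ≤ k) (hℓ : 1 ≤ ℓ)
    (U V : AlgebraicClosure (RatFunc K))
    (hU : U ^ k = algebraMap (RatFunc K) (AlgebraicClosure (RatFunc K)) u)
    (hV : V ^ ℓ = algebraMap (RatFunc K) (AlgebraicClosure (RatFunc K)) v) :
    Module.finrank (IntermediateField.adjoin (RatFunc K) {U})
      (IntermediateField.adjoin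
        (IntermediateField.adjoin (RatFunc K) {U} :
          IntermediateField (RatFunc K) (AlgebraicClosure (RatFunc K))) {V}) = ℓ := by
  have : CharZero (AlgebraicClosure K) :=
    charZero_of_injective_algebraMap (algebraMap K (AlgebraicClosure K)).injective
  let : Algebra (RatFunc K) (LaurentSeries (AlgebraicClosure K)) := (auxEmb α).toAlgebra
  -- the embedding
  have hσ : Nonempty (IntermediateField.adjoin (RatFunc K) {U} →ₐ[RatFunc K]
      LaurentSeries (AlgebraicClosure K)) := by
    obtain ⟨f, hf⟩ := auxEmb_spec α u hu
    obtain ⟨g, hg⟩ := aux_root f k hk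
    have hroot : (HahnSeries.ofPowerSeries ℤ (AlgebraicClosure K) g) ^ k = auxEmb α u := by
      rw [hf, huα, ← hg, map_pow, HahnSeries.single_zero_one, one_mul]
    have : NeZero ((k : ℕ) : AlgebraicClosure K) := ⟨by exact_mod_cast (by omega : k ≠ 0)⟩
    obtain ⟨ζ, hζ⟩ := HasEnoughRootsOfUnity.exists_primitiveRoot (AlgebraicClosure K) k
    have hζ' := hζ.map_of_injective (f := (HahnSeries.C : AlgebraicClosure K →+*
      LaurentSeries (AlgebraicClosure K))) HahnSeries.C_injective
    have hsp := X_pow_sub_C_splits_of_isPrimitiveRoot hζ' hroot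
    have hdvd : minpoly (RatFunc K) U ∣ Polynomial.X ^ k - Polynomial.C u := by
      apply minpoly.dvd
      simp [hU]
    have := IntermediateField.exists_algHom_adjoin_of_splits (F := RatFunc K)
      (E := AlgebraicClosure (RatFunc K)) (K := LaurentSeries (AlgebraicClosure K)) (S := {U})
      (L := ⊥) (by
        intro s hs
        rw [Set.mem_singleton_iff] at hs
        subst hs
        refine ⟨Algebra.IsIntegral.isIntegral _, ?_⟩
        refine Polynomial.Splits.of_dvd (g := (Polynomial.X ^ k - Polynomial.C u).map
          (algebraMap (RatFunc K) (LaurentSeries (AlgebraicClosure K)))) ?_ ?_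
          (Polynomial.map_dvd _ hdvd)
        · rw [Polynomial.map_sub, Polynomial.map_pow, Polynomial.map_X, Polynomial.map_C]
          exact hsp
        · simpa using Polynomial.X_pow_sub_C_ne_zero (by omega) _)
      ((Algebra.ofId _ _).comp (IntermediateField.botEquiv _ _).toAlgHom) bot_le
    exact ⟨this.choose⟩
  obtain ⟨σ⟩ := hσ
  have h4 : (σ (algebraMap (RatFunc K) _ v)).order = ordAt α v := by
    rw [AlgHom.commutes]
    exact auxEmb_order α v hv
  exact aux_degree σ.toRingHom (algebraMap (RatFunc K) _ v)
    (by rw [← h4] at hvα; exact hvα) ℓ hℓ V (by rw [hV]; rfl)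
end

section
/- Let K be a field of characteristic 0, let n ≥ 2 and ℓ ≥ 1 be integers, let a_1,…,a_{n-1}, α, β be nonzero elements of K, and put f(T, X) = (X−a_1)⋯(X−a_{n-1})(X − αT^ℓ − β) − 1 ∈ K[T, X]. Let ν, ν_1, …, ν_{n-1} be integers with ν ≠ 0. Let Υ ⊆ K be the set of all τ ∈ K for which there exist, in an algebraic closure of K, a root ξ of the polynomial f(τ, X) ∈ K[X] and an element ζ with ζ^{ℓν} = ξ^ν (ξ−a_1)^{ν_1} ⋯ (ξ−a_{n-1})^{ν_{n-1}} such that [K(ξ, ζ) : K(ξ)] < ℓ. If f(T, X) is irreducible in K[T, X] and the polynomial f(0, X) ∈ K[X] has a nonzero simple root in the algebraic closure of K, then Υ is a thin subset of K. -/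
open Polynomial

namespace ThinAux

/-- extension of a homomorphism along an integral extension -/
theorem exists_extension {A B k : Type*} [CommRing A] [CommRing B] [IsDomain B] [Field k]
    [IsAlgClosed k] [Algebra A B] [Algebra.IsIntegral A B]
    (hinj : Function.Injective (algebraMap A B)) (ψ : A →+* k) :
    ∃ φ : B →+* k, ∀ a, φ (algebraMap A B a) = ψ a := by
  have hP : (RingHom.ker ψ).IsPrime := RingHom.ker_isPrime ψ
  obtain ⟨Q, -, hQ, hQc⟩ := Ideal.exists_ideal_over_prime_of_isIntegral (S := B)
    (RingHom.ker ψ) ⊥ (by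
      intro x hx
      have : algebraMap A B x = 0 := by simpa using hx
      have : x = 0 := hinj (by simpa using this)
      simp [this])
  let P := RingHom.ker ψ
  let _ : Algebra (A ⧸ P) k := (Ideal.Quotient.lift P ψ (fun a ha => ha)).toAlgebra
  let _ : Algebra (A ⧸ P) (B ⧸ Q) :=
    (Ideal.quotientMap Q (algebraMap A B) (by rw [hQc])).toAlgebra
  have hmap : ∀ a : A, algebraMap (A ⧸ P) (B ⧸ Q) (Ideal.Quotient.mk P a)
      = Ideal.Quotient.mk Q (algebraMap A B a) := fun a => rfl
  have hmapk : ∀ a : A, algebraMap (A ⧸ P) k (Ideal.Quotient.mk P a) = ψ a := fun a => rfl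
  have : IsDomain (A ⧸ P) := Ideal.Quotient.isDomain P
  have : IsDomain (B ⧸ Q) := Ideal.Quotient.isDomain Q
  have i1 : Function.Injective (algebraMap (A ⧸ P) (B ⧸ Q)) := by
    rw [injective_iff_map_eq_zero]
    intro x
    obtain ⟨a, rfl⟩ := Ideal.Quotient.mk_surjective x
    rw [hmap, Ideal.Quotient.eq_zero_iff_mem, Ideal.Quotient.eq_zero_iff_mem]
    intro h
    have h' : a ∈ Ideal.comap (algebraMap A B) Q := h
    rw [hQc] at h'
    exact h'
  have i2 : Function.Injective (algebraMap (A ⧸ P) k) := by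
    rw [injective_iff_map_eq_zero]
    intro x
    obtain ⟨a, rfl⟩ := Ideal.Quotient.mk_surjective x
    rw [hmapk, Ideal.Quotient.eq_zero_iff_mem]
    intro h
    exact h
  have : Module.IsTorsionFree (A ⧸ P) (B ⧸ Q) := Module.isTorsionFree_iff_algebraMap_injective.2 i1
  have : Module.IsTorsionFree (A ⧸ P) k := Module.isTorsionFree_iff_algebraMap_injective.2 i2
  have : Algebra.IsIntegral (A ⧸ P) (B ⧸ Q) := by
    constructor
    intro x
    obtain ⟨b, rfl⟩ := Ideal.Quotient.mk_surjective x
    obtain ⟨p, hp, hp0⟩ := Algebra.IsIntegral.isIntegral (R := A) b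
    refine ⟨p.map (Ideal.Quotient.mk P), hp.map _, ?_⟩
    rw [Polynomial.eval₂_map]
    have h := congrArg (Ideal.Quotient.mk Q) hp0
    rw [Polynomial.hom_eval₂] at h
    rw [map_zero] at h
    exact h
  let Φ : (B ⧸ Q) →ₐ[A ⧸ P] k := IsAlgClosed.lift
  refine ⟨Φ.toRingHom.comp (Ideal.Quotient.mk Q), fun a => ?_⟩
  change Φ (Ideal.Quotient.mk Q (algebraMap A B a)) = _
  rw [← hmap, Φ.commutes, hmapk]

theorem thin_of_specializations {K : Type*} [Field K] {k : Type*} [Field k] [Algebra K k]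
    {B : Type*} [CommRing B] [IsDomain B] [Algebra K[X] B] [Algebra.IsIntegral K[X] B]
    (E : Set B) (hE : E.Finite) (S : Set (Fin 1 → K))
    (h : ∀ τ ∈ S, ∃ φ : B →+* k,
      (∀ a : K[X], φ (algebraMap K[X] B a) = algebraMap K k (a.eval (τ 0))) ∧
      ∃ e ∈ E, e ∉ (algebraMap K[X] B).range ∧ φ e ∈ (algebraMap K k).range) :
    IsThin K 1 S := by
  classical
  let E' : Set B := {e ∈ E | e ∉ (algebraMap K[X] B).range}
  have hE' : E'.Finite := hE.subset (fun _ h => h.1)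
  have := hE'.fintype
  let g := (MvPolynomial.uniqueAlgEquiv K (Fin 1)).symm.toRingEquiv
  have hg : ∀ (τ : Fin 1 → K) (p : K[X]), MvPolynomial.eval τ (g p) = p.eval (τ 0) := by
    intro τ p
    have : ((MvPolynomial.aeval (R := K) τ).comp
      (MvPolynomial.uniqueAlgEquiv K (Fin 1)).symm.toAlgHom) = Polynomial.aeval (τ 0) := by
      apply Polynomial.algHom_ext
      simp [MvPolynomial.uniqueAlgEquiv]
    have h2 := DFunLike.congr_fun this p
    rw [Polynomial.coe_aeval_eq_eval] at h2
    exact h2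
  let F : B → Polynomial (MvPolynomial (Fin 1) K) := fun e =>
    Polynomial.mapEquiv g (minpoly K[X] e)
  refine ⟨Fintype.card E', fun i => {τ | ∃ r : K,
    ((F ((Fintype.equivFin E').symm i)).map (MvPolynomial.eval τ)).eval r = 0}, ?_, ?_⟩
  · intro i
    right
    set e := (Fintype.equivFin E').symm i
    refine ⟨F e, ?_, ?_, rfl⟩
    · exact (MulEquiv.irreducible_iff (Polynomial.mapEquiv g)).2
        (minpoly.irreducible (Algebra.IsIntegral.isIntegral _))
    · have : (F e).natDegree = (minpoly K[X] (e : B)).natDegree := by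
        simp only [F, Polynomial.mapEquiv_apply]
        exact Polynomial.natDegree_map_eq_of_injective g.injective _
      rw [this]
      exact (minpoly.two_le_natDegree_iff (Algebra.IsIntegral.isIntegral _)).2 e.2.2
  · intro τ hτ
    obtain ⟨φ, hφ, e, heE, her, r, hr⟩ := h τ hτ
    rw [Set.mem_iUnion]
    refine ⟨Fintype.equivFin E' ⟨e, heE, her⟩, r, ?_⟩
    simp only [Equiv.symm_apply_apply]
    have h1 : (F e).map (MvPolynomial.eval τ)
        = (minpoly K[X] e).map (Polynomial.evalRingHom (τ 0)) := by
      simp only [F, Polynomial.mapEquiv_apply, Polynomial.map_map]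
      congr 1
      ext p
      · simpa using hg τ (C p)
      · simpa using hg τ X
    rw [h1]
    apply (algebraMap K k).injective
    rw [map_zero, ← Polynomial.eval₂_at_apply, Polynomial.eval₂_map, hr]
    have h2 := congrArg φ (minpoly.aeval K[X] e)
    rw [Polynomial.aeval_def, Polynomial.hom_eval₂, map_zero] at h2
    rw [← h2]
    congr 1
    ext p
    · simp [hφ]
    · simp [hφ]

end ThinAux

namespace ThinAux

theorem exists_split {B Ω : Type*} [CommRing B] [IsDomain B] [Field Ω] [IsAlgClosed Ω]
    [Algebra B Ω] (hinj : Function.Injective (algebraMap B Ω))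
    (hint : ∀ y : Ω, IsIntegral B y → ∃ b, algebraMap B Ω b = y) (n : ℕ) :
    ∀ g : B[X], g.Monic → g.natDegree = n →
    ∃ (m : ℕ) (r : Fin m → B), g = ∏ i, (X - C (r i)) := by
  induction n with
  | zero =>
    intro g hg h0
    refine ⟨0, Fin.elim0, ?_⟩
    simpa using hg.natDegree_eq_zero.1 h0
  | succ n ih =>
    intro g hg h0
    have hd : (g.map (algebraMap B Ω)).degree ≠ 0 := by
      rw [hg.degree_map]
      rw [Polynomial.degree_eq_natDegree hg.ne_zero, h0]
      simp; exact_mod_cast Nat.succ_ne_zero n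
    obtain ⟨y, hy⟩ := IsAlgClosed.exists_root _ hd
    have hy' : eval₂ (algebraMap B Ω) y g = 0 := by
      rwa [Polynomial.IsRoot, Polynomial.eval_map] at hy
    obtain ⟨b, rfl⟩ := hint y ⟨g, hg, hy'⟩
    have hb : g.IsRoot b := by
      apply hinj
      rw [map_zero, ← hy', Polynomial.eval₂_at_apply]
    obtain ⟨g', hg'⟩ := Polynomial.dvd_iff_isRoot.2 hb
    have hm : g'.Monic := by
      apply (Polynomial.monic_X_sub_C b).of_mul_monic_left
      rw [← hg']; exact hg
    have hdg : g'.natDegree = n := by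
      have := congrArg natDegree hg'
      rw [(Polynomial.monic_X_sub_C b).natDegree_mul hm, natDegree_X_sub_C, h0] at this
      omega
    obtain ⟨m, r, hr⟩ := ih g' hm hdg
    refine ⟨m + 1, Fin.cons b r, ?_⟩
    rw [Fin.prod_univ_succ]
    simp [hg', hr]

theorem core {K k B : Type*} [Field K] [CharZero K] [Field k] [IsAlgClosed k] [Algebra K k]
    [CommRing B] [IsDomain B] [Algebra K[X] B] [Algebra.IsIntegral K[X] B]
    (hinj : Function.Injective (algebraMap K[X] B))
    (hsplit : ∀ g : B[X], g.Monic → ∃ (m : ℕ) (r : Fin m → B), g = ∏ i, (X - C (r i)))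
    (f : K[X][X]) (hfm : f.Monic) (hirr : Irreducible f) (R : K[X]) (N ℓ : ℕ) (hN : N ≠ 0)
    (x : B) (hx : aeval x f = 0)
    (hgen : ∀ (d : ℕ) (η : B) (Λ : K[X][X]), 1 ≤ d → d < ℓ → aeval x (derivative f) ≠ 0 →
      η * aeval x (derivative f) = aeval x Λ →
      η ^ N = (aeval x (R.map (C : K →+* K[X]))) ^ d → False) :
    IsThin K 1 {τ | ∃ (ξ : k) (q : K[X]) (d : ℕ), IsIntegral K ξ ∧ 1 ≤ d ∧ d < ℓ ∧
      aeval ξ (f.map (Polynomial.evalRingHom (τ 0))) = 0 ∧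
      (aeval ξ q) ^ N = (aeval ξ R) ^ d} := by
  classical
  obtain ⟨m, r, hr⟩ := hsplit (f.map (algebraMap K[X] B)) (hfm.map _)
  have hs2 : ∀ (i : Fin m) (d : ℕ), ∃ (M : ℕ) (e : Fin M → B),
      X ^ N - C ((aeval (r i) (R.map (C : K →+* K[X]))) ^ d) = ∏ j, (X - C (e j)) := fun i d =>
    hsplit _ (Polynomial.monic_X_pow_sub_C _ hN)
  choose M η hη using hs2
  let q : Finset (Fin m) → B[X] := fun I => ∏ i ∈ I, (X - C (r i))
  let Λ : (d : ℕ) → ((i : Fin m) → Fin (M i d)) → B[X] := fun d j =>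
    ∑ i, C (η i d (j i)) * ∏ i' ∈ Finset.univ.erase i, (X - C (r i'))
  let E : Set B := (⋃ I, ((q I).coeffs : Set B)) ∪
    ⋃ (d : Fin ℓ), ⋃ j, ((Λ d j).coeffs : Set B)
  have hEfin : E.Finite := by
    apply Set.Finite.union
    · exact Set.finite_iUnion fun I => Finset.finite_toSet _
    · exact Set.finite_iUnion fun d => Set.finite_iUnion fun j => Finset.finite_toSet _
  refine thin_of_specializations (k := k) E hEfin _ ?_
  rintro τ ⟨ξ, Q, d, hξint, hd1, hd2, hξ, hQ⟩
  obtain ⟨φ, hφ⟩ := exists_extension hinj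
    ((algebraMap K k).comp (Polynomial.evalRingHom (τ 0)))
  refine ⟨φ, fun a => hφ a, ?_⟩
  by_contra hcon
  push Not at hcon
  have lift : ∀ p : B[X], (p.coeffs : Set B) ⊆ E →
      (∃ p0 : K[X], p.map φ = p0.map (algebraMap K k)) →
      ∃ P : K[X][X], P.map (algebraMap K[X] B) = p := by
    rintro p hp ⟨p0, hp0⟩
    rw [← Polynomial.mem_lifts, Polynomial.lifts_iff_coeff_lifts]
    intro t
    by_contra hnot
    have hne : p.coeff t ≠ 0 := by
      intro h0; exact hnot ⟨0, by simp [h0]⟩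
    refine hcon (p.coeff t) (hp (Polynomial.coeff_mem_coeffs hne)) hnot ?_
    have := congrArg (fun s => s.coeff t) hp0
    simp only [Polynomial.coeff_map] at this
    rw [this]; exact ⟨_, rfl⟩
  set fτ := f.map (Polynomial.evalRingHom (τ 0)) with hfτ
  have hcomp : φ.comp (algebraMap K[X] B) = (algebraMap K k).comp (Polynomial.evalRingHom (τ 0)) :=
    RingHom.ext hφ
  have hprod : fτ.map (algebraMap K k) = ∏ i, (X - C (φ (r i))) := by
    rw [hfτ, Polynomial.map_map, ← hcomp, ← Polynomial.map_map, hr, Polynomial.map_prod]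
    simp
  set p := minpoly K ξ with hp
  have hpm : p.Monic := minpoly.monic hξint
  have hpirr : Irreducible p := minpoly.irreducible hξint
  have hpdvd : p ∣ fτ := minpoly.dvd K ξ hξ
  -- the minimal polynomial is a partial product
  have hI : ∃ I : Finset (Fin m), p.map (algebraMap K k) = ∏ i ∈ I, (X - C (φ (r i))) := by
    obtain ⟨y, hy⟩ := Polynomial.map_dvd (algebraMap K k) hpdvd
    rw [hprod] at hy
    obtain ⟨t, u, b, c, -, -, hbc, hpt, -⟩ := mul_eq_mul_prime_prod (a := (1 : k[X]))
      (x := p.map (algebraMap K k)) (y := y) (s := Finset.univ) (p := fun i => X - C (φ (r i)))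
      (fun i _ => Polynomial.prime_X_sub_C _) (by rw [← hy, one_mul])
    refine ⟨t, ?_⟩
    have hb : b.Monic := by
      have h1 : (∏ i ∈ t, (X - C (φ (r i)))).Monic :=
        Polynomial.monic_prod_of_monic _ _ fun i _ => Polynomial.monic_X_sub_C _
      apply h1.of_mul_monic_right
      rw [← hpt]; exact hpm.map _
    have hbu : IsUnit b := IsUnit.of_mul_eq_one _ hbc.symm
    rw [hpt, hb.eq_one_of_isUnit hbu, one_mul]
  obtain ⟨I, hI⟩ := hI
  have hqm : (q I).Monic :=
    Polynomial.monic_prod_of_monic _ _ fun i _ => Polynomial.monic_X_sub_C _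
  have hqlift := lift (q I) (Set.subset_union_of_subset_left
    (Set.subset_iUnion (fun I => ((q I).coeffs : Set B)) I) _) ⟨p, by
      rw [hI, Polynomial.map_prod]; simp⟩
  obtain ⟨P, hP, hPdeg, hPm⟩ := Polynomial.lifts_and_natDegree_eq_and_monic
    ((Polynomial.mem_lifts _).2 hqlift) hqm
  have hPdvd : P ∣ f := by
    rw [← Polynomial.map_dvd_map _ hinj hPm, hP, hr]
    exact Finset.prod_dvd_prod_of_subset _ _ _ (Finset.subset_univ I)
  have hqdeg : (q I).natDegree = I.card := by
    simp only [q]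
    rw [Polynomial.natDegree_prod_of_monic _ _ fun i _ => Polynomial.monic_X_sub_C _]
    simp
  have hpdegI : p.natDegree = I.card := by
    rw [← Polynomial.natDegree_map (algebraMap K k), hI,
      Polynomial.natDegree_prod_of_monic _ _ fun i _ => Polynomial.monic_X_sub_C _]
    simp
  have hIpos : 0 < I.card := by
    rw [← hpdegI]; exact minpoly.natDegree_pos hξint
  have hPf : P = f := by
    obtain ⟨s, hs⟩ := hPdvd
    rcases hirr.isUnit_or_isUnit hs with h | h
    · have := hPm.eq_one_of_isUnit h
      rw [this, hqdeg] at hPdeg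
      simp at hPdeg; omega
    · have hsm : s.Monic := by
        apply hPm.of_mul_monic_left; rw [← hs]; exact hfm
      rw [hs, hsm.eq_one_of_isUnit h, mul_one]
  have hdegm : f.natDegree = m := by
    rw [← hfm.natDegree_map (algebraMap K[X] B), hr,
      Polynomial.natDegree_prod_of_monic _ _ fun i _ => Polynomial.monic_X_sub_C _]
    simp
  have hIuniv : I = Finset.univ := by
    apply Finset.eq_univ_of_card
    rw [← hqdeg, ← hPdeg, hPf, hdegm]; simp
  rw [hIuniv] at hI
  have hsep : (p.map (algebraMap K k)).Separable := hpirr.separable.map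
  have hxinj : Function.Injective fun i => φ (r i) := by
    rw [hI] at hsep
    exact Polynomial.separable_prod_X_sub_C_iff.1 hsep
  have hroot : ∀ i, (p.map (algebraMap K k)).eval (φ (r i)) = 0 := by
    intro i
    rw [hI, Polynomial.eval_prod]
    exact Finset.prod_eq_zero (Finset.mem_univ i) (by simp)
  have hroot' : ∀ (g : K[X]) i, aeval ξ g = 0 → aeval (φ (r i)) g = 0 := by
    intro g i hg
    obtain ⟨s, hs⟩ := minpoly.dvd K ξ hg
    rw [hs, map_mul]
    have := hroot i
    rw [Polynomial.eval_map_algebraMap] at this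
    rw [this, zero_mul]
  have hφR : ∀ i, φ (aeval (r i) (R.map (C : K →+* K[X]))) = aeval (φ (r i)) R := by
    intro i
    rw [Polynomial.aeval_def, Polynomial.hom_eval₂, hcomp, Polynomial.eval₂_map,
      Polynomial.aeval_def]
    congr 1
    ext a; simp
  have hj : ∀ i, ∃ j, aeval (φ (r i)) Q = φ (η i d j) := by
    intro i
    have h1 : (aeval (φ (r i)) Q) ^ N = (aeval (φ (r i)) R) ^ d := by
      have := hroot' (Q ^ N - R ^ d) i (by simp [hQ])
      simpa [sub_eq_zero] using this
    have h2 := congrArg (fun g => (g.map φ).eval (aeval (φ (r i)) Q)) (hη i d)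
    simp only [Polynomial.map_prod, Polynomial.eval_prod] at h2
    simp [h1, hφR] at h2
    obtain ⟨j, hj⟩ := Finset.prod_eq_zero_iff.1 h2.symm
    exact ⟨j, sub_eq_zero.1 hj.2⟩
  choose j hj using hj
  have hp1 : p ≠ 1 := hpirr.ne_one
  have hpderiv : ∀ i, (derivative (p.map (algebraMap K k))).eval (φ (r i)) =
      ∏ i' ∈ Finset.univ.erase i, (φ (r i) - φ (r i')) := by
    intro i
    rw [hI, Polynomial.derivative_prod_finset, Polynomial.eval_finsetSum]
    rw [Finset.sum_eq_single i]
    · simp [Polynomial.eval_prod]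
    · intro b _ hb
      rw [Polynomial.eval_mul, Polynomial.eval_prod,
        Finset.prod_eq_zero (Finset.mem_erase.2 ⟨hb.symm, Finset.mem_univ i⟩) (by simp), zero_mul]
    · simp
  have hΛ : (Λ d j).map φ = ((Q * derivative p) %ₘ p).map (algebraMap K k) := by
    apply Polynomial.eq_of_degrees_lt_of_eval_index_eq Finset.univ (v := fun i => φ (r i))
      hxinj.injOn
    · refine lt_of_le_of_lt Polynomial.degree_map_le ?_
      refine (Polynomial.degree_sum_le _ _).trans_lt ?_
      rw [Finset.sup_lt_iff]
      · intro i _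
        rw [← Polynomial.smul_eq_C_mul]
        refine lt_of_le_of_lt (Polynomial.degree_smul_le _ _) ?_
        rw [Polynomial.degree_prod_of_monic _ _ fun i _ => Polynomial.monic_X_sub_C _]
        simp only [Polynomial.degree_X_sub_C, Finset.sum_const, nsmul_eq_mul, mul_one]
        exact_mod_cast Finset.card_lt_card (Finset.erase_ssubset (Finset.mem_univ i))
      · simp
    · refine lt_of_le_of_lt Polynomial.degree_map_le ?_
      refine (Polynomial.degree_modByMonic_lt _ hpm).trans_le ?_
      rw [Polynomial.degree_eq_natDegree hpm.ne_zero, hpdegI, hIuniv]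
    · intro i _
      have e1 : eval (φ (r i)) (map (algebraMap K k) ((Q * derivative p) %ₘ p)) =
          aeval (φ (r i)) Q * ∏ i' ∈ Finset.univ.erase i, (φ (r i) - φ (r i')) := by
        rw [← hpderiv i, Polynomial.derivative_map]
        conv_rhs => rw [Polynomial.eval_map_algebraMap, ← map_mul]
        rw [Polynomial.eval_map_algebraMap]
        rw [Polynomial.aeval_modByMonic_eq_self_of_root]
        have := hroot i
        rwa [Polynomial.eval_map_algebraMap] at this
      rw [e1]
      simp only [Λ, Polynomial.map_sum, Polynomial.eval_finsetSum]
      rw [Finset.sum_eq_single i]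
      · simp [Polynomial.map_prod, Polynomial.eval_prod, hj]
      · intro b _ hb
        rw [Polynomial.map_mul, Polynomial.eval_mul, Polynomial.map_prod, Polynomial.eval_prod]
        rw [Finset.prod_eq_zero (Finset.mem_erase.2 ⟨hb.symm, Finset.mem_univ i⟩) (by simp),
          mul_zero]
      · simp
  obtain ⟨Λ', hΛ'⟩ := lift (Λ d j) (Set.subset_union_of_subset_right (by
    intro e he
    exact Set.mem_iUnion.2 ⟨⟨d, hd2⟩, Set.mem_iUnion.2 ⟨j, he⟩⟩) _) ⟨_, hΛ⟩
  -- the index of x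
  obtain ⟨i0, hi0⟩ : ∃ i, x = r i := by
    have : (f.map (algebraMap K[X] B)).eval x = 0 := by
      rw [Polynomial.eval_map_algebraMap]; exact hx
    rw [hr, Polynomial.eval_prod] at this
    obtain ⟨i, -, hi⟩ := Finset.prod_eq_zero_iff.1 this
    exact ⟨i, by simpa [sub_eq_zero] using hi⟩
  have hder : aeval x (derivative f) = ∏ i' ∈ Finset.univ.erase i0, (r i0 - r i') := by
    rw [← Polynomial.eval_map_algebraMap, ← Polynomial.derivative_map, hr,
      Polynomial.derivative_prod_finset, Polynomial.eval_finsetSum, hi0]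
    rw [Finset.sum_eq_single i0]
    · simp [Polynomial.eval_prod]
    · intro b _ hb
      rw [Polynomial.eval_mul, Polynomial.eval_prod,
        Finset.prod_eq_zero (Finset.mem_erase.2 ⟨hb.symm, Finset.mem_univ i0⟩) (by simp), zero_mul]
    · simp
  refine hgen d (η i0 d (j i0)) Λ' hd1 hd2 ?_ ?_ ?_
  · rw [hder]
    refine Finset.prod_ne_zero_iff.2 fun i hi h0 => ?_
    have : φ (r i0) = φ (r i) := by rw [sub_eq_zero.1 h0]
    exact (Finset.mem_erase.1 hi).1 (hxinj this).symm
  · rw [hder, ← Polynomial.eval_map_algebraMap, hΛ', hi0]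
    simp only [Λ, Polynomial.eval_finsetSum]
    rw [Finset.sum_eq_single i0]
    · simp [Polynomial.eval_prod]
    · intro b _ hb
      rw [Polynomial.eval_mul, Polynomial.eval_prod]
      rw [Finset.prod_eq_zero (Finset.mem_erase.2 ⟨hb.symm, Finset.mem_univ i0⟩) (by simp),
          mul_zero]
    · simp
  · have h2 := congrArg (fun g => g.eval (η i0 d (j i0))) (hη i0 d)
    simp only [Polynomial.eval_prod] at h2
    rw [Finset.prod_eq_zero (Finset.mem_univ (j i0)) (by simp)] at h2
    rw [hi0]
    simpa [sub_eq_zero] using h2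

end ThinAux

namespace ThinAux

theorem rootMult_pow {k : Type*} [Field k] (a : k) (p : k[X]) (hp : p ≠ 0) (n : ℕ) :
    rootMultiplicity a (p ^ n) = n * rootMultiplicity a p := by
  induction n with
  | zero => simp
  | succ n ih =>
    rw [pow_succ, Polynomial.rootMultiplicity_mul (mul_ne_zero (pow_ne_zero _ hp) hp), ih]
    ring

theorem eisen {k : Type*} [Field k] (ρ : k) (ℓ : ℕ) (hℓ : 0 < ℓ) (w : k[X])
    (hw : rootMultiplicity ρ w = 1) : Irreducible (X ^ ℓ - C w : k[X][X]) := by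
  have hw0 : w ≠ 0 := by rintro rfl; simp at hw
  have hm : (X ^ ℓ - C w : k[X][X]).Monic := Polynomial.monic_X_pow_sub_C _ hℓ.ne'
  have hdeg : (X ^ ℓ - C w : k[X][X]).degree = ℓ := Polynomial.degree_X_pow_sub_C hℓ _
  apply Polynomial.irreducible_of_eisenstein_criterion (P := Ideal.span {X - C ρ})
  · rw [Ideal.span_singleton_prime (Polynomial.X_sub_C_ne_zero ρ)]
    exact Polynomial.prime_X_sub_C ρ
  · rw [hm.leadingCoeff, Ideal.mem_span_singleton]
    exact (Polynomial.prime_X_sub_C ρ).not_dvd_one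
  · intro n hn
    rw [hdeg] at hn
    have hn' : n < ℓ := by exact_mod_cast hn
    rw [Polynomial.coeff_sub, Polynomial.coeff_X_pow, if_neg hn'.ne, Polynomial.coeff_C,
      Ideal.mem_span_singleton]
    split_ifs
    · rw [zero_sub, dvd_neg, Polynomial.dvd_iff_isRoot]
      exact (Polynomial.rootMultiplicity_pos hw0).1 (by omega)
    · simp
  · rw [hdeg]; exact_mod_cast hℓ
  · rw [Polynomial.coeff_sub, Polynomial.coeff_X_pow, if_neg hℓ.ne, Polynomial.coeff_C,
      if_pos rfl, zero_sub, Ideal.span_singleton_pow, Ideal.mem_span_singleton, dvd_neg]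
    intro h
    have := (Polynomial.le_rootMultiplicity_iff hw0).2 h
    omega
  · exact hm.isPrimitive

theorem rootOfUnity_mem {k L : Type*} [Field k] [IsAlgClosed k] [Field L] [Algebra k L]
    (u : L) (N : ℕ) (hN : 0 < N) (hu : u ^ N = 1) : ∃ v : k, algebraMap k L v = u := by
  have hint : IsIntegral k u := ⟨X ^ N - 1, Polynomial.monic_X_pow_sub_C 1 hN.ne', by simp [hu]⟩
  exact minpoly.mem_range_of_degree_eq_one k u
    (IsAlgClosed.degree_eq_one_of_irreducible k (minpoly.irreducible hint))

theorem kummer_aux {k E : Type*} [Field k] [IsAlgClosed k] [CharZero k] [Field E] [Algebra k E]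
    (ℓ : ℕ) (hℓ : 0 < ℓ) (w : E) (h : E[X]) (hh : h = X ^ ℓ - C w) (hirr : Irreducible h)
    (N : ℕ) (hN : 0 < N) (c : AdjoinRoot h) (u : E) (hu : u ≠ 0)
    (hc : c ^ N = algebraMap E _ u) :
    ∃ (b : E) (i : ℕ), i < ℓ ∧
      c = algebraMap E (AdjoinRoot h) b * AdjoinRoot.root _ ^ i := by
  have hfact : Fact (Irreducible h) := ⟨hirr⟩
  have hm : h.Monic := hh ▸ Polynomial.monic_X_pow_sub_C _ hℓ.ne'
  have hdeg : h.degree = ℓ := hh ▸ Polynomial.degree_X_pow_sub_C hℓ _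
  have hℓne : NeZero ℓ := ⟨hℓ.ne'⟩
  obtain ⟨ω, hω⟩ := HasEnoughRootsOfUnity.exists_primitiveRoot k ℓ
  set ωE := algebraMap k E ω with hωE
  have hωE' : IsPrimitiveRoot ωE ℓ := hω.map_of_injective (algebraMap k E).injective
  have hθ : (AdjoinRoot.root h) ^ ℓ = algebraMap E (AdjoinRoot h) w := by
    have := (congrArg (eval₂ (AdjoinRoot.of h) (AdjoinRoot.root h)) hh).symm.trans
      (AdjoinRoot.eval₂_root h)
    simpa [sub_eq_zero] using this
  let σ : AdjoinRoot h →ₐ[E] AdjoinRoot h := AdjoinRoot.liftAlgHom h (Algebra.ofId E _)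
    (algebraMap E _ ωE * AdjoinRoot.root h) (by
      refine (congrArg (eval₂ _ _) hh).trans ?_
      simp only [eval₂_sub, eval₂_X_pow, eval₂_C]
      rw [mul_pow, ← map_pow, hωE'.pow_eq_one, map_one, one_mul]
      rw [sub_eq_zero]
      exact hθ)
  have hσ : σ (AdjoinRoot.root h) = algebraMap E _ ωE * AdjoinRoot.root h :=
    AdjoinRoot.liftAlgHom_root ..
  have hc0 : c ≠ 0 := by
    rintro rfl
    rw [zero_pow hN.ne'] at hc
    exact hu ((map_eq_zero _).1 hc.symm)
  have hσc : (σ c / c) ^ N = 1 := by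
    rw [div_pow, ← map_pow, hc, AlgHom.commutes, div_self]
    rw [← hc]; exact pow_ne_zero _ hc0
  obtain ⟨v, hv⟩ := rootOfUnity_mem (k := k) _ N hN hσc
  obtain ⟨p, rfl⟩ := AdjoinRoot.mk_surjective (g := h) c
  let p' := p %ₘ h
  have hp' : AdjoinRoot.mk h p = aeval (AdjoinRoot.root h) p' := by
    rw [AdjoinRoot.aeval_eq]
    simp only [p']
    rw [AdjoinRoot.mk_eq_mk, Polynomial.modByMonic_eq_sub_mul_div]
    simp
  have hp'deg : p'.degree < h.degree := Polynomial.degree_modByMonic_lt _ hm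
  have hcoef : p'.comp (C ωE * X) - C (algebraMap k E v) * p' = 0 := by
    apply Polynomial.eq_zero_of_dvd_of_degree_lt (p := h)
    · rw [← AdjoinRoot.mk_eq_zero, ← AdjoinRoot.aeval_eq, map_sub, map_mul, aeval_comp]
      rw [map_mul, aeval_C, aeval_X, aeval_C, ← hσ, Polynomial.aeval_algHom_apply, ← hp',
        ← IsScalarTower.algebraMap_apply, hv, div_mul_cancel₀ _ hc0, sub_self]
    · rw [hdeg] at hp'deg ⊢
      rw [Polynomial.degree_lt_iff_coeff_zero] at hp'deg ⊢
      intro i hi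
      simp [hp'deg i hi]
  have hcoef' : ∀ i, p'.coeff i ≠ 0 → ωE ^ i = algebraMap k E v := by
    intro i hi
    have := congrArg (fun g => g.coeff i) hcoef
    simp only [coeff_sub, comp_C_mul_X_coeff, coeff_C_mul, coeff_zero, sub_eq_zero] at this
    rw [mul_comm] at this
    exact mul_right_cancel₀ hi this
  have hp'0 : p' ≠ 0 := by
    intro h0
    rw [h0, map_zero] at hp'
    exact hc0 hp'
  obtain ⟨i, hi⟩ : ∃ i, p'.coeff i ≠ 0 := by
    by_contra hcon
    push Not at hcon
    exact hp'0 (Polynomial.ext (by simpa using hcon))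
  have hlt : ∀ i, p'.coeff i ≠ 0 → i < ℓ := by
    intro i hi
    by_contra hcon
    rw [hdeg, Polynomial.degree_lt_iff_coeff_zero] at hp'deg
    exact hi (hp'deg i (by omega))
  have hmono : p' = monomial i (p'.coeff i) := by
    ext i'
    rw [Polynomial.coeff_monomial]
    split_ifs with hii
    · rw [hii]
    · by_contra hne
      apply hii
      exact hωE'.pow_inj (hlt i hi) (hlt i' hne) ((hcoef' i hi).trans (hcoef' i' hne).symm)
  refine ⟨p'.coeff i, i, hlt i hi, ?_⟩
  rw [hp']
  conv_lhs => rw [hmono]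
  rw [aeval_monomial]

universe u

theorem kummer {k : Type u} [Field k] [IsAlgClosed k] [CharZero k] (ρ : k) (ℓ : ℕ) (hℓ : 0 < ℓ)
    (w : k[X]) (hw : rootMultiplicity ρ w = 1) (R : k[X]) (hRρ : R.eval ρ ≠ 0)
    (ν : ℕ) (hν : 0 < ν) (hR0 : rootMultiplicity 0 R = ν) :
    ∃ (L : Type u) (_ : Field L) (ι : k[X] →+* L) (θ : L), Function.Injective ι ∧
      θ ^ ℓ = ι w ∧ ∀ (c : L) (d : ℕ), c ^ (ℓ * ν) = ι R ^ d → ℓ ∣ d := by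
  have hR : R ≠ 0 := by rintro rfl; simp at hRρ
  have hw0 : w ≠ 0 := by rintro rfl; simp at hw
  let E := FractionRing k[X]
  have hirr : Irreducible (X ^ ℓ - C (algebraMap k[X] E w) : E[X]) := by
    have h1 := (Polynomial.Monic.irreducible_iff_irreducible_map_fraction_map (K := E)
      (Polynomial.monic_X_pow_sub_C w hℓ.ne')).1 (eisen ρ ℓ hℓ w hw)
    simpa using h1
  obtain ⟨h, hh⟩ : ∃ h : E[X], h = X ^ ℓ - C (algebraMap k[X] E w) := ⟨_, rfl⟩
  rw [← hh] at hirr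
  have hfact : Fact (Irreducible h) := ⟨hirr⟩
  have hθ : (AdjoinRoot.root h) ^ ℓ = algebraMap E (AdjoinRoot h) (algebraMap k[X] E w) := by
    have := (congrArg (eval₂ (AdjoinRoot.of h) (AdjoinRoot.root h)) hh).symm.trans
      (AdjoinRoot.eval₂_root h)
    simpa [sub_eq_zero] using this
  have hEinj : Function.Injective (algebraMap k[X] E) := IsFractionRing.injective _ _
  refine ⟨AdjoinRoot h, inferInstance, (algebraMap E (AdjoinRoot h)).comp (algebraMap k[X] E),
    AdjoinRoot.root h, (algebraMap E (AdjoinRoot h)).injective.comp hEinj,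
    hθ, ?_⟩
  intro c d hc
  have hN : 0 < ℓ * ν := Nat.mul_pos hℓ hν
  have hRE : algebraMap k[X] E R ≠ 0 := by
    intro h0; exact hR (hEinj (by rw [h0, map_zero]))
  obtain ⟨b, i, hi, hb⟩ := kummer_aux (k := k) ℓ hℓ (algebraMap k[X] E w) h hh hirr (ℓ * ν) hN c
    ((algebraMap k[X] E R) ^ d) (pow_ne_zero _ hRE) (by rw [hc]; simp)
  have key : b ^ (ℓ * ν) * (algebraMap k[X] E w) ^ (i * ν) = (algebraMap k[X] E R) ^ d := by
    apply (algebraMap E (AdjoinRoot h)).injective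
    rw [map_mul, map_pow, map_pow, ← hθ, map_pow]
    rw [← RingHom.comp_apply, ← hc, hb, mul_pow]
    ring
  obtain ⟨p, q, hq, rfl⟩ := IsFractionRing.div_surjective (A := k[X]) b
  have hq0 : q ≠ 0 := nonZeroDivisors.ne_zero hq
  have hqE : algebraMap k[X] E q ≠ 0 := by
    intro h0; exact hq0 (hEinj (by rw [h0, map_zero]))
  have key2 : p ^ (ℓ * ν) * w ^ (i * ν) = R ^ d * q ^ (ℓ * ν) := by
    apply hEinj
    simp only [map_mul, map_pow]
    rw [← key, div_pow]
    rw [div_mul_eq_mul_div, div_mul_cancel₀ _ (pow_ne_zero _ hqE)]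
  have hp0 : p ≠ 0 := by
    rintro rfl
    rw [zero_pow hN.ne', zero_mul] at key2
    exact mul_ne_zero (pow_ne_zero _ hR) (pow_ne_zero _ hq0) key2.symm
  have rm : ∀ a, (ℓ * ν) * rootMultiplicity a p + (i * ν) * rootMultiplicity a w =
      d * rootMultiplicity a R + (ℓ * ν) * rootMultiplicity a q := by
    intro a
    have := congrArg (rootMultiplicity a) key2
    rwa [Polynomial.rootMultiplicity_mul (mul_ne_zero (pow_ne_zero _ hp0) (pow_ne_zero _ hw0)),
      Polynomial.rootMultiplicity_mul (mul_ne_zero (pow_ne_zero _ hR) (pow_ne_zero _ hq0)),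
      rootMult_pow _ _ hp0, rootMult_pow _ _ hw0, rootMult_pow _ _ hR, rootMult_pow _ _ hq0] at this
  have h1 := rm ρ
  rw [hw, Polynomial.rootMultiplicity_eq_zero (p := R) (x := ρ) hRρ, mul_one, mul_zero,
    zero_add] at h1
  have hdvd : ℓ ∣ i := by
    have : ℓ * ν ∣ i * ν := (Nat.dvd_add_right (Dvd.intro _ rfl)).1 (h1 ▸ Dvd.intro _ rfl)
    exact Nat.dvd_of_mul_dvd_mul_right hν this
  have hi0 : i = 0 := Nat.eq_zero_of_dvd_of_lt hdvd hi
  have h2 := rm 0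
  rw [hi0, hR0, zero_mul, zero_mul, add_zero] at h2
  have : ℓ * ν ∣ d * ν := (Nat.dvd_add_left (Dvd.intro _ rfl)).1 (h2 ▸ Dvd.intro _ rfl)
  exact Nat.dvd_of_mul_dvd_mul_right hν this

end ThinAux

namespace ThinAux

theorem coreL {K k L : Type*} [Field K] [CharZero K] [Field k] [IsAlgClosed k] [Algebra K k]
    [Field L] (φL : K[X] →+* L) (hinj : Function.Injective φL)
    (f : K[X][X]) (hfm : f.Monic) (hirr : Irreducible f) (R : K[X]) (N ℓ : ℕ) (hN : N ≠ 0)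
    (x : L) (hx : eval₂ φL x f = 0)
    (hgen : ∀ (c : L) (d : ℕ), 1 ≤ d → d < ℓ → c ^ N = (eval₂ (φL.comp C) x R) ^ d → False) :
    IsThin K 1 {τ | ∃ (ξ : k) (q : K[X]) (d : ℕ), IsIntegral K ξ ∧ 1 ≤ d ∧ d < ℓ ∧
      aeval ξ (f.map (Polynomial.evalRingHom (τ 0))) = 0 ∧
      (aeval ξ q) ^ N = (aeval ξ R) ^ d} := by
  let Ω := AlgebraicClosure L
  let _ : Algebra K[X] L := φL.toAlgebra
  have : IsScalarTower K[X] L Ω := inferInstance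
  let B := integralClosure K[X] Ω
  have hΩinj : Function.Injective (algebraMap K[X] Ω) := by
    rw [IsScalarTower.algebraMap_eq K[X] L Ω]
    exact (algebraMap L Ω).injective.comp hinj
  have hBinj : Function.Injective (algebraMap B Ω) := Subtype.val_injective
  have hKB : Function.Injective (algebraMap K[X] B) := by
    intro a b hab
    apply hΩinj
    rw [IsScalarTower.algebraMap_apply K[X] B Ω, hab, ← IsScalarTower.algebraMap_apply]
  have hx' : aeval (algebraMap L Ω x) f = 0 := by
    rw [Polynomial.aeval_algebraMap_apply]
    have : aeval x f = 0 := hx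
    rw [this, map_zero]
  let xB : B := ⟨algebraMap L Ω x, f, hfm, hx'⟩
  have hB : ∀ g : K[X][X], algebraMap B Ω (aeval xB g) = algebraMap L Ω (aeval x g) := by
    intro g
    rw [← Polynomial.aeval_algebraMap_apply, ← Polynomial.aeval_algebraMap_apply]
    rfl
  have hint : Algebra.IsIntegral K[X] B := inferInstance
  refine core hKB ?_ f hfm hirr R N ℓ hN xB ?_ ?_
  · intro g hg
    refine exists_split (Ω := Ω) hBinj ?_ _ g hg rfl
    intro y hy
    exact ⟨⟨y, isIntegral_trans (R := K[X]) y hy⟩, rfl⟩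
  · apply hBinj
    rw [hB]
    have : aeval x f = 0 := hx
    rw [this, map_zero, map_zero]
  · intro d η Λ hd1 hd2 hne hΛ hη
    have hne' : aeval x (derivative f) ≠ 0 := by
      intro h0
      apply hne
      apply hBinj
      rw [hB, h0, map_zero, map_zero]
    have hc : algebraMap L Ω (aeval x Λ / aeval x (derivative f)) = algebraMap B Ω η := by
      rw [map_div₀, ← hB, ← hB, ← hΛ, map_mul, mul_div_cancel_right₀]
      rw [hB]
      exact (_root_.map_ne_zero _).2 hne'
    refine hgen (aeval x Λ / aeval x (derivative f)) d hd1 hd2 ?_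
    apply (algebraMap L Ω).injective
    rw [map_pow, hc, ← map_pow, hη, map_pow, map_pow, hB, Polynomial.aeval_def,
      Polynomial.eval₂_map]
    rfl

open IntermediateField in
theorem reduce {K k : Type*} [Field K] [Field k] [Algebra K k] [Algebra.IsAlgebraic K k]
    (ξ ζ ζ' : k) (N ℓ : ℕ) (R : K[X]) (hζ' : ζ' ∈ adjoin (adjoin K {ξ}) {ζ})
    (h : ζ' ^ N = aeval ξ R)
    (hfin : Module.finrank (adjoin K {ξ}) (adjoin (adjoin K {ξ} : IntermediateField K k) {ζ}) < ℓ) :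
    ∃ (q : K[X]) (d : ℕ), 1 ≤ d ∧ d < ℓ ∧ (aeval ξ q) ^ N = (aeval ξ R) ^ d := by
  set F := adjoin K {ξ} with hF
  set M := adjoin F {ζ} with hM
  have hfd : FiniteDimensional F M :=
    adjoin.finiteDimensional (Algebra.IsIntegral.isIntegral (R := F) ζ)
  let gξ : F := AdjoinSimple.gen K ξ
  have hgξ : (algebraMap F k gξ) = ξ := rfl
  let z : M := ⟨ζ', hζ'⟩
  have hz : z ^ N = algebraMap F M (aeval gξ R) := by
    apply (algebraMap M k).injective
    rw [map_pow, ← IsScalarTower.algebraMap_apply, ← Polynomial.aeval_algebraMap_apply, hgξ]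
    exact h
  let c : F := Algebra.norm F z
  have hc : c ^ N = (aeval gξ R) ^ (Module.finrank F M) := by
    simp only [c]
    rw [← map_pow, hz, Algebra.norm_algebraMap]
  obtain ⟨q, hq⟩ : ∃ q : K[X], aeval ξ q = algebraMap F k c := by
    have hmem : (c : k) ∈ (adjoin K {ξ}).toSubalgebra := c.2
    rw [adjoin_simple_toSubalgebra_of_isAlgebraic (Algebra.IsAlgebraic.isAlgebraic ξ),
      Algebra.adjoin_singleton_eq_range_aeval] at hmem
    exact hmem
  refine ⟨q, Module.finrank F M, Module.finrank_pos, hfin, ?_⟩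
  rw [hq, ← map_pow, hc, map_pow, ← Polynomial.aeval_algebraMap_apply, hgξ]

end ThinAux

namespace ThinAux

universe u

theorem generic {K : Type u} [Field K] [CharZero K] {ι' : Type*} [Fintype ι']
    (ℓ : ℕ) (hℓ : 1 ≤ ℓ) (a : ι' → K) (ha : ∀ i, a i ≠ 0) (α β : K) (hα : α ≠ 0)
    (f : K[X][X]) (hfm : f.Monic)
    (hf : f = (∏ i, (X - C (C (a i)))) * (X - C (C α * X ^ ℓ + C β)) - 1)
    (m : ℕ) (hm : 0 < m) (μ : ι' → ℕ) (R : K[X]) (hR : R = X ^ m * ∏ i, (X - C (a i)) ^ μ i)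
    (hsimple : ∃ ρ : AlgebraicClosure K, ρ ≠ 0 ∧
      ((f.map (Polynomial.evalRingHom (0 : K))).map
        (algebraMap K (AlgebraicClosure K))).rootMultiplicity ρ = 1) :
    ∃ (L : Type u) (_ : Field L) (φL : K[X] →+* L) (x : L), Function.Injective φL ∧
      eval₂ φL x f = 0 ∧ ∀ (c : L) (d : ℕ), 1 ≤ d → d < ℓ →
        c ^ (ℓ * m) = (eval₂ (φL.comp C) x R) ^ d → False := by
  obtain ⟨ρ, hρ0, hρ⟩ := hsimple
  let k := AlgebraicClosure K
  let s := algebraMap K k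
  let P : k[X] := ∏ i, (X - C (s (a i)))
  let g : k[X] := P * (X - C (s β)) - 1
  have hg : (f.map (Polynomial.evalRingHom (0 : K))).map s = g := by
    rw [hf]
    simp [Polynomial.map_prod, P, g, show ℓ ≠ 0 by omega]
  rw [hg] at hρ
  have hg0 : g ≠ 0 := by intro h0; rw [h0] at hρ; simp at hρ
  have hgρ : g.eval ρ = 0 := (Polynomial.rootMultiplicity_pos hg0).1 (by omega)
  have hPρ : P.eval ρ ≠ 0 := by
    intro h0
    simp [g, h0] at hgρ
  have hρa : ∀ i, ρ - s (a i) ≠ 0 := by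
    intro i h0
    apply hPρ
    simp only [P, Polynomial.eval_prod]
    exact Finset.prod_eq_zero (Finset.mem_univ i) (by simpa using h0)
  have hP0 : P ≠ 0 := by rintro h0; rw [h0] at hPρ; simp at hPρ
  have hsα : s α ≠ 0 := (_root_.map_ne_zero s).2 hα
  let w : k[X] := C (s α)⁻¹ * g * P ^ (ℓ - 1)
  have hCα : (C (s α)⁻¹ : k[X]) ≠ 0 := by simpa using hsα
  have hw : rootMultiplicity ρ w = 1 := by
    simp only [w]
    rw [Polynomial.rootMultiplicity_mul (mul_ne_zero (mul_ne_zero hCα hg0) (pow_ne_zero _ hP0)),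
      Polynomial.rootMultiplicity_mul (mul_ne_zero hCα hg0), hρ, Polynomial.rootMultiplicity_C,
      Polynomial.rootMultiplicity_eq_zero (p := P ^ (ℓ - 1))]
    simpa [Polynomial.IsRoot] using fun h => absurd h hPρ
  have hRk : R.map s = X ^ m * ∏ i, (X - C (s (a i))) ^ μ i := by
    rw [hR]; simp [Polynomial.map_prod]
  have hRρ : (R.map s).eval ρ ≠ 0 := by
    rw [hRk]
    simp only [eval_mul, eval_pow, eval_X, eval_prod, eval_sub, eval_C]
    exact mul_ne_zero (pow_ne_zero _ hρ0) (Finset.prod_ne_zero_iff.2 fun i _ =>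
      pow_ne_zero _ (hρa i))
  have hR0 : rootMultiplicity 0 (R.map s) = m := by
    have hne : (R.map s) ≠ 0 := by intro h0; rw [h0] at hRρ; simp at hRρ
    rw [hRk] at hne ⊢
    rw [Polynomial.rootMultiplicity_mul hne, rootMult_pow _ _ Polynomial.X_ne_zero]
    rw [Polynomial.rootMultiplicity_eq_zero (p := ∏ i, (X - C (s (a i))) ^ μ i)]
    · have : rootMultiplicity 0 (X : k[X]) = 1 := by
        have := Polynomial.rootMultiplicity_X_sub_C_self (x := (0 : k))
        simpa using this
      rw [this]; simp
    · simp only [Polynomial.IsRoot, eval_pow, eval_X, eval_prod, eval_sub, eval_C]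
      exact Finset.prod_ne_zero_iff.2 fun i _ =>
        pow_ne_zero _ (by simpa using ha i)
  obtain ⟨L, hL, ι, θ, hι, hθ, hgen⟩ := kummer ρ ℓ hℓ w hw (R.map s) hRρ m hm hR0
  let j : K →+* L := ι.comp (C.comp s)
  let T : L := θ / ι P
  have hιP : ι P ≠ 0 := by
    intro h0; exact hP0 (hι (by rw [h0, map_zero]))
  have hT : j α * T ^ ℓ * ι P = ι g := by
    have h1 : j α * ι (C (s α)⁻¹) = 1 := by
      simp only [j, RingHom.comp_apply]
      rw [← map_mul, ← C_mul, mul_inv_cancel₀ hsα, C_1, map_one]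
    obtain ⟨l, rfl⟩ : ∃ l, ℓ = l + 1 := ⟨ℓ - 1, by omega⟩
    simp only [T, div_pow, hθ, w, map_mul, map_pow, Nat.add_sub_cancel]
    field_simp
    linear_combination (ι g * ι P * ι P ^ l) * h1
  let φL : K[X] →+* L := eval₂RingHom j T
  have hφC : φL.comp C = j := by ext c; simp [φL]
  have hφX : φL X = T := by simp [φL]
  have hφC' : ∀ c, φL (C c) = j c := by intro c; simp [φL]
  let x : L := ι X
  have hjx : ∀ p : K[X], eval₂ j x p = ι (p.map s) := by
    intro p
    rw [← Polynomial.eval₂_C_X (p := p.map s), Polynomial.hom_eval₂, Polynomial.eval₂_map]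
    rfl
  have hfx : eval₂ φL x f = 0 := by
    have h2 : ι P = ∏ i, (x - j (a i)) := by
      simp only [P, map_prod, map_sub]
      rfl
    have h3 : ι g = ι P * (x - j β) - 1 := by
      simp only [g, map_sub, map_mul, map_one]
      rfl
    rw [hf, eval₂_sub, eval₂_mul, eval₂_finsetProd, eval₂_one]
    simp only [eval₂_sub, eval₂_X, eval₂_C]
    simp only [hφC', map_add, map_mul, map_pow, hφX]
    rw [← h2]
    linear_combination -hT - h3
  refine ⟨L, hL, φL, x, ?_, hfx, ?_⟩
  · rw [injective_iff_map_eq_zero]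
    intro p hp
    by_contra hp0
    let _ : Algebra K L := j.toAlgebra
    have hTint : IsIntegral K T := by
      rw [← isAlgebraic_iff_isIntegral]
      exact ⟨p, hp0, hp⟩
    let A := integralClosure K L
    let TA : A := ⟨T, hTint⟩
    let φA : K[X] →+* A := eval₂RingHom (algebraMap K A) TA
    have hφA : (algebraMap A L).comp φA = φL := by
      ext c
      · simp only [RingHom.comp_apply, hφC', φA, coe_eval₂RingHom, eval₂_C]
        rfl
      · simp only [RingHom.comp_apply, hφX, φA, coe_eval₂RingHom, eval₂_X]
        rfl
    have hxA : IsIntegral A x := ⟨f.map φA, hfm.map _, by rw [eval₂_map, hφA]; exact hfx⟩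
    have hxK : IsIntegral K x := isIntegral_trans x hxA
    obtain ⟨q, hqm, hq⟩ := hxK
    have h4 : ι (q.map s) = 0 := by rw [← hjx]; exact hq
    have h5 : q.map s = 0 := hι (by rw [h4, map_zero])
    exact (hqm.map s).ne_zero h5
  · intro c d hd1 hd2 hc
    rw [hφC, hjx] at hc
    have := Nat.le_of_dvd hd1 (hgen c d hc)
    omega

end ThinAux

/-- **Proposition 3.2.**  Let `K` have characteristic `0`, `n ≥ 2`, `ℓ ≥ 1`, and let
`a_1,…,a_{n-1}, α, β ∈ K^*`.  Consider
`f(T,X) = (X−a_1)⋯(X−a_{n-1})(X − αT^ℓ − β) − 1 ∈ K[T][X]`.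
Let `ν, ν_1, …, ν_{n-1}` be integers with `ν ≠ 0` and let `Υ ⊆ K` consist of those
`τ` for which some root `ξ` of `f(τ,X)` in an algebraic closure of `K` and some `ζ`
with `ζ^{ℓν} = ξ^ν (ξ−a_1)^{ν_1} ⋯ (ξ−a_{n-1})^{ν_{n-1}}` satisfy
`[K(ξ,ζ) : K(ξ)] < ℓ`.  If `f` is irreducible in `K[T,X]` and `f(0,X)` has a
nonzero simple root in the algebraic closure, then `Υ` is thin. -/
theorem thin_set_of_small_degree_radicals (K : Type*) [Field K] [CharZero K]
    (n ℓ : ℕ) (hn : 2 ≤ n) (hℓ : 1 ≤ ℓ)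
    (a : Fin (n - 1) → K) (ha : ∀ i, a i ≠ 0)
    (α β : K) (hα : α ≠ 0) (hβ : β ≠ 0)
    (f : Polynomial (Polynomial K))
    (hf : f = (∏ i, (X - C (C (a i)))) *
        (X - C (C α * Polynomial.X ^ ℓ + C β)) - 1)
    (ν : ℤ) (νs : Fin (n - 1) → ℤ) (hν : ν ≠ 0)
    (hirr : Irreducible f)
    (hsimple : ∃ ρ : AlgebraicClosure K, ρ ≠ 0 ∧
      ((f.map (Polynomial.evalRingHom (0 : K))).map
        (algebraMap K (AlgebraicClosure K))).rootMultiplicity ρ = 1) :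
    IsThin K 1 {τf : Fin 1 → K |
      ∃ ξ ζ : AlgebraicClosure K,
        Polynomial.aeval ξ (f.map (Polynomial.evalRingHom (τf 0))) = 0 ∧
        ζ ^ ((ℓ : ℤ) * ν) =
          ξ ^ ν * ∏ i, (ξ - algebraMap K (AlgebraicClosure K) (a i)) ^ (νs i) ∧
        Module.finrank (IntermediateField.adjoin K {ξ})
          (IntermediateField.adjoin
            (IntermediateField.adjoin K {ξ} :
              IntermediateField K (AlgebraicClosure K)) {ζ}) < ℓ} := by
  classical
  have hprodm : (∏ i, (X - C (C (a i)) : K[X][X])).Monic :=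
    Polynomial.monic_prod_of_monic _ _ fun i _ => Polynomial.monic_X_sub_C _
  have hfm : f.Monic := by
    rw [hf]
    have h1 := hprodm.mul (Polynomial.monic_X_sub_C (C α * Polynomial.X ^ ℓ + C β))
    apply h1.sub_of_left
    rw [Polynomial.degree_one, Polynomial.degree_eq_natDegree h1.ne_zero,
      hprodm.natDegree_mul (Polynomial.monic_X_sub_C _), Polynomial.natDegree_X_sub_C]
    exact_mod_cast Nat.succ_pos _
  obtain ⟨m, hm, sg, hsg, hsgν⟩ : ∃ m : ℕ, 0 < m ∧ ∃ sg : ℤ, (sg = 1 ∨ sg = -1) ∧ ν * sg = m := by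
    rcases lt_or_gt_of_ne hν with h | h
    · exact ⟨ν.natAbs, by omega, -1, Or.inr rfl, by omega⟩
    · exact ⟨ν.natAbs, by omega, 1, Or.inl rfl, by omega⟩
  let M : ℕ := ∑ i, (νs i).natAbs
  have hM : ∀ i, (νs i).natAbs ≤ M := fun i =>
    Finset.single_le_sum (f := fun i => (νs i).natAbs) (fun _ _ => Nat.zero_le _)
      (Finset.mem_univ i)
  have hμ : ∀ i, ∃ μ : ℕ, (μ : ℤ) = νs i * sg + (M : ℤ) * ((ℓ * m : ℕ) : ℤ) := by
    intro i
    suffices h : 0 ≤ νs i * sg + (M : ℤ) * ((ℓ * m : ℕ) : ℤ) from ⟨_, Int.toNat_of_nonneg h⟩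
    have h1 : M ≤ M * (ℓ * m) := Nat.le_mul_of_pos_right _ (Nat.mul_pos hℓ hm)
    have h2 : (M : ℤ) ≤ (M : ℤ) * ((ℓ * m : ℕ) : ℤ) := by exact_mod_cast h1
    have h3 := hM i
    generalize (M : ℤ) * ((ℓ * m : ℕ) : ℤ) = W at h2 ⊢
    clear h1
    rcases hsg with rfl | rfl <;> omega
  choose μ hμ using hμ
  obtain ⟨R, hR⟩ : ∃ R : K[X], R = Polynomial.X ^ m * ∏ i, (Polynomial.X - C (a i)) ^ μ i :=
    ⟨_, rfl⟩
  obtain ⟨L, hL, φL, x, hinj, hx, hgen⟩ := ThinAux.generic ℓ hℓ a ha α β hα f hfm hf m hm μ R hR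
    hsimple
  have hNpos : 0 < ℓ * m := Nat.mul_pos hℓ hm
  obtain ⟨t, B, hB, hsub⟩ := ThinAux.coreL (k := AlgebraicClosure K) φL hinj f hfm hirr R (ℓ * m) ℓ
    hNpos.ne' x hx hgen
  refine ⟨t, B, hB, Set.Subset.trans ?_ hsub⟩
  rintro τ ⟨ξ, ζ, hξ, hζ, hfin⟩
  have hne : ∀ i, ξ - algebraMap K (AlgebraicClosure K) (a i) ≠ 0 := by
    intro i h0
    have h1 := hξ
    rw [hf] at h1
    simp only [Polynomial.map_sub, Polynomial.map_mul, Polynomial.map_prod, map_sub, map_mul,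
      map_prod, Polynomial.map_one, map_one] at h1
    rw [Finset.prod_eq_zero (Finset.mem_univ i) (by simpa using h0)] at h1
    simp at h1
  let ζ' := ζ * ∏ i, (ξ - algebraMap K (AlgebraicClosure K) (a i)) ^ M
  have hζ'mem : ζ' ∈ IntermediateField.adjoin (IntermediateField.adjoin K {ξ} :
      IntermediateField K (AlgebraicClosure K)) {ζ} := by
    apply mul_mem
    · exact IntermediateField.mem_adjoin_simple_self _ ζ
    · refine prod_mem fun i _ => pow_mem ?_ _
      have h1 : ξ - algebraMap K (AlgebraicClosure K) (a i) ∈ IntermediateField.adjoin K {ξ} :=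
        sub_mem (IntermediateField.mem_adjoin_simple_self K ξ) (algebraMap_mem _ _)
      exact (IntermediateField.adjoin (IntermediateField.adjoin K {ξ} :
        IntermediateField K (AlgebraicClosure K)) {ζ}).algebraMap_mem ⟨_, h1⟩
  have hζ' : ζ' ^ (ℓ * m) = Polynomial.aeval ξ R := by
    have h1 : ζ ^ (ℓ * m) = ξ ^ m *
        ∏ i, (ξ - algebraMap K (AlgebraicClosure K) (a i)) ^ (νs i * sg) := by
      have h2 := congrArg (fun z => z ^ sg) hζ
      simp only [mul_zpow, ← zpow_mul, ← Finset.prod_zpow] at h2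
      rw [mul_assoc, hsgν] at h2
      rw [← zpow_natCast ξ m, ← h2, ← zpow_natCast]
      push_cast
      rfl
    simp only [ζ']
    rw [mul_pow, h1, hR, mul_assoc, ← Finset.prod_pow, ← Finset.prod_mul_distrib]
    simp only [map_mul, map_pow, map_prod, map_sub, Polynomial.aeval_X, Polynomial.aeval_C]
    congr 1
    refine Finset.prod_congr rfl fun i _ => ?_
    rw [← zpow_natCast _ (μ i), hμ i, zpow_add₀ (hne i), ← pow_mul,
      ← zpow_natCast _ (M * (ℓ * m)), Nat.cast_mul M]
  obtain ⟨q, d, hd1, hd2, hq⟩ := ThinAux.reduce ξ ζ ζ' (ℓ * m) ℓ R hζ'mem hζ' hfin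
  exact ⟨ξ, q, d, Algebra.IsIntegral.isIntegral ξ, hd1, hd2, hξ, hq⟩
end

section
/- There exist constants A₀, C > 0, depending only on n and a_1,…,a_{n-1}, such that for every integer a with |a| ≥ A₀ (and a distinct from each a_k): the polynomial f_a has n distinct real roots, which can be labeled ξ_1,…,ξ_{n-1}, ξ so that |ξ_k − a_k| ≤ C·|a|^{−1} for k = 1,…,n−1 and |ξ − a| ≤ C·|a|^{1−n}; in particular, all complex roots of f_a are real, so the number field K_a is totally real. -/
open Polynomial

/-- The Ankeny–Brauer–Chowla polynomial
`f_a(x) = (x−a_1)⋯(x−a_{n-1})(x−a) − 1 ∈ ℤ[x]`. -/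
noncomputable def abcPolyZ (n : ℕ) (a : Fin (n - 1) → ℤ) (b : ℤ) : Polynomial ℤ :=
  (∏ i, (X - C (a i))) * (X - C b) - 1

/-- The Ankeny–Brauer–Chowla polynomial viewed in `ℚ[x]`. -/
noncomputable def abcPolyQ (n : ℕ) (a : Fin (n - 1) → ℤ) (b : ℤ) : Polynomial ℚ :=
  (abcPolyZ n a b).map (Int.castRingHom ℚ)


lemma abc_ivt {ι : Type} [Fintype ι] [DecidableEq ι] (c : ι → ℤ) (k : ι)
    (hc : ∀ j, j ≠ k → c j ≠ c k) (δ : ℝ) (h0 : 0 < δ) (h1 : δ < 1 / 2)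
    (hδ : 1 ≤ δ * ∏ j ∈ Finset.univ.erase k, (|(c j : ℝ) - c k| - 1 / 2)) :
    ∃ x : ℝ, |x - c k| ≤ δ ∧ ∏ j, (x - (c j : ℝ)) = 1 := by
  have hc1 : ∀ j, j ≠ k → (1 : ℝ) ≤ |(c j : ℝ) - c k| := by
    intro j hj
    have : 1 ≤ |c j - c k| := Int.one_le_abs (sub_ne_zero.2 (hc j hj))
    exact_mod_cast this
  let h : ℝ → ℝ := fun x => ∏ j ∈ Finset.univ.erase k, (x - (c j : ℝ))
  have hF : ∀ x : ℝ, ∏ j, (x - (c j : ℝ)) = (x - c k) * h x := fun x =>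
    (Finset.mul_prod_erase Finset.univ (fun j => x - (c j : ℝ)) (Finset.mem_univ k)).symm
  have hb : ∀ x : ℝ, |x - c k| ≤ δ → 1 ≤ δ * |h x| := by
    intro x hx
    refine hδ.trans (mul_le_mul_of_nonneg_left ?_ h0.le)
    simp only [h, Finset.abs_prod]
    refine Finset.prod_le_prod ?_ ?_
    · intro j hj
      have := hc1 j (Finset.ne_of_mem_erase hj)
      linarith
    · intro j hj
      have := abs_sub_le (c j : ℝ) x (c k)
      rw [abs_sub_comm (c j : ℝ) x] at this
      linarith
  have hcont : Continuous fun x : ℝ => ∏ j, (x - (c j : ℝ)) := by fun_prop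
  have hp : 0 < h (c k + δ) * h (c k - δ) := by
    simp only [h, ← Finset.prod_mul_distrib]
    refine Finset.prod_pos ?_
    intro j hj
    have h2 := hc1 j (Finset.ne_of_mem_erase hj)
    have h3 : 1 ≤ ((c j : ℝ) - c k) ^ 2 := by
      rw [← sq_abs]; nlinarith
    nlinarith
  have hz : ∏ j, ((c k : ℝ) - (c j : ℝ)) = 0 := by rw [hF]; simp
  rcases lt_or_ge 0 (h (c k + δ)) with hpos | hneg
  · have := hb (c k + δ) (by simp [abs_of_pos h0])
    rw [abs_of_pos hpos] at this
    have hm : (1 : ℝ) ∈ Set.Icc (∏ j, ((c k : ℝ) - (c j : ℝ))) (∏ j, ((c k : ℝ) + δ - (c j : ℝ))) := by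
      refine ⟨by rw [hz]; norm_num, ?_⟩
      rw [hF]; simpa using this
    obtain ⟨x, hx, hx1⟩ := intermediate_value_Icc (by linarith : (c k : ℝ) ≤ c k + δ)
      hcont.continuousOn hm
    exact ⟨x, by rw [abs_le]; constructor <;> linarith [hx.1, hx.2], hx1⟩
  · have hn2 : h (c k - δ) < 0 := by
      by_contra hh
      nlinarith
    have := hb (c k - δ) (by simp [abs_of_pos h0])
    rw [abs_of_neg hn2] at this
    have hm : (1 : ℝ) ∈ Set.Icc (∏ j, ((c k : ℝ) - (c j : ℝ))) (∏ j, ((c k : ℝ) - δ - (c j : ℝ))) := by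
      refine ⟨by rw [hz]; norm_num, ?_⟩
      rw [hF]
      linarith
    obtain ⟨x, hx, hx1⟩ := intermediate_value_Icc' (by linarith : (c k : ℝ) - δ ≤ c k)
      hcont.continuousOn hm
    exact ⟨x, by rw [abs_le]; constructor <;> linarith [hx.1, hx.2], hx1⟩

lemma abc_aeval {K : Type*} [Field K] [CharZero K] (n : ℕ) (a : Fin (n - 1) → ℤ) (b : ℤ) (x : K) :
    Polynomial.aeval x (abcPolyZ n a b) = (∏ i, (x - (a i : K))) * (x - b) - 1 := by
  simp [abcPolyZ, map_prod]

lemma abc_root_hom (p : ℤ[X]) (q : ℚ[X]) (hq : q = p.map (Int.castRingHom ℚ))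
    (φ : AdjoinRoot q →+* ℂ) : Polynomial.aeval (φ (AdjoinRoot.root q)) p = 0 := by
  have h := congrArg φ (AdjoinRoot.eval₂_root q)
  rw [Polynomial.hom_eval₂, map_zero] at h
  generalize φ.comp (AdjoinRoot.of q) = ψ at h
  generalize φ (AdjoinRoot.root q) = w at h ⊢
  rw [hq, eval₂_map] at h
  rw [aeval_def, ← h]
  congr 1
  exact RingHom.ext_int _ _

lemma abc_complex (n : ℕ) (hn : 3 ≤ n) (a : Fin (n - 1) → ℤ) (b : ℤ)
    (x : Option (Fin (n - 1)) → ℝ) (hx : Function.Injective x)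
    (hr : ∀ i, Polynomial.aeval (x i) (abcPolyZ n a b) = 0) (z : ℂ)
    (hz : Polynomial.aeval z (abcPolyZ n a b) = 0) : z.im = 0 := by
  by_contra him
  let p : ℂ[X] := (abcPolyZ n a b).map (algebraMap ℤ ℂ)
  have hdeg : p.natDegree = n := by
    have hm : (∏ i, (X - C (a i) : ℤ[X])).Monic := monic_prod_of_monic _ _ fun i _ => monic_X_sub_C _
    have hm2 := hm.mul (monic_X_sub_C b)
    have hd : ((∏ i, (X - C (a i) : ℤ[X])) * (X - C b)).natDegree = n := by
      rw [hm.natDegree_mul (monic_X_sub_C b), natDegree_X_sub_C,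
        natDegree_prod_of_monic _ _ fun i _ => monic_X_sub_C _]
      simp only [natDegree_X_sub_C, Finset.sum_const, Finset.card_univ, Fintype.card_fin,
        smul_eq_mul]
      omega
    have hd2 : (abcPolyZ n a b).natDegree = n := by
      rw [abcPolyZ, natDegree_sub_eq_left_of_natDegree_lt, hd]
      rw [hd]; simp; omega
    rw [← hd2]
    exact natDegree_map_eq_of_injective (RingHom.injective_int _) _
  have hp0 : p = 0 := by
    let g : Option (Option (Fin (n - 1))) → ℂ := fun o => o.elim z (fun i => (x i : ℂ))
    have hg : Function.Injective g := by
      intro i j hij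
      rcases i with _ | i <;> rcases j with _ | j <;> simp only [g, Option.elim] at hij
      · rfl
      · exact absurd (by rw [hij]; simp) him
      · exact absurd (by rw [← hij]; simp) him
      · rw [hx (Complex.ofReal_injective hij)]
    refine Polynomial.eq_zero_of_natDegree_lt_card_of_eval_eq_zero p hg ?_ ?_
    · intro i
      rw [eval_map_algebraMap]
      rcases i with _ | i
      · exact hz
      · have := congrArg (algebraMap ℝ ℂ) (hr i)
        rw [← Polynomial.aeval_algebraMap_apply, map_zero] at this
        exact this
    · rw [hdeg]; simp; omega
  rw [hp0] at hdeg
  simp at hdeg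
  omega

/-- **Proposition 4.1(1).**  For `|a|` sufficiently large, `f_a` has `n` distinct real
roots `ξ_1,…,ξ_{n-1},ξ` with `|ξ_k − a_k| ≤ C|a|^{-1}` and `|ξ − a| ≤ C|a|^{1-n}`;
in particular all complex roots of `f_a` are real, and the field
`K_a = ℚ[x]/(f_a)` is totally real (every embedding into `ℂ` has real image). -/
theorem abc_roots_real (n : ℕ) (hn : 3 ≤ n)
    (a : Fin (n - 1) → ℤ) (hinj : Function.Injective a) :
    ∃ A₀ C : ℝ, 0 < A₀ ∧ 0 < C ∧
      ∀ b : ℤ, (∀ i, b ≠ a i) → A₀ ≤ |(b : ℝ)| →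
        (∃ (ξ : Fin (n - 1) → ℝ) (ξlast : ℝ),
          (∀ i, Polynomial.aeval (ξ i) (abcPolyZ n a b) = 0) ∧
          Polynomial.aeval ξlast (abcPolyZ n a b) = 0 ∧
          Function.Injective ξ ∧ (∀ i, ξ i ≠ ξlast) ∧
          (∀ i, |ξ i - (a i : ℝ)| ≤ C * |(b : ℝ)|⁻¹) ∧
          |ξlast - (b : ℝ)| ≤ C * |(b : ℝ)| ^ (1 - (n : ℤ))) ∧
        (∀ z : ℂ, Polynomial.aeval z (abcPolyZ n a b) = 0 → z.im = 0) ∧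
        (∀ (φ : AdjoinRoot (abcPolyQ n a b) →+* ℂ)
          (y : AdjoinRoot (abcPolyQ n a b)), (φ y).im = 0) := by
  set D : ℝ := 2 ^ (n - 1) with hD
  have hD0 : 0 < D := by positivity
  have hD1 : 1 ≤ D := one_le_pow₀ (by norm_num)
  have hS : ∀ i, |(a i : ℝ)| ≤ ∑ i, |(a i : ℝ)| := fun i =>
    Finset.single_le_sum (f := fun i => |(a i : ℝ)|) (fun _ _ => abs_nonneg _) (Finset.mem_univ i)
  have hS0 : 0 ≤ ∑ i, |(a i : ℝ)| := Finset.sum_nonneg fun _ _ => abs_nonneg _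
  refine ⟨2 * ∑ i, |(a i : ℝ)| + 1 + 4 * D, D, by positivity, hD0, ?_⟩
  intro b hb hA
  have hB0 : 0 < |(b : ℝ)| := by linarith
  set B : ℝ := |(b : ℝ)| with hB
  let c : Option (Fin (n - 1)) → ℤ := fun o => o.elim b a
  have hcinj : Function.Injective c := by
    intro i j hij
    rcases i with _ | i <;> rcases j with _ | j <;> simp only [c, Option.elim] at hij
    · rfl
    · exact absurd hij (hb j)
    · exact absurd hij.symm (hb i)
    · rw [hinj hij]
  have hc1 : ∀ i j, i ≠ j → (1 : ℝ) ≤ |(c i : ℝ) - c j| := by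
    intro i j hij
    have : 1 ≤ |c i - c j| := Int.one_le_abs (sub_ne_zero.2 (hcinj.ne hij))
    exact_mod_cast this
  have hfar : ∀ i, B / 2 ≤ |(b : ℝ) - a i| - 1 / 2 := by
    intro i
    have := abs_sub_abs_le_abs_sub (b : ℝ) (a i)
    have := hS i
    linarith
  let δ : Option (Fin (n - 1)) → ℝ := fun o => o.elim (D * B ^ (1 - (n : ℤ))) (fun _ => D * B⁻¹)
  have hδ0 : ∀ o, 0 < δ o := by
    intro o
    rcases o with _ | i <;> simp only [δ, Option.elim] <;> positivity
  have hδa : D * B⁻¹ < 1 / 2 := by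
    rw [← div_eq_mul_inv, div_lt_iff₀ hB0]; linarith
  have hδ1 : ∀ o, δ o < 1 / 2 := by
    intro o
    rcases o with _ | i <;> simp only [δ, Option.elim]
    · refine lt_of_le_of_lt (mul_le_mul_of_nonneg_left ?_ hD0.le) hδa
      rw [← zpow_neg_one]
      exact zpow_le_zpow_right₀ (by linarith) (by omega)
    · exact hδa
  have key : ∀ o, ∃ x : ℝ, |x - c o| ≤ δ o ∧ ∏ j, (x - (c j : ℝ)) = 1 := by
    intro o
    refine abc_ivt c o (fun j hj => hcinj.ne hj) _ (hδ0 o) (hδ1 o) ?_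
    rcases o with _ | i
    · have h1 : (B / 2) ^ (n - 1) ≤
          ∏ j ∈ Finset.univ.erase none, (|(c j : ℝ) - c none| - 1 / 2) := by
        have : (Finset.univ.erase (none : Option (Fin (n - 1)))).card = n - 1 := by simp
        refine le_trans (le_of_eq ((congrArg ((B / 2) ^ ·) this).symm.trans
          (Finset.prod_const (B / 2)).symm)) ?_
        refine Finset.prod_le_prod (fun _ _ => by positivity) ?_
        intro j hj
        rcases j with _ | j
        · simp at hj
        · simp only [c, Option.elim]
          rw [abs_sub_comm]; exact hfar j
      refine le_trans ?_ (mul_le_mul_of_nonneg_left h1 (hδ0 _).le)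
      simp only [δ, Option.elim]
      have : (1 - (n : ℤ)) = -((n - 1 : ℕ) : ℤ) := by omega
      rw [this, zpow_neg, zpow_natCast, div_pow, hD]
      apply le_of_eq
      field_simp
    · have hmem : (none : Option (Fin (n - 1))) ∈ Finset.univ.erase (some i) := by simp
      rw [← Finset.mul_prod_erase _ _ hmem]
      have h1 : (1 / 2 : ℝ) ^ (n - 2) ≤
          ∏ j ∈ (Finset.univ.erase (some i)).erase none, (|(c j : ℝ) - c (some i)| - 1 / 2) := by
        have : ((Finset.univ.erase (some i)).erase none).card = n - 2 := by
          rw [Finset.card_erase_of_mem hmem, Finset.card_erase_of_mem (Finset.mem_univ _)]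
          simp; omega
        rw [← this, ← Finset.prod_const]
        refine Finset.prod_le_prod (fun _ _ => by positivity) ?_
        intro j hj
        have := hc1 j (some i) (Finset.ne_of_mem_erase (Finset.mem_of_mem_erase hj))
        linarith
      have h2 : B / 2 ≤ |(c none : ℝ) - c (some i)| - 1 / 2 := hfar i
      have h3 := mul_le_mul h2 h1 (by positivity) (le_trans (by positivity) h2)
      refine le_trans ?_ (mul_le_mul_of_nonneg_left h3 (hδ0 _).le)
      simp only [δ, Option.elim]
      have : n - 1 = (n - 2) + 1 := by omega
      rw [hD, this, pow_succ, div_pow, one_pow]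
      apply le_of_eq
      field_simp
  choose x hx1 hx2 using key
  have hxinj : Function.Injective x := by
    intro i j hij
    by_contra hne
    have h1 := hc1 i j hne
    have h2 := abs_sub_le (c i : ℝ) (x i) (c j)
    have h3 := hx1 i
    have h4 := hx1 j
    rw [← hij] at h4
    rw [abs_sub_comm (c i : ℝ) (x i)] at h2
    linarith [hδ1 i, hδ1 j]
  have hroot : ∀ o, Polynomial.aeval (x o) (abcPolyZ n a b) = 0 := by
    intro o
    have := hx2 o
    rw [Fintype.prod_option] at this
    simp only [c, Option.elim] at this
    rw [abc_aeval, mul_comm, this, sub_self]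
  have hcomplex := abc_complex n hn a b x hxinj hroot
  refine ⟨⟨fun i => x (some i), x none, fun i => hroot _, hroot _, ?_, ?_, ?_, ?_⟩, hcomplex, ?_⟩
  · intro i j hij
    exact Option.some_injective _ (hxinj hij)
  · intro i hi
    exact absurd (hxinj hi) (by simp)
  · intro i; exact hx1 (some i)
  · exact hx1 none
  · intro φ y
    have hr : (φ (AdjoinRoot.root (abcPolyQ n a b))).im = 0 := by
      apply hcomplex
      exact abc_root_hom _ _ rfl φ
    have him : ∀ w : ℂ, w.im = 0 ↔ w ∈ Complex.ofRealHom.range := by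
      intro w
      constructor
      · intro h; exact ⟨w.re, Complex.ext (by simp) (by simp [h])⟩
      · rintro ⟨r, rfl⟩; simp
    rw [him] at hr ⊢
    induction y using AdjoinRoot.induction_on with
    | ih p =>
      induction p using Polynomial.induction_on' with
      | add p q hp hq => rw [map_add, map_add]; exact add_mem hp hq
      | monomial m q =>
        rw [← C_mul_X_pow_eq_monomial, map_mul, map_mul, map_pow, map_pow, AdjoinRoot.mk_X,
          AdjoinRoot.mk_C]
        refine mul_mem ?_ (pow_mem hr m)
        refine ⟨(q : ℝ), ?_⟩
        have := map_ratCast (φ.comp (AdjoinRoot.of (abcPolyQ n a b))) q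
        simp only [RingHom.comp_apply, Rat.cast_id] at this
        rw [this]; simp
end

section
/- There exist constants A₀, C > 0, depending only on n and a_1,…,a_{n-1}, such that for every integer a with |a| ≥ A₀ (and a distinct from each a_k), the absolute value of the discriminant of the number field K_a is at most C·|a|^{2(n−1)}. -/
open Polynomial

/-- `ℚ[x]/(p)` is a number field when `p` is irreducible. -/
noncomputable instance (p : Polynomial ℚ) [h : Fact (Irreducible p)] :
    NumberField (AdjoinRoot p) := by
  haveI : CharZero (AdjoinRoot p) :=
    charZero_of_injective_algebraMap (algebraMap ℚ (AdjoinRoot p)).injective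
  haveI : FiniteDimensional ℚ (AdjoinRoot p) :=
    Module.Finite.of_basis (AdjoinRoot.powerBasis h.out.ne_zero).basis
  exact ⟨⟩

open Module in
theorem aux_discr_le {K : Type*} [Field K] [NumberField K] {ι : Type*} [Fintype ι] [DecidableEq ι]
    (b : Basis ι ℚ K) (hb : ∀ i, IsIntegral ℤ (b i)) :
    |(NumberField.discr K : ℚ)| ≤ |Algebra.discr ℚ b| := by
  classical
  set e := (NumberField.integralBasis K).indexEquiv b with he
  set B := (NumberField.integralBasis K).reindex e with hB
  have h1 : Algebra.discr ℚ b = (B.toMatrix b).det ^ 2 * Algebra.discr ℚ B := by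
    rw [← Algebra.discr_of_matrix_vecMul, Basis.toMatrix_map_vecMul]
  have h2 : (NumberField.discr K : ℚ) = Algebra.discr ℚ B := by
    rw [NumberField.coe_discr, hB, Basis.coe_reindex, Algebra.discr_reindex]
  have h3 : ∃ P : Matrix ι ι ℤ, B.toMatrix b = P.map (Int.castRingHom ℚ) := by
    refine ⟨Matrix.of fun i j => (NumberField.RingOfIntegers.basis K).repr ⟨b j, hb j⟩ (e.symm i), ?_⟩
    ext i j
    simp only [Basis.toMatrix_apply, Matrix.map_apply, Matrix.of_apply, hB, Basis.repr_reindex_apply]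
    exact NumberField.integralBasis_repr_apply K ⟨b j, hb j⟩ (e.symm i)
  obtain ⟨P, hP⟩ := h3
  have h4 : (B.toMatrix b).det = (P.det : ℚ) := by
    rw [hP]; exact ((Int.castRingHom ℚ).map_det P).symm
  have h5 : P.det ≠ 0 := by
    intro h
    apply Algebra.discr_not_zero_of_basis ℚ b
    rw [h1, h4, h]; simp
  have h6 : (1 : ℚ) ≤ (P.det : ℚ) ^ 2 := by
    have : 1 ≤ P.det ^ 2 := by
      have := sq_pos_of_ne_zero h5
      omega
    exact_mod_cast this
  rw [h1, h4, h2, abs_mul, abs_of_nonneg (sq_nonneg (P.det : ℚ))]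
  exact le_mul_of_one_le_left (abs_nonneg _) h6

theorem aux_discr_mahler {K : Type*} [Field K] [NumberField K] (pb : PowerBasis ℚ K) :
    ((|Algebra.discr ℚ pb.basis| : ℚ) : ℝ) ≤ ((pb.dim.factorial : ℝ) *
      ((minpoly ℚ pb.gen).map (algebraMap ℚ ℂ)).mahlerMeasure ^ (pb.dim - 1)) ^ 2 := by
  classical
  have hcard : Fintype.card (Fin pb.dim) = Fintype.card (K →ₐ[ℚ] ℂ) := by
    rw [AlgHom.card, Fintype.card_fin, pb.finrank]
  let e := Fintype.equivOfCardEq hcard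
  have h := Algebra.discr_eq_det_embeddingsMatrixReindex_pow_two ℚ ℂ pb.basis e
  have hM : ((minpoly ℚ pb.gen).map (algebraMap ℚ ℂ)).mahlerMeasure
      = ∏ i, max 1 ‖e i pb.gen‖ := by
    have hmon : (minpoly ℚ pb.gen).Monic := minpoly.monic pb.isIntegral_gen
    have hnd : ((minpoly ℚ pb.gen).map (algebraMap ℚ ℂ)).roots.Nodup :=
      nodup_roots ((minpoly.irreducible pb.isIntegral_gen).separable.map)
    have hinj : Function.Injective fun i => e i pb.gen := fun i j hij =>
      e.injective (pb.algHom_ext hij)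
    have hset : Finset.univ.image (fun i => e i pb.gen) =
        ((minpoly ℚ pb.gen).map (algebraMap ℚ ℂ)).roots.toFinset := by
      apply Finset.eq_of_subset_of_card_le
      · intro z hz
        obtain ⟨i, -, rfl⟩ := Finset.mem_image.1 hz
        rw [Multiset.mem_toFinset, mem_roots (hmon.map _).ne_zero, IsRoot, eval_map,
          ← aeval_def, aeval_algHom_apply, minpoly.aeval, map_zero]
      · rw [Finset.card_image_of_injective _ hinj, Multiset.toFinset_card_of_nodup hnd]
        refine (card_roots' _).trans ?_
        rw [natDegree_map, pb.natDegree_minpoly]; simp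
    rw [mahlerMeasure_eq_leadingCoeff_mul_prod_roots, (hmon.map _).leadingCoeff, norm_one, one_mul]
    have : ((minpoly ℚ pb.gen).map (algebraMap ℚ ℂ)).roots =
      ((minpoly ℚ pb.gen).map (algebraMap ℚ ℂ)).roots.toFinset.val := by
      rw [Multiset.toFinset_val, hnd.dedup]
    rw [this, ← hset]
    change ∏ z ∈ Finset.univ.image (fun i => e i pb.gen), max 1 ‖z‖ = _
    rw [Finset.prod_image (fun i _ j _ hij => hinj hij)]
  have h2 : ((|Algebra.discr ℚ pb.basis| : ℚ) : ℝ) =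
      ‖(Algebra.embeddingsMatrixReindex ℚ ℂ pb.basis e).det‖ ^ 2 := by
    rw [← norm_pow, ← h]; simp
  rw [h2, hM]
  gcongr
  rw [Matrix.det_apply]
  refine (norm_sum_le _ _).trans ?_
  have : ∀ σ ∈ (Finset.univ : Finset (Equiv.Perm (Fin pb.dim))),
    ‖Equiv.Perm.sign σ • ∏ i, Algebra.embeddingsMatrixReindex ℚ ℂ pb.basis e (σ i) i‖ ≤
      (∏ i, max 1 ‖e i pb.gen‖) ^ (pb.dim - 1) := by
    intro σ _
    have : ‖Equiv.Perm.sign σ • ∏ i, Algebra.embeddingsMatrixReindex ℚ ℂ pb.basis e (σ i) i‖ =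
      ∏ i, ‖e i pb.gen‖ ^ ((σ i : Fin pb.dim) : ℕ) := by
      rcases Int.units_eq_one_or (Equiv.Perm.sign σ) with h | h <;>
      simp [h, Algebra.embeddingsMatrixReindex, Algebra.embeddingsMatrix]
    rw [this, ← Finset.prod_pow]
    refine Finset.prod_le_prod (fun _ _ => by positivity) fun i _ => ?_
    calc ‖e i pb.gen‖ ^ ((σ i : Fin pb.dim) : ℕ) ≤ (max 1 ‖e i pb.gen‖) ^ ((σ i : Fin pb.dim) : ℕ) := by
          gcongr; exact le_max_right _ _
      _ ≤ _ := pow_le_pow_right₀ (le_max_left _ _) (by have := (σ i).2; omega)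
  refine (Finset.sum_le_sum this).trans ?_
  simp [Fintype.card_perm]

theorem aux_mahler (n : ℕ) (hn : 1 ≤ n) (a : Fin (n - 1) → ℤ) : ∃ D : ℝ, 0 < D ∧ ∀ b : ℤ, 1 ≤ |(b : ℝ)| →
    ((abcPolyQ n a b).map (algebraMap ℚ ℂ)).mahlerMeasure ≤ D * |(b : ℝ)| := by
  set P : ℂ[X] := ∏ i, (X - C (a i : ℂ)) with hP
  let S : ℂ[X] → ℝ := fun p => ∑ i ∈ Finset.range (n + 1), ‖p.coeff i‖
  have hS : ∀ p, 0 ≤ S p := fun p => Finset.sum_nonneg fun _ _ => norm_nonneg _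
  refine ⟨S (P * X - 1) + S P + 1, by have := hS (P * X - 1); have := hS P; linarith, ?_⟩
  intro b hb
  have hf : (abcPolyQ n a b).map (algebraMap ℚ ℂ) = (P * X - 1) - C (b : ℂ) * P := by
    simp [abcPolyQ, abcPolyZ, hP, Polynomial.map_prod, Polynomial.map_map]
    ring
  rw [hf]
  have hdeg : ((P * X - 1) - C (b : ℂ) * P).natDegree < n + 1 := by
    have hPd : P.natDegree ≤ n - 1 := by
      rw [hP, natDegree_prod_of_monic _ _ (fun i _ => monic_X_sub_C _)]
      simp only [natDegree_X_sub_C]; simp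
    have h1 : (P * X - 1).natDegree ≤ n - 1 + 1 := by
      refine (natDegree_sub_le _ _).trans (max_le ?_ (by simp))
      exact natDegree_mul_le.trans (by simp; omega)
    have h2 : (C (b : ℂ) * P).natDegree ≤ n - 1 + 1 := (natDegree_C_mul_le _ _).trans (by omega)
    have := (natDegree_sub_le (P * X - 1) (C (b : ℂ) * P)).trans (max_le h1 h2)
    omega
  refine (mahlerMeasure_le_sum_norm_coeff _).trans ?_
  rw [sum_over_range' _ (by simp) _ hdeg]
  calc _ ≤ ∑ i ∈ Finset.range (n + 1), (‖(P * X - 1).coeff i‖ + |(b : ℝ)| * ‖P.coeff i‖) := by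
        refine Finset.sum_le_sum fun i _ => ?_
        rw [coeff_sub, coeff_C_mul]
        refine (norm_sub_le _ _).trans ?_
        simp
    _ = S (P * X - 1) + |(b : ℝ)| * S P := by
        rw [Finset.sum_add_distrib, ← Finset.mul_sum]
    _ ≤ _ := by nlinarith [hS (P * X - 1), hS P]

theorem aux_key {K : Type*} [Field K] [NumberField K] (pb : PowerBasis ℚ K) (p : ℤ[X])
    (hp : p.Monic) (hirr : Irreducible (p.map (Int.castRingHom ℚ)))
    (h0 : eval₂ (Int.castRingHom K) pb.gen p = 0) (n : ℕ) (hn : p.natDegree = n) :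
    |(NumberField.discr K : ℝ)| ≤ ((n.factorial : ℝ) *
      ((p.map (Int.castRingHom ℚ)).map (algebraMap ℚ ℂ)).mahlerMeasure ^ (n - 1)) ^ 2 := by
  have hmin : minpoly ℚ pb.gen = p.map (Int.castRingHom ℚ) := by
    refine (minpoly.eq_of_irreducible_of_monic hirr ?_ (hp.map _)).symm
    rw [aeval_def, eval₂_map]
    rw [RingHom.ext_int ((algebraMap ℚ K).comp (Int.castRingHom ℚ)) (Int.castRingHom K)]
    exact h0
  have hdim : pb.dim = n := by
    rw [← pb.natDegree_minpoly, hmin, hp.natDegree_map, hn]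
  have hint : IsIntegral ℤ pb.gen := ⟨p, hp, by
    rw [RingHom.ext_int (algebraMap ℤ K) (Int.castRingHom K)]
    exact h0⟩
  have h1 := aux_discr_le pb.basis (fun i => by rw [pb.basis_eq_pow]; exact hint.pow _)
  have h2 := aux_discr_mahler pb
  have h1' : |(NumberField.discr K : ℝ)| ≤ ((|Algebra.discr ℚ pb.basis| : ℚ) : ℝ) := by
    exact_mod_cast (Rat.cast_le (K := ℝ)).2 h1
  have h3 := h1'.trans h2
  rwa [hmin, hdim] at h3

theorem abc_discr_bound (n : ℕ) (hn : 3 ≤ n)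
    (a : Fin (n - 1) → ℤ) (hinj : Function.Injective a) :
    ∃ A₀ C : ℝ, 0 < A₀ ∧ 0 < C ∧
      ∀ b : ℤ, (∀ i, b ≠ a i) → A₀ ≤ |(b : ℝ)| →
        ∀ [Fact (Irreducible (abcPolyQ n a b))],
          |(NumberField.discr (AdjoinRoot (abcPolyQ n a b)) : ℝ)| ≤
            C * |(b : ℝ)| ^ (2 * (n - 1)) := by
  obtain ⟨D, hD, hM⟩ := aux_mahler n (by omega) a
  refine ⟨1, (n.factorial * D ^ (n - 1)) ^ 2, one_pos, by positivity, ?_⟩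
  intro b _ hb hirr
  have hprod : (∏ i, (X - C (a i)) : ℤ[X]).Monic := monic_prod_of_monic _ _ fun i _ => monic_X_sub_C _
  have hmul : ((∏ i, (X - C (a i))) * (X - C b) : ℤ[X]).Monic := hprod.mul (monic_X_sub_C _)
  have hdeg0 : ((∏ i, (X - C (a i))) * (X - C b) : ℤ[X]).natDegree = n := by
    rw [hprod.natDegree_mul (monic_X_sub_C _), natDegree_prod_of_monic _ _ (fun i _ => monic_X_sub_C _)]
    simp only [natDegree_X_sub_C]; simp; omega
  have hlt : (1 : ℤ[X]).degree < ((∏ i, (X - C (a i))) * (X - C b) : ℤ[X]).degree := by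
    rw [degree_eq_natDegree hmul.ne_zero, hdeg0, degree_one]
    exact_mod_cast (by omega : 0 < n)
  have hmonZ : (abcPolyZ n a b).Monic := hmul.sub_of_left hlt
  have hdegZ : (abcPolyZ n a b).natDegree = n := by
    rw [abcPolyZ, natDegree_eq_of_degree_eq (degree_sub_eq_left_of_degree_lt hlt), hdeg0]
  have h0 : eval₂ (Int.castRingHom (AdjoinRoot (abcPolyQ n a b)))
      (AdjoinRoot.powerBasis hirr.out.ne_zero).gen (abcPolyZ n a b) = 0 := by
    rw [AdjoinRoot.powerBasis_gen]
    have h := AdjoinRoot.eval₂_root (abcPolyQ n a b)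
    have h' := (eval₂_map (p := abcPolyZ n a b) (Int.castRingHom ℚ)
      (AdjoinRoot.of (abcPolyQ n a b)) (AdjoinRoot.root (abcPolyQ n a b))).symm.trans h
    rw [RingHom.ext_int ((AdjoinRoot.of (abcPolyQ n a b)).comp (Int.castRingHom ℚ))
      (Int.castRingHom _)] at h'
    exact h'
  have h2 := aux_key (K := AdjoinRoot (abcPolyQ n a b)) (AdjoinRoot.powerBasis hirr.out.ne_zero)
    (abcPolyZ n a b) hmonZ hirr.out h0 n hdegZ
  refine h2.trans ?_
  have hM' := hM b hb
  rw [abcPolyQ] at hM'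
  calc _ ≤ ((n.factorial : ℝ) * (D * |(b : ℝ)|) ^ (n - 1)) ^ 2 := by
        have := mahlerMeasure_nonneg
          (((abcPolyZ n a b).map (Int.castRingHom ℚ)).map (algebraMap ℚ ℂ))
        gcongr
    _ = _ := by ring
end

section
/- There exists a constant A₀ > 0, depending only on n and a_1,…,a_{n-1}, such that for every integer a with |a| ≥ A₀ (and a distinct from each a_k): the elements ξ−a_1, …, ξ−a_{n-1} are units of the ring of integers of K_a and are multiplicatively independent; consequently, the subgroup of the unit group of the ring of integers of K_a generated by −1 and ξ−a_1, …, ξ−a_{n-1} has finite index. -/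
open Polynomial

open NumberField

section
open NumberField.Units NumberField.Units.dirichletUnitTheorem

lemma abc_aux_indep {K : Type*} [Field K] [NumberField K] {ι : Type*} [Fintype ι] [DecidableEq ι]
    (u : ι → (𝓞 K)ˣ) (w : ι → InfinitePlace K)
    (hcard : Module.finrank ℚ K ≤ Fintype.card ι + 1)
    (hdom : ∀ j, ∑ i ∈ Finset.univ.erase j, |Real.log (w j (u i : K))|
      < |Real.log (w j (u j : K))|) :
    (∀ m : ι → ℤ, (∏ i, (u i) ^ (m i)) = 1 → ∀ i, m i = 0) ∧
      (Subgroup.closure (Set.range u)).FiniteIndex := by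
  classical
  set A : Matrix ι ι ℝ := Matrix.of fun j i => Real.log (w j (u i : K)) with hA
  have hdet : A.det ≠ 0 := det_ne_zero_of_sum_row_lt_diag (by simpa [hA] using hdom)
  have hli : LinearIndependent ℝ (fun i ↦ logEmbedding K (Additive.ofMul (u i))) := by
    rw [Fintype.linearIndependent_iff]
    intro g hg
    have hw : ∀ v : InfinitePlace K, ∑ i, Real.log (v (u i : K)) * g i = 0 := by
      intro v
      have hcomp : ∀ v : {v : InfinitePlace K // v ≠ w₀},
          ∑ i, g i * logEmbedding K (Additive.ofMul (u i)) v = 0 := by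
        intro v
        have := congrFun hg v
        simpa only [Finset.sum_apply, Pi.smul_apply, smul_eq_mul, Pi.zero_apply] using this
      have hm : (InfinitePlace.mult v : ℝ) ≠ 0 := InfinitePlace.mult_coe_ne_zero
      suffices h : (InfinitePlace.mult v : ℝ) * ∑ i, Real.log (v (u i : K)) * g i = 0 from
        (mul_eq_zero.mp h).resolve_left hm
      by_cases hv : v = w₀
      · subst hv
        have h1 : ∑ i, g i * ∑ v, logEmbedding K (Additive.ofMul (u i)) v = 0 := by
          simp_rw [Finset.mul_sum]
          rw [Finset.sum_comm]
          exact Finset.sum_eq_zero fun v _ => hcomp v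
        simp_rw [sum_logEmbedding_component] at h1
        rw [Finset.mul_sum, ← neg_eq_zero, ← Finset.sum_neg_distrib, ← h1]
        exact Finset.sum_congr rfl fun i _ => by ring
      · have h1 := hcomp ⟨v, hv⟩
        simp_rw [logEmbedding_component] at h1
        rw [Finset.mul_sum, ← h1]
        exact Finset.sum_congr rfl fun i _ => by ring
    have hmul : A.mulVec g = 0 := by
      funext j
      simpa [hA, Matrix.mulVec, dotProduct] using hw (w j)
    exact congrFun (Matrix.eq_zero_of_mulVec_eq_zero hdet hmul)
  refine ⟨?_, ?_⟩
  · intro m hm i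
    have h1 : ∑ i, (m i : ℝ) • logEmbedding K (Additive.ofMul (u i)) = 0 := by
      have := congrArg (fun x => logEmbedding K (Additive.ofMul x)) hm
      simp only [ofMul_prod, ofMul_zpow, map_sum, map_zsmul, ofMul_one, map_zero] at this
      rw [← this]
      exact Finset.sum_congr rfl fun i _ => by rw [Int.cast_smul_eq_zsmul]
    exact_mod_cast (Fintype.linearIndependent_iff.mp hli) (fun i => (m i : ℝ)) h1 i
  · have h1 : Fintype.card ι ≤ rank K := by
      have := hli.fintype_card_le_finrank
      rwa [NumberField.Units.finrank_eq_rank] at this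
    have h2 : Fintype.card (InfinitePlace K) ≤ Module.finrank ℚ K := by
      rw [← Embeddings.card K ℂ]
      exact Fintype.card_le_of_surjective (InfinitePlace.mk (K := K)) fun w =>
        ⟨w.embedding, InfinitePlace.mk_embedding w⟩
    have h3 : Fintype.card ι = rank K := by
      have : rank K = Fintype.card (InfinitePlace K) - 1 := rfl
      omega
    let e : Fin (rank K) ≃ ι := (Fintype.equivFinOfCardEq h3).symm
    have h4 : IsMaxRank (u ∘ e) := hli.comp e e.injective
    have h5 := isMaxRank_iff_closure_finiteIndex.mp h4
    rwa [e.surjective.range_comp] at h5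

lemma abc_aux_log {y M : ℝ} (h1 : 1 / 2 ≤ y) (h2 : y ≤ M) : |Real.log y| ≤ M + 2 := by
  have hy : 0 < y := by linarith
  have h3 := Real.log_le_sub_one_of_pos hy
  have h4 := Real.one_sub_inv_le_log_of_pos hy
  have h5 : y⁻¹ ≤ 2 := by
    rw [inv_le_comm₀ hy (by norm_num)]; linarith
  rw [abs_le]; constructor <;> linarith

lemma abc_aux_root {ι : Type*} [Fintype ι] [DecidableEq ι] (a : ι → ℤ)
    (hinj : Function.Injective a) :
    ∃ A₀ : ℝ, 0 < A₀ ∧ ∀ b : ℤ, A₀ ≤ |(b : ℝ)| → ∀ j, ∃ θ : ℝ,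
      (∏ i, (θ - a i)) * (θ - b) = 1 ∧
      ∑ i ∈ Finset.univ.erase j, |Real.log (|θ - a i|)| < |Real.log (|θ - a j|)| := by
  set N := Fintype.card ι
  set B : ℝ := ∑ j, ∑ i, (|(a j : ℝ) - a i| + 3) with hB
  have hB0 : 0 ≤ B := Finset.sum_nonneg fun j _ => Finset.sum_nonneg fun i _ => by positivity
  refine ⟨2 ^ N * (Real.exp B + 2) + ∑ j, |(a j : ℝ)| + 1, by positivity, ?_⟩
  intro b hb j
  have hE := Real.exp_pos B
  have haj : |(a j : ℝ)| ≤ ∑ j, |(a j : ℝ)| :=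
    Finset.single_le_sum (f := fun j => |(a j : ℝ)|) (fun i _ => abs_nonneg _) (Finset.mem_univ j)
  have hfar : ∀ θ : ℝ, |θ - a j| ≤ 1 / 2 → 2 ^ N * (Real.exp B + 2) < |θ - b| := by
    intro θ hθ
    have h1 : |(b : ℝ)| ≤ |θ - b| + |θ - a j| + |(a j : ℝ)| := by
      have : (b : ℝ) = -(θ - b) + (θ - a j) + a j := by ring
      calc |(b : ℝ)| = |-(θ - b) + (θ - a j) + a j| := by rw [← this]
        _ ≤ |-(θ - b)| + |θ - a j| + |(a j : ℝ)| := abs_add_three _ _ _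
        _ = _ := by rw [abs_neg]
    linarith
  have hint : ∀ i ∈ Finset.univ.erase j, 1 ≤ |(a j : ℝ) - a i| := by
    intro i hi
    have hne : a j - a i ≠ 0 := sub_ne_zero.mpr fun h => (Finset.ne_of_mem_erase hi) (hinj h).symm
    exact_mod_cast Int.one_le_abs hne
  have hnear : ∀ θ : ℝ, |θ - a j| ≤ 1 / 2 → ∀ i ∈ Finset.univ.erase j,
      1 / 2 ≤ |θ - a i| ∧ |θ - a i| ≤ |(a j : ℝ) - a i| + 1 := by
    intro θ hθ i hi
    have h0 := hint i hi
    have h1 := abs_sub_le (a j : ℝ) θ (a i)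
    have h2 := abs_sub_le θ (a j : ℝ) (a i)
    rw [abs_sub_comm (a j : ℝ) θ] at h1
    constructor <;> linarith
  have hQ : ∀ θ : ℝ, |θ - a j| ≤ 1 / 2 → 1 ≤ 2 ^ N * ∏ i ∈ Finset.univ.erase j, |θ - a i| := by
    intro θ hθ
    have h1 : (1 / 2 : ℝ) ^ (Finset.univ.erase j).card ≤ ∏ i ∈ Finset.univ.erase j, |θ - a i| := by
      rw [← Finset.prod_const]
      exact Finset.prod_le_prod (fun _ _ => by norm_num) fun i hi => (hnear θ hθ i hi).1
    have h2 : (1 / 2 : ℝ) ^ N ≤ (1 / 2 : ℝ) ^ (Finset.univ.erase j).card :=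
      pow_le_pow_of_le_one (by norm_num) (by norm_num)
        (Finset.card_le_univ _)
    have h3 : (2 : ℝ) ^ N * (1 / 2) ^ N = 1 := by rw [← mul_pow]; norm_num
    have h4 : (0 : ℝ) < 2 ^ N := by positivity
    nlinarith
  set h : ℝ → ℝ := fun θ => (∏ i, (θ - a i)) * (θ - b) with hh
  have hsplit : ∀ θ, h θ = (θ - a j) * (∏ i ∈ Finset.univ.erase j, (θ - a i)) * (θ - b) := by
    intro θ
    simp only [hh]
    rw [← Finset.mul_prod_erase Finset.univ (fun i => θ - (a i : ℝ)) (Finset.mem_univ j)]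
  have habs : ∀ θ : ℝ, |θ - a j| ≤ 1 / 2 → |θ - a j| * (Real.exp B + 2) ≤ |h θ| := by
    intro θ hθ
    rw [hsplit, abs_mul, abs_mul, Finset.abs_prod, mul_assoc]
    refine mul_le_mul_of_nonneg_left ?_ (abs_nonneg _)
    have h1 := hQ θ hθ
    have h2 := hfar θ hθ
    have h3 : 0 ≤ ∏ i ∈ Finset.univ.erase j, |θ - a i| :=
      Finset.prod_nonneg fun _ _ => abs_nonneg _
    calc Real.exp B + 2 = 1 * (Real.exp B + 2) := by ring
      _ ≤ (2 ^ N * ∏ i ∈ Finset.univ.erase j, |θ - a i|) * (Real.exp B + 2) := by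
        gcongr
      _ = (∏ i ∈ Finset.univ.erase j, |θ - a i|) * (2 ^ N * (Real.exp B + 2)) := by ring
      _ ≤ _ := by gcongr
  have hprod : h (a j + 1 / 2) * h (a j - 1 / 2) ≤ 0 := by
    rw [hsplit, hsplit]
    have e : ((a j + 1 / 2 : ℝ) - a j) * (∏ i ∈ Finset.univ.erase j, ((a j + 1 / 2 : ℝ) - a i)) *
        ((a j + 1 / 2 : ℝ) - b) * (((a j - 1 / 2 : ℝ) - a j) *
        (∏ i ∈ Finset.univ.erase j, ((a j - 1 / 2 : ℝ) - a i)) * ((a j - 1 / 2 : ℝ) - b)) =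
        -(1 / 4 * (∏ i ∈ Finset.univ.erase j, (((a j + 1 / 2 : ℝ) - a i) *
          ((a j - 1 / 2 : ℝ) - a i))) * (((a j : ℝ) - b) ^ 2 - 1 / 4)) := by
      rw [Finset.prod_mul_distrib]; ring
    rw [e, neg_nonpos]
    have h1 : 0 ≤ ∏ i ∈ Finset.univ.erase j, (((a j + 1 / 2 : ℝ) - a i) *
          ((a j - 1 / 2 : ℝ) - a i)) := by
      refine Finset.prod_nonneg fun i hi => ?_
      have := hint i hi
      have h2 : (1 : ℝ) ≤ ((a j : ℝ) - a i) ^ 2 := by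
        rw [← sq_abs]; nlinarith
      nlinarith
    have h2 : 0 ≤ ((a j : ℝ) - b) ^ 2 - 1 / 4 := by
      have h3 := hfar (a j) (by simp)
      have h4 : (1 : ℝ) ≤ 2 ^ N := one_le_pow₀ (by norm_num)
      have h5 : 1 ≤ |(a j : ℝ) - b| := by nlinarith
      rw [← sq_abs]; nlinarith
    positivity
  obtain ⟨x, hx, hx1⟩ : ∃ x : ℝ, |x - a j| = 1 / 2 ∧ 1 ≤ h x := by
    have p1 : |(a j + 1 / 2 : ℝ) - a j| = 1 / 2 := by
      rw [add_sub_cancel_left]; norm_num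
    have p2 : |(a j - 1 / 2 : ℝ) - a j| = 1 / 2 := by
      rw [sub_sub_cancel_left, abs_neg]; norm_num
    have q1 := habs _ p1.le
    have q2 := habs _ p2.le
    rw [p1] at q1
    rw [p2] at q2
    by_contra! hcon
    have r1 := hcon _ p1
    have r2 := hcon _ p2
    have s1 : h (a j + 1 / 2) ≤ -1 := by
      rcases le_abs'.mp q1 with h | h <;> linarith
    have s2 : h (a j - 1 / 2) ≤ -1 := by
      rcases le_abs'.mp q2 with h | h <;> linarith
    nlinarith
  have hcont : Continuous h := by simp only [hh]; fun_prop
  have hz : h (a j) = 0 := by rw [hsplit]; simp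
  obtain ⟨θ, hθ, hθ1⟩ : (1 : ℝ) ∈ h '' Set.uIcc (a j : ℝ) x := by
    refine intermediate_value_uIcc hcont.continuousOn ?_
    rw [hz, Set.mem_uIcc]
    left; constructor <;> linarith
  have hθn : |θ - a j| ≤ 1 / 2 := by
    rw [← hx]; exact Set.abs_sub_left_of_mem_uIcc hθ
  refine ⟨θ, hθ1, ?_⟩
  have hle := habs θ hθn
  rw [hθ1, abs_one] at hle
  have hpos : 0 < |θ - a j| := by
    rw [abs_pos]; intro h0
    have := hsplit θ
    rw [h0, hθ1] at this; simp at this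
  have hlt : |θ - a j| < Real.exp (-B) := by
    rw [Real.exp_neg, lt_inv_comm₀ hpos hE, ← one_div, lt_div_iff₀ hpos]
    nlinarith
  have hlog : Real.log |θ - a j| < -B := (Real.log_lt_iff_lt_exp hpos).mpr hlt
  calc ∑ i ∈ Finset.univ.erase j, |Real.log (|θ - a i|)|
      ≤ ∑ i ∈ Finset.univ.erase j, (|(a j : ℝ) - a i| + 3) := by
        refine Finset.sum_le_sum fun i hi => ?_
        have := abc_aux_log (hnear θ hθn i hi).1 (hnear θ hθn i hi).2
        linarith
    _ ≤ ∑ i, (|(a j : ℝ) - a i| + 3) :=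
        Finset.sum_le_sum_of_subset_of_nonneg (Finset.subset_univ _) fun i _ _ => by positivity
    _ ≤ B := Finset.single_le_sum (f := fun j => ∑ i, (|(a j : ℝ) - a i| + 3))
        (fun j _ => Finset.sum_nonneg fun i _ => by positivity) (Finset.mem_univ j)
    _ < -Real.log |θ - a j| := by linarith
    _ ≤ _ := neg_le_abs _

lemma abc_aux_monic (n : ℕ) (a : Fin (n - 1) → ℤ) (b : ℤ) : (abcPolyZ n a b).Monic := by
  have h1 : ((∏ i, (X - C (a i))) * (X - C b) : ℤ[X]).Monic :=
    (monic_prod_of_monic _ _ fun i _ => monic_X_sub_C _).mul (monic_X_sub_C b)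
  refine h1.sub_of_left ?_
  rw [degree_one, Monic.degree_mul (monic_X_sub_C b), degree_X_sub_C]
  have : (0 : WithBot ℕ) ≤ (∏ i, (X - C (a i)) : ℤ[X]).degree :=
    zero_le_degree_iff.mpr (monic_prod_of_monic _ _ fun i _ => monic_X_sub_C _).ne_zero
  exact lt_of_lt_of_le (by norm_num) (add_le_add_left this 1)

lemma abc_aux_natDegree (n : ℕ) (a : Fin (n - 1) → ℤ) (b : ℤ) :
    (abcPolyZ n a b).natDegree ≤ (n - 1) + 1 := by
  unfold abcPolyZ
  refine (natDegree_sub_le _ _).trans (max_le ?_ (by simp))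
  refine natDegree_mul_le.trans (add_le_add ?_ (natDegree_X_sub_C b).le)
  refine (natDegree_prod_le _ _).trans ?_
  simp only [natDegree_X_sub_C]
  simp
end

/-- **Proposition 4.1(3).**  For `|a|` sufficiently large, the elements
`ξ−a_1, …, ξ−a_{n-1}` are units of the ring of integers of `K_a` and are
multiplicatively independent; consequently the subgroup of the unit group
generated by `−1` and `ξ−a_1, …, ξ−a_{n-1}` has finite index. -/
theorem abc_units_independent (n : ℕ) (hn : 3 ≤ n)
    (a : Fin (n - 1) → ℤ) (hinj : Function.Injective a) :
    ∃ A₀ : ℝ, 0 < A₀ ∧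
      ∀ b : ℤ, (∀ i, b ≠ a i) → A₀ ≤ |(b : ℝ)| →
        ∀ [Fact (Irreducible (abcPolyQ n a b))],
          ∃ u : Fin (n - 1) → (𝓞 (AdjoinRoot (abcPolyQ n a b)))ˣ,
            (∀ i, algebraMap (𝓞 (AdjoinRoot (abcPolyQ n a b)))
                (AdjoinRoot (abcPolyQ n a b)) (u i) =
              AdjoinRoot.root (abcPolyQ n a b) - (a i : AdjoinRoot (abcPolyQ n a b))) ∧
            (∀ m : Fin (n - 1) → ℤ, (∏ i, (u i) ^ (m i)) = 1 → ∀ i, m i = 0) ∧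
            (Subgroup.closure ({-1} ∪ Set.range u)).index ≠ 0 := by
  obtain ⟨A₀, hA₀, hroot⟩ := abc_aux_root a hinj
  refine ⟨A₀, hA₀, ?_⟩
  intro b _ hb hirr
  set p := abcPolyQ n a b with hp
  let K := AdjoinRoot p
  have hrt : (∏ i, (AdjoinRoot.root p - (a i : K))) * (AdjoinRoot.root p - (b : K)) = 1 := by
    have h1 : eval₂ (AdjoinRoot.of p) (AdjoinRoot.root p) (abcPolyQ n a b) = 0 :=
      AdjoinRoot.eval₂_root p
    simp only [abcPolyQ, eval₂_map, abcPolyZ, eval₂_sub, eval₂_mul, eval₂_finsetProd, eval₂_X,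
      eval₂_C, eval₂_one] at h1
    simpa [sub_eq_zero] using h1
  have hint : IsIntegral ℤ (AdjoinRoot.root p) := by
    refine ⟨abcPolyZ n a b, abc_aux_monic n a b, ?_⟩
    simp only [abcPolyZ, eval₂_sub, eval₂_mul, eval₂_finsetProd, eval₂_X, eval₂_C, eval₂_one]
    simpa [sub_eq_zero] using hrt
  let r : 𝓞 K := ⟨AdjoinRoot.root p, hint⟩
  have hr : algebraMap (𝓞 K) K r = AdjoinRoot.root p := rfl
  have hrt' : (∏ i, (r - (a i : 𝓞 K))) * (r - (b : 𝓞 K)) = 1 := by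
    apply RingOfIntegers.coe_injective
    simpa [map_prod, hr] using hrt
  have hunit : ∀ i, IsUnit (r - (a i : 𝓞 K)) := fun i =>
    isUnit_of_dvd_one ((Finset.dvd_prod_of_mem (fun i => r - (a i : 𝓞 K)) (Finset.mem_univ i)).trans
      ⟨_, hrt'.symm⟩)
  choose u hu using hunit
  have hu' : ∀ i, algebraMap (𝓞 K) K (u i) = AdjoinRoot.root p - (a i : K) := by
    intro i; rw [hu]; simp [hr]
  choose θ hθ hdom using hroot b hb
  have hev : ∀ j, p.eval₂ (algebraMap ℚ ℂ) (θ j : ℂ) = 0 := by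
    intro j
    have h1 : (∏ i, ((θ j : ℂ) - (a i : ℂ))) * ((θ j : ℂ) - (b : ℂ)) = 1 := by
      exact_mod_cast congrArg (fun x : ℝ => (x : ℂ)) (hθ j)
    simp only [hp, abcPolyQ, eval₂_map, abcPolyZ, eval₂_sub, eval₂_mul, eval₂_finsetProd, eval₂_X,
      eval₂_C, eval₂_one]
    simpa [sub_eq_zero] using h1
  let φ : Fin (n - 1) → K →+* ℂ := fun j => AdjoinRoot.lift (algebraMap ℚ ℂ) (θ j : ℂ) (hev j)
  have hφ : ∀ j i, InfinitePlace.mk (φ j) (u i : K) = |θ j - a i| := by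
    intro j i
    rw [InfinitePlace.apply, hu', map_sub, map_intCast]
    have : φ j (AdjoinRoot.root p) = θ j := AdjoinRoot.lift_root (hev j)
    rw [this, ← Complex.ofReal_intCast, ← Complex.ofReal_sub, Complex.norm_real, Real.norm_eq_abs]
  have hfin : Module.finrank ℚ K ≤ Fintype.card (Fin (n - 1)) + 1 := by
    rw [Fintype.card_fin]
    have h1 : Module.finrank ℚ K = p.natDegree := by
      rw [PowerBasis.finrank (AdjoinRoot.powerBasis hirr.out.ne_zero),
        AdjoinRoot.powerBasis_dim]
    rw [h1]
    exact natDegree_map_le.trans (abc_aux_natDegree n a b)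
  obtain ⟨h1, h2⟩ := abc_aux_indep u (fun j => InfinitePlace.mk (φ j)) hfin (by
    intro j
    simp only [hφ]
    exact hdom j)
  refine ⟨u, hu', h1, ?_⟩
  have := Subgroup.finiteIndex_of_le (Subgroup.closure_mono
    (Set.subset_union_right (s := ({-1} : Set (𝓞 K)ˣ)) (t := Set.range u)))
  exact this.index_ne_zero
end

section
/- There exist constants A₀, C > 0, depending only on n and a_1,…,a_{n-1}, with the following property. Let κ > 0 be a real number and let a be an integer with |a| ≥ A₀ (and a distinct from each a_k) such that K_a has no subfield other than ℚ and K_a itself, and such that the absolute value of the discriminant of K_a is at least |a|^κ. Then the subgroup of the unit group of the ring of integers of K_a generated by −1 and ξ−a_1, …, ξ−a_{n-1} has finite index at most C·κ^{1−n}. -/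
open Polynomial

open NumberField


lemma index_pigeonhole {G ι J : Type*} [CommGroup G] [Fintype ι] [Fintype J]
    (u : ι → G) (l : J → G →* Multiplicative ℝ) (H : Subgroup G) (hu : ∀ k, u k ∈ H)
    (hspan : ∀ g : G, ∃ t : ι → ℝ, ∀ j, (l j g).toAdd = ∑ k, t k * (l j (u k)).toAdd)
    (m S : ℝ) (hS : ∀ j k, |(l j (u k)).toAdd| ≤ S)
    (hm : ∀ g : G, (∀ j, (l j g).toAdd < m) → g ∈ H)
    (N : ℕ) (hN : 0 < N) (hNm : (Fintype.card ι : ℝ) * S < N * m) :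
    H.index ≠ 0 ∧ H.index ≤ N ^ Fintype.card ι := by
  classical
  choose t ht using hspan
  have hNr : (0 : ℝ) < N := by exact_mod_cast hN
  let F : G → ι → Fin N := fun g k => ⟨⌊(N : ℝ) * Int.fract (t g k)⌋₊, by
    rw [Nat.floor_lt (by positivity)]
    nlinarith [Int.fract_lt_one (t g k)]⟩
  have key : ∀ g h : G, F g = F h → g⁻¹ * h ∈ H := by
    intro g h hgh
    have hd : ∀ k, |Int.fract (t h k) - Int.fract (t g k)| ≤ 1 / N := by
      intro k
      have h1 := congrArg Fin.val (congrFun hgh k)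
      simp only [F] at h1
      have a1 := Nat.floor_le (show 0 ≤ (N : ℝ) * Int.fract (t g k) by positivity)
      have a2 := Nat.lt_floor_add_one ((N : ℝ) * Int.fract (t g k))
      have b1 := Nat.floor_le (show 0 ≤ (N : ℝ) * Int.fract (t h k) by positivity)
      have b2 := Nat.lt_floor_add_one ((N : ℝ) * Int.fract (t h k))
      rw [h1] at a1 a2
      rw [abs_le]
      constructor
      · rw [← mul_le_mul_iff_right₀ hNr]
        have : (N : ℝ) * -(1 / N) = -1 := by field_simp
        linarith
      · rw [← mul_le_mul_iff_right₀ hNr]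
        have : (N : ℝ) * (1 / N) = 1 := by field_simp
        linarith
    set w : G := ∏ k, u k ^ (⌊t g k⌋ - ⌊t h k⌋) with hw
    have hwH : w ∈ H := Subgroup.prod_mem _ fun k _ => Subgroup.zpow_mem _ (hu k) _
    have h2 : g⁻¹ * h * w ∈ H := by
      apply hm
      intro j
      have e : (l j (g⁻¹ * h * w)).toAdd
          = ∑ k, (Int.fract (t h k) - Int.fract (t g k)) * (l j (u k)).toAdd := by
        simp only [map_mul, map_inv, hw, map_prod, map_zpow, toAdd_mul, toAdd_inv, toAdd_prod,
          toAdd_zpow]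
        rw [ht g j, ht h j, ← Finset.sum_neg_distrib, ← Finset.sum_add_distrib, ← Finset.sum_add_distrib]
        refine Finset.sum_congr rfl fun k _ => ?_
        rw [zsmul_eq_mul, ← Int.self_sub_floor, ← Int.self_sub_floor]
        push_cast
        ring
      rw [e]
      calc _ ≤ ∑ k : ι, 1 / (N : ℝ) * S := by
            refine Finset.sum_le_sum fun k _ => ?_
            refine (le_abs_self _).trans ?_
            rw [abs_mul]
            exact mul_le_mul (hd k) (hS j k) (abs_nonneg _) (by positivity)
        _ = (Fintype.card ι : ℝ) * S / N := by
            simp [Finset.sum_const]; ring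
        _ < m := by rw [div_lt_iff₀ hNr]; linarith
    have := H.mul_mem h2 (H.inv_mem hwH)
    simpa using this
  let Q : G ⧸ H → (ι → Fin N) := fun q => F q.out
  have hQ : Function.Injective Q := by
    intro p q hpq
    have := key _ _ hpq
    rw [← QuotientGroup.eq] at this
    simpa using this
  have hfin : Finite (G ⧸ H) := Finite.of_injective Q hQ
  refine ⟨H.index_ne_zero_of_finite, ?_⟩
  rw [Subgroup.index_eq_card]
  refine (Nat.card_le_card_of_injective Q hQ).trans ?_
  simp

lemma discr_le_of_gen {K : Type*} [Field K] [NumberField K] (x : 𝓞 K)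
    (hx : IntermediateField.adjoin ℚ {(x : K)} = ⊤) (n : ℕ) (hn : Module.finrank ℚ K = n)
    (B : ℝ) (hB1 : 1 ≤ B) (hB : ∀ φ : K →ₐ[ℚ] ℂ, ‖φ x‖ ≤ B) :
    |(NumberField.discr K : ℝ)| ≤ ((n.factorial : ℝ) * (B ^ n) ^ n) ^ 2 := by
  classical
  let pb0 := IntermediateField.adjoin.powerBasis
    (Algebra.IsIntegral.isIntegral (R := ℚ) (x : K))
  let pb : PowerBasis ℚ K := pb0.map
    ((IntermediateField.equivOfEq hx).trans IntermediateField.topEquiv)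
  have hgen : pb.gen = (x : K) := by
    simp only [pb, pb0, PowerBasis.map_gen, IntermediateField.adjoin.powerBasis_gen]
    rfl
  have hdim : pb.dim = n := by rw [← pb.finrank, hn]
  let ι := Module.Free.ChooseBasisIndex ℤ (𝓞 K)
  have hcard : Fintype.card ι = n := by
    rw [← hn, Module.finrank_eq_card_basis (integralBasis K)]
  have e : Fin pb.dim ≃ ι := Fintype.equivOfCardEq (by simp [hcard, hdim])
  let b := pb.basis.reindex e
  have hb : ∀ i, b i = (x : K) ^ ((e.symm i : Fin pb.dim) : ℕ) := by
    intro i; simp [b, hgen]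
  have hsq := Algebra.discr_of_matrix_vecMul (integralBasis K) ((integralBasis K).toMatrix b)
  rw [Module.Basis.toMatrix_map_vecMul, ← coe_discr] at hsq
  obtain ⟨z, hz⟩ : ∃ z : ℤ, ((integralBasis K).toMatrix b).det = z := by
    refine ⟨(Matrix.of fun i j => (RingOfIntegers.basis K).repr
      (x ^ ((e.symm j : Fin pb.dim) : ℕ)) i).det, ?_⟩
    rw [← eq_intCast (Int.castRingHom ℚ), RingHom.map_det]
    congr 1
    ext i j
    rw [Module.Basis.toMatrix_apply, hb]
    have := integralBasis_repr_apply K (x ^ ((e.symm j : Fin pb.dim) : ℕ)) i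
    simpa using this
  have hz0 : z ≠ 0 := by
    rintro rfl
    rw [hz] at hsq
    apply Algebra.discr_not_zero_of_basis ℚ b
    rw [hsq]; simp
  have h1 : |(NumberField.discr K : ℝ)| ≤ |((Algebra.discr ℚ b : ℚ) : ℝ)| := by
    rw [hsq, hz]
    push_cast
    rw [abs_mul]
    have : (1 : ℝ) ≤ |(z : ℝ) ^ 2| := by
      have : (1 : ℤ) ≤ |z ^ 2| := Int.one_le_abs (pow_ne_zero _ hz0)
      exact_mod_cast this
    nlinarith [abs_nonneg (NumberField.discr K : ℝ)]
  refine h1.trans ?_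
  have e' : ι ≃ (K →ₐ[ℚ] ℂ) := Fintype.equivOfCardEq (by
    rw [hcard, AlgHom.card, hn])
  have h2 := Algebra.discr_eq_det_embeddingsMatrixReindex_pow_two ℚ ℂ b e'
  have h3 : |((Algebra.discr ℚ b : ℚ) : ℝ)| = ‖(Algebra.embeddingsMatrixReindex ℚ ℂ b e').det‖ ^ 2 := by
    rw [← norm_pow, ← h2]
    simp
  rw [h3]
  have h4 := Matrix.det_le (A := Algebra.embeddingsMatrixReindex ℚ ℂ b e')
    (abv := NormedField.toAbsoluteValue ℂ) (x := B ^ n) (by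
      intro i j
      change ‖Algebra.embeddingsMatrixReindex ℚ ℂ b e' i j‖ ≤ _
      simp only [Algebra.embeddingsMatrixReindex, Matrix.reindex_apply, Matrix.submatrix_apply,
        Algebra.embeddingsMatrix_apply, hb, map_pow, norm_pow]
      calc _ ≤ B ^ _ := pow_le_pow_left₀ (norm_nonneg _) (hB _) _
        _ ≤ B ^ n := pow_le_pow_right₀ hB1 (by
          rw [← hdim]; exact (Fin.is_lt _).le))
  rw [hcard, nsmul_eq_mul] at h4
  gcongr
  exact h4

section emb
variable {K J : Type*} [Field K] [NumberField K] [Fintype J] (σ : J → K →+* ℝ)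

lemma emb_bij (hσ : Function.Injective σ) (hc : Fintype.card J = Module.finrank ℚ K) :
    Function.Bijective (fun j => ((Complex.ofRealHom.comp (σ j)).toRatAlgHom : K →ₐ[ℚ] ℂ)) := by
  rw [Fintype.bijective_iff_injective_and_card]
  constructor
  · intro i j hij
    apply hσ
    ext x
    have := DFunLike.congr_fun hij x
    simpa using this
  · rw [hc, AlgHom.card]

lemma abs_norm_eq (hσ : Function.Injective σ) (hc : Fintype.card J = Module.finrank ℚ K) (x : K) :
    |((Algebra.norm ℚ x : ℚ) : ℝ)| = ∏ j, |σ j x| := by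
  have h := Algebra.norm_eq_prod_embeddings ℚ ℂ x
  rw [← (emb_bij σ hσ hc).prod_comp (fun φ => φ x)] at h
  have h2 := congrArg norm h
  rw [norm_prod] at h2
  simpa using h2

lemma unit_prod (hσ : Function.Injective σ) (hc : Fintype.card J = Module.finrank ℚ K)
    (η : (𝓞 K)ˣ) : ∏ j, |σ j (η : K)| = 1 := by
  rw [← abs_norm_eq σ hσ hc]
  have := NumberField.Units.norm K η
  exact_mod_cast this

lemma unit_sq (hσ : Function.Injective σ) (hc : Fintype.card J = Module.finrank ℚ K)
    (η : (𝓞 K)ˣ) (h1 : η ≠ 1) (h2 : η ≠ -1) : ∃ j, 2 ≤ (σ j (η : K)) ^ 2 := by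
  by_contra! hcon
  have hne : Nonempty J := by
    rw [← Fintype.card_pos_iff, hc]; exact Module.finrank_pos
  set y : 𝓞 K := (η : 𝓞 K) ^ 2 - 1 with hy
  have hy0 : y ≠ 0 := by
    intro h
    have : ((η : 𝓞 K) - 1) * ((η : 𝓞 K) + 1) = 0 := by rw [← h, hy]; ring
    rcases mul_eq_zero.mp this with h | h
    · apply h1; ext1; simpa [sub_eq_zero] using h
    · apply h2; ext1; simpa [← eq_neg_iff_add_eq_zero] using h
  have hN := abs_norm_eq σ hσ hc (y : K)
  have hge : (1 : ℝ) ≤ |((Algebra.norm ℚ (y : K) : ℚ) : ℝ)| := by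
    have hn0 : Algebra.norm ℤ y ≠ 0 := by
      rwa [Ne, Algebra.norm_eq_zero_iff]
    have := Int.one_le_abs hn0
    have h3 := Algebra.coe_norm_int y
    rw [← h3]
    exact_mod_cast this
  have hlt : ∏ j, |σ j (y : K)| < ∏ j : J, (1 : ℝ) := by
    have hσne : ∀ j, σ j (η : K) ≠ 0 := by
      intro j; simp
    apply Finset.prod_lt_prod_of_nonempty
    · intro j _
      rw [abs_pos]; simp [hy0]
    · intro j _
      have : σ j (y : K) = (σ j (η : K)) ^ 2 - 1 := by simp [hy]
      rw [this, abs_lt]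
      have := hcon j
      have := pow_pos (abs_pos.mpr (hσne j)) 2
      rw [sq_abs] at this
      constructor <;> linarith
    · exact Finset.univ_nonempty
  simp only [Finset.prod_const_one] at hlt
  linarith

noncomputable def Econst (n : ℕ) : ℝ := 4 * Real.log n.factorial / Real.log 2 + 2 * n ^ 2

lemma unit_log_lower (hσ : Function.Injective σ) (n : ℕ) (hJ : Fintype.card J = n)
    (hn : Module.finrank ℚ K = n)
    (hprim : ∀ F : IntermediateField ℚ K, F = ⊥ ∨ F = ⊤)
    (η : (𝓞 K)ˣ) (h1 : η ≠ 1) (h2 : η ≠ -1) :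
    ∃ j, Real.log |(NumberField.discr K : ℝ)| ≤ Econst n * Real.log |σ j (η : K)| := by
  have hc : Fintype.card J = Module.finrank ℚ K := by rw [hJ, hn]
  have hne : Nonempty J := by
    rw [← Fintype.card_pos_iff, hc]; exact Module.finrank_pos
  obtain ⟨j, -, hj⟩ := Finset.exists_max_image Finset.univ (fun j => |σ j (η : K)|)
    Finset.univ_nonempty
  refine ⟨j, ?_⟩
  set B := |σ j (η : K)| with hB
  have hB2 : 2 ≤ B ^ 2 := by
    obtain ⟨i, hi⟩ := unit_sq σ hσ hc η h1 h2
    have := hj i (Finset.mem_univ _)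
    calc 2 ≤ |σ i (η : K)| ^ 2 := by rwa [sq_abs]
      _ ≤ B ^ 2 := by gcongr
  have hB0 : 0 ≤ B := abs_nonneg _
  have hB1 : 1 ≤ B := by nlinarith
  have htop : IntermediateField.adjoin ℚ {((η : 𝓞 K) : K)} = ⊤ := by
    rcases hprim (IntermediateField.adjoin ℚ {((η : 𝓞 K) : K)}) with h | h
    · exfalso
      rw [IntermediateField.adjoin_simple_eq_bot_iff, IntermediateField.mem_bot] at h
      obtain ⟨q, hq⟩ := h
      have hall : ∀ i, |σ i (η : K)| = |(q : ℝ)| := by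
        intro i
        have hq' : algebraMap (𝓞 K) K η = algebraMap ℚ K q := hq.symm
        rw [hq']; simp
      have hp := unit_prod σ hσ hc η
      simp only [hall, Finset.prod_const] at hp
      have : |(q : ℝ)| = 1 := by
        refine (pow_eq_one_iff_of_nonneg (abs_nonneg _) ?_).mp hp
        simp
      rw [hB, hall, this] at hB2
      norm_num at hB2
    · exact h
  have hD := discr_le_of_gen (η : 𝓞 K) htop n hn B hB1 (by
    intro φ
    obtain ⟨i, rfl⟩ := (emb_bij σ hσ hc).2 φ
    simpa using hj i (Finset.mem_univ _))
  have hD0 : 0 < |(NumberField.discr K : ℝ)| := by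
    rw [abs_pos]; exact_mod_cast NumberField.discr_ne_zero K
  have hl := Real.log_le_log hD0 hD
  have hBpos : 0 < B := by linarith
  rw [Real.log_pow, Real.log_mul (by positivity) (by positivity), Real.log_pow, Real.log_pow] at hl
  push_cast at hl
  have hl2 : Real.log 2 ≤ 2 * Real.log B := by
    have := Real.log_le_log (by norm_num) hB2
    rw [Real.log_pow] at this
    exact_mod_cast this
  have hlf : 0 ≤ Real.log n.factorial := Real.log_natCast_nonneg _
  have hl20 : 0 < Real.log 2 := Real.log_pos (by norm_num)
  have : 2 * Real.log n.factorial ≤ 4 * Real.log n.factorial / Real.log 2 * Real.log B := by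
    rw [div_mul_eq_mul_div, le_div_iff₀ hl20]
    nlinarith
  unfold Econst
  linarith
end emb

lemma exists_root_near {ι : Type*} [Fintype ι] [DecidableEq ι] (c : ι → ℤ)
    (hc : Function.Injective c) (k : ι)
    (hbig : ∀ x : ℝ, |x - c k| = 1 / 2 → 2 < ∏ i ∈ Finset.univ.erase k, |x - c i|) :
    ∃ x : ℝ, |x - c k| < 1 / 2 ∧ ∏ i, (x - c i) = 1 := by
  suffices hs : ∃ x : ℝ, |x - c k| ≤ 1 / 2 ∧ ∏ i, (x - c i) = 1 by
    obtain ⟨x, hx, hx1⟩ := hs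
    refine ⟨x, lt_of_le_of_ne hx fun he => ?_, hx1⟩
    have h1 := hbig x he
    have h2 := congrArg abs hx1
    rw [Finset.abs_prod, ← Finset.mul_prod_erase _ _ (Finset.mem_univ k), he, abs_one] at h2
    linarith
  set h : ℝ → ℝ := fun x => ∏ i ∈ Finset.univ.erase k, (x - c i) with hh
  have hg : ∀ x : ℝ, ∏ i, (x - c i) = (x - c k) * h x := fun x =>
    (Finset.mul_prod_erase _ _ (Finset.mem_univ k)).symm
  have hcont : Continuous fun x : ℝ => ∏ i, (x - c i) := by fun_prop
  have hp := hbig (c k + 1 / 2) (by norm_num [abs_of_pos])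
  have hm := hbig (c k - 1 / 2) (by norm_num [abs_of_pos])
  rw [← Finset.abs_prod] at hp hm
  change 2 < |h _| at hp
  change 2 < |h _| at hm
  have hpos : 0 < h (c k + 1 / 2) * h (c k - 1 / 2) := by
    rw [hh]
    simp only
    rw [← Finset.prod_mul_distrib]
    refine Finset.prod_pos fun i hi => ?_
    have hne : c i ≠ c k := fun e => (Finset.ne_of_mem_erase hi) (hc e)
    have h1 : (1 : ℤ) ≤ (c k - c i) ^ 2 := by
      have : 0 < (c k - c i) ^ 2 := by
        have : c k - c i ≠ 0 := sub_ne_zero.mpr hne.symm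
        positivity
      omega
    have h2 : (1 : ℝ) ≤ ((c k : ℝ) - c i) ^ 2 := by exact_mod_cast h1
    nlinarith
  rcases lt_or_ge 0 (h (c k + 1 / 2)) with h0 | h0
  · rw [abs_of_pos h0] at hp
    have := intermediate_value_Icc (show (c k : ℝ) ≤ c k + 1 / 2 by linarith) hcont.continuousOn
    obtain ⟨x, hx, hx1⟩ := this (show (1 : ℝ) ∈ _ from ⟨by rw [hg]; simp, by
      rw [hg]; linarith⟩)
    refine ⟨x, ?_, hx1⟩
    rw [abs_le]; constructor <;> linarith [hx.1, hx.2]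
  · have h0' : h (c k - 1 / 2) < 0 := by
      by_contra! hcon
      nlinarith
    rw [abs_of_neg h0'] at hm
    have := intermediate_value_Icc' (show (c k : ℝ) - 1 / 2 ≤ c k by linarith) hcont.continuousOn
    obtain ⟨x, hx, hx1⟩ := this (show (1 : ℝ) ∈ _ from ⟨by rw [hg]; simp, by
      rw [hg]; linarith⟩)
    refine ⟨x, ?_, hx1⟩
    rw [abs_le]; constructor <;> linarith [hx.1, hx.2]

lemma real_roots (m : ℕ) (hm : 2 ≤ m) (a : Fin m → ℤ) (ha : Function.Injective a) (M : ℝ)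
    (hM : M = 2 + 2 * ∑ i, |(a i : ℝ)|) (b : ℤ) (hb : ∀ i, b ≠ a i)
    (hbM : M ^ (2 * m + 6) ≤ |(b : ℝ)|) :
    ∃ r : Option (Fin m) → ℝ, Function.Injective r ∧
      (∀ o, (∏ i, (r o - a i)) * (r o - b) = 1) ∧
      (∀ o i, |Real.log (|r o - a i|)| ≤ 2 * Real.log |(b : ℝ)|) ∧
      (∀ k, ∑ i ∈ Finset.univ.erase k, |Real.log (|r (some k) - a i|)|
        < |Real.log (|r (some k) - a k|)|) ∧
      (∀ k, |r (some k) - a k| ≤ 1 / 2) := by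
  classical
  have hM2 : 2 ≤ M := by
    have : 0 ≤ ∑ i, |(a i : ℝ)| := Finset.sum_nonneg fun i _ => abs_nonneg _
    linarith
  have haM : ∀ i, |(a i : ℝ)| ≤ M / 2 - 1 := by
    intro i
    have := Finset.single_le_sum (f := fun i => |(a i : ℝ)|) (fun i _ => abs_nonneg _)
      (Finset.mem_univ i)
    linarith
  have hMb : 4 * M ≤ |(b : ℝ)| := by
    calc 4 * M ≤ M * M * M := by nlinarith
      _ = M ^ 3 := by ring
      _ ≤ M ^ (2 * m + 6) := pow_le_pow_right₀ (by linarith) (by omega)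
      _ ≤ _ := hbM
  have h2b : (2 : ℝ) ^ (m + 2) < |(b : ℝ)| := by
    calc (2 : ℝ) ^ (m + 2) < 2 ^ (2 * m + 6) := pow_lt_pow_right₀ (by norm_num) (by omega)
      _ ≤ M ^ (2 * m + 6) := by gcongr
      _ ≤ _ := hbM
  let c : Option (Fin m) → ℤ := fun o => o.elim b a
  have hc : Function.Injective c := by
    intro x y h
    rcases x with _ | x <;> rcases y with _ | y
    · rfl
    · exact absurd h (hb y)
    · exact absurd h.symm (hb x)
    · exact congrArg some (ha h)
  have hsep : ∀ i k, i ≠ k → (1 : ℝ) ≤ |(c k : ℝ) - c i| := by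
    intro i k hik
    have : (1 : ℤ) ≤ |c k - c i| := Int.one_le_abs (sub_ne_zero.mpr fun e => hik (hc e).symm)
    exact_mod_cast this
  have hhalf : ∀ (x : ℝ) i k, i ≠ k → |x - c k| ≤ 1 / 2 → 1 / 2 ≤ |x - c i| := by
    intro x i k hik hx
    have h1 := hsep i k hik
    have h2 := abs_sub_abs_le_abs_sub ((c k : ℝ) - c i) (x - c i)
    have h3 : (c k : ℝ) - c i - (x - c i) = -(x - c k) := by ring
    rw [h3, abs_neg] at h2
    linarith
  have hnb : ∀ (x : ℝ) k, |x - a k| ≤ 1 / 2 →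
      |(b : ℝ)| / 2 ≤ |x - b| ∧ |x - b| ≤ 2 * |(b : ℝ)| := by
    intro x k hx
    have := haM k
    have h1 : |x| ≤ M / 2 := by
      have := abs_add_le (x - a k) (a k)
      rw [sub_add_cancel] at this
      linarith
    have h2 := abs_sub_abs_le_abs_sub (b : ℝ) x
    rw [abs_sub_comm] at h2
    have h3 := abs_sub x (b : ℝ)
    constructor <;> linarith
  have hba : ∀ (x : ℝ) k, |x - b| ≤ 1 / 2 →
      |(b : ℝ)| / 2 ≤ |x - a k| ∧ |x - a k| ≤ 2 * |(b : ℝ)| := by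
    intro x k hx
    have := haM k
    have h2 := abs_sub_abs_le_abs_sub (b : ℝ) x
    rw [abs_sub_comm] at h2
    have h4 := abs_sub_abs_le_abs_sub x (b : ℝ)
    have h3 := abs_sub x (a k : ℝ)
    have h5 := abs_sub_abs_le_abs_sub x (a k : ℝ)
    constructor <;> linarith
  have hex : ∀ k, ∃ x : ℝ, |x - c k| < 1 / 2 ∧ ∏ i, (x - c i) = 1 := by
    intro k
    apply exists_root_near c hc k
    intro x hx
    obtain ⟨i1, hi1, hi1b⟩ : ∃ i1, i1 ≠ k ∧ |(b : ℝ)| / 2 ≤ |x - c i1| := by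
      rcases k with _ | k
      · exact ⟨some ⟨0, by omega⟩, by simp, (hba x _ hx.le).1⟩
      · exact ⟨none, by simp, (hnb x k hx.le).1⟩
    rw [← Finset.mul_prod_erase _ _ (Finset.mem_erase.mpr ⟨hi1, Finset.mem_univ _⟩)]
    set s := (Finset.univ.erase k).erase i1 with hs
    have hcard : s.card ≤ m := by
      rw [hs, Finset.card_erase_of_mem (Finset.mem_erase.mpr ⟨hi1, Finset.mem_univ _⟩),
        Finset.card_erase_of_mem (Finset.mem_univ _)]
      simp
    have hprod : (1 / 2 : ℝ) ^ m ≤ ∏ i ∈ s, |x - c i| := by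
      calc (1 / 2 : ℝ) ^ m ≤ (1 / 2) ^ s.card :=
            pow_le_pow_of_le_one (by norm_num) (by norm_num) hcard
        _ = ∏ i ∈ s, (1 / 2 : ℝ) := by simp
        _ ≤ _ := Finset.prod_le_prod (fun _ _ => by norm_num) fun i hi => by
            refine hhalf x i k ?_ hx.le
            rw [hs, Finset.mem_erase, Finset.mem_erase] at hi
            exact hi.2.1
    calc (2 : ℝ) = 2 ^ (m + 2) / 2 * (1 / 2) ^ m := by
          rw [pow_add, one_div, inv_pow]; field_simp
      _ < |(b : ℝ)| / 2 * (1 / 2) ^ m := by gcongr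
      _ ≤ _ := mul_le_mul hi1b hprod (by positivity) (abs_nonneg _)
  choose r hr' hprod using hex
  have hr : ∀ k, |r k - c k| ≤ 1 / 2 := fun k => (hr' k).le
  have hprod' : ∀ o, (∏ i, (r o - a i)) * (r o - b) = 1 := by
    intro o
    rw [← hprod o, Fintype.prod_option, mul_comm]
    rfl
  have hlM : 0 < Real.log M := Real.log_pos (by linarith)
  have hb0 : 0 < |(b : ℝ)| := by linarith
  have hlb : (2 * m + 6) * Real.log M ≤ Real.log |(b : ℝ)| := by
    have := Real.log_le_log (by positivity) hbM
    rw [Real.log_pow] at this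
    exact_mod_cast this
  have hl2 : Real.log 2 ≤ Real.log M := Real.log_le_log (by norm_num) hM2
  have hl20 : 0 < Real.log 2 := Real.log_pos (by norm_num)
  have hm0 : (2 : ℝ) ≤ m := by exact_mod_cast hm
  have hbig : ∀ y : ℝ, |(b : ℝ)| / 2 ≤ y → y ≤ 2 * |(b : ℝ)| →
      Real.log |(b : ℝ)| - Real.log M ≤ Real.log y ∧
      Real.log y ≤ Real.log |(b : ℝ)| + Real.log M := by
    intro y h1 h2
    have h3 := Real.log_le_log (by positivity) h1
    have h4 := Real.log_le_log (by linarith) h2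
    rw [Real.log_div hb0.ne' (by norm_num)] at h3
    rw [Real.log_mul (by norm_num) hb0.ne'] at h4
    constructor <;> linarith
  have hoff : ∀ k i, i ≠ k → |Real.log (|r (some k) - a i|)| ≤ Real.log M := by
    intro k i hik
    have h1 : 1 / 2 ≤ |r (some k) - a i| :=
      hhalf _ (some i) (some k) (by simpa using hik) (hr (some k))
    have h2 : |r (some k) - a i| ≤ M := by
      have e := abs_add_le (r (some k) - a k) (a k - a i)
      have e2 := abs_sub (a k : ℝ) (a i)
      rw [sub_add_sub_cancel] at e
      have e3 : |r (some k) - a k| ≤ 1 / 2 := hr (some k)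
      linarith [haM k, haM i]
    have h3 := Real.log_le_log (by norm_num) h1
    have h4 := Real.log_le_log (by linarith) h2
    rw [one_div, Real.log_inv] at h3
    rw [abs_le]
    constructor <;> linarith
  have hsum : ∀ k, ∑ i ∈ Finset.univ.erase k, |Real.log (|r (some k) - a i|)|
      ≤ m * Real.log M := by
    intro k
    refine (Finset.sum_le_card_nsmul _ _ (Real.log M) fun i hi =>
      hoff k i (Finset.ne_of_mem_erase hi)).trans ?_
    rw [nsmul_eq_mul]
    gcongr
    rw [Finset.card_erase_of_mem (Finset.mem_univ _)]
    simp
  have hdiag : ∀ k, Real.log |(b : ℝ)| - (m + 1) * Real.log M ≤ -Real.log (|r (some k) - a k|) ∧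
      -Real.log (|r (some k) - a k|) ≤ Real.log |(b : ℝ)| + (m + 1) * Real.log M := by
    intro k
    have h1 := congrArg (fun x => Real.log |x|) (hprod' (some k))
    simp only [abs_one, Real.log_one] at h1
    have hne : ∀ i ∈ Finset.univ, |r (some k) - (a i : ℝ)| ≠ 0 := by
      intro i _ h0
      have h2 := hprod' (some k)
      rw [Finset.prod_eq_zero (Finset.mem_univ i) (abs_eq_zero.mp h0)] at h2
      norm_num at h2
    have hn := hnb (r (some k)) k (hr (some k))
    have hn2 := hbig _ hn.1 hn.2
    rw [abs_mul, Finset.abs_prod, Real.log_mul (Finset.prod_ne_zero_iff.mpr hne) (by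
      have := hn.1
      intro h0
      rw [h0] at this
      linarith), Real.log_prod hne, ← Finset.add_sum_erase _ _ (Finset.mem_univ k)] at h1
    have h5 : |∑ i ∈ Finset.univ.erase k, Real.log (|r (some k) - a i|)| ≤ m * Real.log M :=
      (Finset.abs_sum_le_sum_abs _ _).trans (hsum k)
    rw [abs_le] at h5
    constructor <;> linarith
  refine ⟨r, ?_, hprod', ?_, ?_, fun k => hr (some k)⟩
  · intro x y hxy
    by_contra hne
    have h1 := hr' x
    have h2 := hhalf (r x) x y hne (by rw [hxy]; exact hr y)
    linarith
  · intro o i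
    have hmM : (m + 1) * Real.log M ≤ Real.log |(b : ℝ)| := by nlinarith
    rcases o with _ | k
    · have h1 := hba (r none) i (hr none)
      have h2 := hbig _ h1.1 h1.2
      rw [abs_le]
      constructor <;> nlinarith
    · by_cases hik : i = k
      · subst hik
        have := hdiag i
        rw [abs_le]
        constructor <;> nlinarith
      · refine (hoff k i hik).trans ?_
        nlinarith
  · intro k
    refine (hsum k).trans_lt ?_
    rw [← abs_neg]
    refine lt_of_lt_of_le ?_ (le_abs_self _)
    have := (hdiag k).1
    nlinarith

lemma Econst_pos (n : ℕ) (hn : 0 < n) : 0 < Econst n := by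
  unfold Econst
  have hlf : 0 ≤ Real.log n.factorial := Real.log_natCast_nonneg _
  have hl20 : 0 < Real.log 2 := Real.log_pos (by norm_num)
  have : (0 : ℝ) < n := by exact_mod_cast hn
  positivity

lemma core_index {K : Type*} [Field K] [NumberField K] (m : ℕ) (hm : 2 ≤ m)
    (hfin : Module.finrank ℚ K = m + 1)
    (hprim : ∀ F : IntermediateField ℚ K, F = ⊥ ∨ F = ⊤)
    (σ : Option (Fin m) → K →+* ℝ) (hσ : Function.Injective σ)
    (u : Fin m → (𝓞 K)ˣ) (Lb κ : ℝ) (hLb : 0 < Lb) (hκ : 0 < κ)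
    (hS : ∀ o i, |Real.log (|σ o (u i : K)|)| ≤ 2 * Lb)
    (hdd : ∀ k, ∑ i ∈ Finset.univ.erase k, |Real.log (|σ (some k) (u i : K)|)|
        < |Real.log (|σ (some k) (u k : K)|)|)
    (hhalf : ∀ k, |σ (some k) (u k : K)| ≤ 1 / 2)
    (hD : κ * Lb ≤ Real.log |(NumberField.discr K : ℝ)|) :
    (Subgroup.closure ({-1} ∪ Set.range u)).index ≠ 0 ∧
    ((Subgroup.closure ({-1} ∪ Set.range u)).index : ℝ) ≤
      (2 * (m + 1) * Econst (m + 1) / κ) ^ m := by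
  classical
  set H := Subgroup.closure ({-1} ∪ Set.range u) with hH
  set E := Econst (m + 1) with hE
  have hE0 : 0 < E := Econst_pos _ (by omega)
  have hcJ : Fintype.card (Option (Fin m)) = m + 1 := by simp
  have hlow := unit_log_lower σ hσ (m + 1) hcJ hfin hprim
  have hne0 : ∀ (o) (g : (𝓞 K)ˣ), |σ o (g : K)| ≠ 0 := by
    intro o g; simp
  let l : Option (Fin m) → (𝓞 K)ˣ →* Multiplicative ℝ := fun o =>
    { toFun := fun g => Multiplicative.ofAdd (Real.log (|σ o (g : K)|))
      map_one' := by simp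
      map_mul' := by
        intro g h
        rw [← ofAdd_add, ← Real.log_mul (hne0 o g) (hne0 o h)]
        simp [abs_mul] }
  have hl : ∀ o g, (l o g).toAdd = Real.log (|σ o (g : K)|) := fun o g => rfl
  have hneg : (-1 : (𝓞 K)ˣ) ∈ H := Subgroup.subset_closure (by simp)
  have hu : ∀ k, u k ∈ H := fun k => Subgroup.subset_closure (by simp)
  -- bound on kappa
  have hκE : κ ≤ 2 * E := by
    let k0 : Fin m := ⟨0, by omega⟩
    have h1 : u k0 ≠ 1 := by
      intro h; have := hhalf k0; rw [h] at this; norm_num at this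
    have h2 : u k0 ≠ -1 := by
      intro h; have := hhalf k0; rw [h] at this; norm_num at this
    obtain ⟨j, hj⟩ := hlow (u k0) h1 h2
    have h3 := (le_abs_self _).trans (hS j k0)
    have : κ * Lb ≤ 2 * E * Lb := by nlinarith
    exact le_of_mul_le_mul_right this hLb
  have hsum0 : ∀ g : (𝓞 K)ˣ, (l none g).toAdd = - ∑ k, (l (some k) g).toAdd := by
    intro g
    have h1 := unit_prod σ hσ (by rw [hcJ, hfin]) g
    have h2 := congrArg Real.log h1
    rw [Real.log_prod (fun o _ => hne0 o g), Real.log_one, Fintype.sum_option] at h2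
    simp only [hl]
    linarith
  have hspan : ∀ g : (𝓞 K)ˣ, ∃ t : Fin m → ℝ, ∀ j,
      (l j g).toAdd = ∑ k, t k * (l j (u k)).toAdd := by
    intro g
    let A : Matrix (Fin m) (Fin m) ℝ := Matrix.of fun k i => (l (some k) (u i)).toAdd
    have hdet : A.det ≠ 0 := by
      apply det_ne_zero_of_sum_row_lt_diag
      intro k
      exact hdd k
    let v : Fin m → ℝ := fun k => (l (some k) g).toAdd
    have hsome : ∀ k, (l (some k) g).toAdd =
        ∑ i, (A⁻¹.mulVec v) i * (l (some k) (u i)).toAdd := by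
      intro k
      have h1 : A.mulVec (A⁻¹.mulVec v) = v := by
        rw [Matrix.mulVec_mulVec, Matrix.mul_nonsing_inv _ (isUnit_iff_ne_zero.mpr hdet),
          Matrix.one_mulVec]
      have h2 := congrFun h1 k
      rw [Matrix.mulVec, dotProduct] at h2
      rw [show (l (some k) g).toAdd = v k from rfl, ← h2]
      refine Finset.sum_congr rfl fun i _ => ?_
      rw [mul_comm]; rfl
    refine ⟨A⁻¹.mulVec v, ?_⟩
    rintro (_ | k)
    · rw [hsum0, Finset.sum_congr rfl fun k _ => hsome k, Finset.sum_comm,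
        ← Finset.sum_neg_distrib]
      refine Finset.sum_congr rfl fun i _ => ?_
      rw [hsum0, ← Finset.mul_sum]
      ring
    · exact hsome k
  have hm0 : (2 : ℝ) ≤ m := by exact_mod_cast hm
  obtain ⟨h1, h2⟩ := index_pigeonhole u l H hu hspan (κ * Lb / E) (2 * Lb)
    (fun j k => hS j k) (by
      intro g hg
      by_contra hgH
      have h1 : g ≠ 1 := by rintro rfl; exact hgH H.one_mem
      have h2 : g ≠ -1 := by rintro rfl; exact hgH hneg
      obtain ⟨j, hj⟩ := hlow g h1 h2
      have h3 := hg j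
      rw [hl, lt_div_iff₀ hE0] at h3
      linarith) (⌊2 * m * E / κ⌋₊ + 1) (Nat.succ_pos _) (by
      have := Nat.lt_floor_add_one (2 * m * E / κ)
      rw [div_lt_iff₀ hκ] at this
      rw [Fintype.card_fin, ← mul_div_assoc, lt_div_iff₀ hE0]
      push_cast
      nlinarith)
  refine ⟨h1, ?_⟩
  rw [Fintype.card_fin] at h2
  have h3 : (H.index : ℝ) ≤ ((⌊2 * m * E / κ⌋₊ + 1 : ℕ) : ℝ) ^ m := by exact_mod_cast h2
  refine h3.trans ?_
  gcongr
  push_cast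
  have h4 := Nat.floor_le (show 0 ≤ 2 * m * E / κ by positivity)
  have h5 : 1 ≤ 2 * E / κ := by rwa [le_div_iff₀ hκ, one_mul]
  calc _ ≤ 2 * m * E / κ + 2 * E / κ := by linarith
    _ = _ := by ring


lemma abcPolyZ_natDegree (n : ℕ) (hn : 3 ≤ n) (a : Fin (n - 1) → ℤ) (b : ℤ) :
    (abcPolyZ n a b).natDegree = n ∧ (abcPolyZ n a b).Monic := by
  have hm : ((∏ i, (X - C (a i))) * (X - C b)).Monic :=
    (monic_prod_of_monic _ _ fun i _ => monic_X_sub_C _).mul (monic_X_sub_C _)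
  have hd : ((∏ i, (X - C (a i))) * (X - C b)).natDegree = n := by
    rw [Monic.natDegree_mul (monic_prod_of_monic _ _ fun i _ => monic_X_sub_C _)
      (monic_X_sub_C _), natDegree_prod_of_monic _ _ fun i _ => monic_X_sub_C _]
    simp only [natDegree_X_sub_C, Finset.sum_const, Finset.card_univ, Fintype.card_fin, smul_eq_mul]
    omega
  unfold abcPolyZ
  have h1 : (1 : ℤ[X]).natDegree < ((∏ i, (X - C (a i))) * (X - C b)).natDegree := by
    rw [hd, natDegree_one]; omega
  exact ⟨by rw [natDegree_sub_eq_left_of_natDegree_lt h1, hd],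
    hm.sub_of_left (degree_lt_degree h1)⟩

lemma abcPolyZ_eval₂ {R : Type*} [CommRing R] (φ : ℤ →+* R) (n : ℕ) (a : Fin (n - 1) → ℤ) (b : ℤ)
    (x : R) : (abcPolyZ n a b).eval₂ φ x = (∏ i, (x - (a i : R))) * (x - b) - 1 := by
  rw [abcPolyZ, eval₂_sub, eval₂_mul, eval₂_finsetProd]
  simp only [eval₂_sub, eval₂_X, eval₂_C, eval₂_one]
  simp only [eq_intCast]

lemma abcPolyQ_eval₂ {R : Type*} [CommRing R] (φ : ℚ →+* R) (n : ℕ) (a : Fin (n - 1) → ℤ) (b : ℤ)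
    (x : R) : (abcPolyQ n a b).eval₂ φ x = (∏ i, (x - (a i : R))) * (x - b) - 1 := by
  rw [abcPolyQ, eval₂_map, abcPolyZ_eval₂]

/-- **Proposition 4.1(4).**  There are `A₀, C > 0` (depending only on `n` and the `a_k`)
such that if `|a| ≥ A₀`, the field `K_a` is primitive (has no subfield other than `ℚ`
and itself), and `|disc K_a| ≥ |a|^κ` for some `κ > 0`, then the subgroup of the unit
group of the ring of integers of `K_a` generated by `−1` and the ABC-units
`ξ−a_1, …, ξ−a_{n-1}` has finite index at most `C·κ^{1-n}`. -/
theorem abc_unit_index_bound (n : ℕ) (hn : 3 ≤ n)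
    (a : Fin (n - 1) → ℤ) (hinj : Function.Injective a) :
    ∃ A₀ C : ℝ, 0 < A₀ ∧ 0 < C ∧
      ∀ (κ : ℝ), 0 < κ →
        ∀ b : ℤ, (∀ i, b ≠ a i) → A₀ ≤ |(b : ℝ)| →
          ∀ [Fact (Irreducible (abcPolyQ n a b))],
            (∀ F : IntermediateField ℚ (AdjoinRoot (abcPolyQ n a b)), F = ⊥ ∨ F = ⊤) →
            |(b : ℝ)| ^ κ ≤ |(NumberField.discr (AdjoinRoot (abcPolyQ n a b)) : ℝ)| →
            ∃ u : Fin (n - 1) → (𝓞 (AdjoinRoot (abcPolyQ n a b)))ˣ,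
              (∀ i, algebraMap (𝓞 (AdjoinRoot (abcPolyQ n a b)))
                  (AdjoinRoot (abcPolyQ n a b)) (u i) =
                AdjoinRoot.root (abcPolyQ n a b) -
                  (a i : AdjoinRoot (abcPolyQ n a b))) ∧
              (Subgroup.closure ({-1} ∪ Set.range u)).index ≠ 0 ∧
              ((Subgroup.closure ({-1} ∪ Set.range u)).index : ℝ) ≤
                C * κ ^ ((1 : ℝ) - (n : ℝ)) := by
  have hm : 2 ≤ n - 1 := by omega
  set M : ℝ := 2 + 2 * ∑ i, |(a i : ℝ)| with hM
  have hM2 : 2 ≤ M := by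
    have : 0 ≤ ∑ i, |(a i : ℝ)| := Finset.sum_nonneg fun i _ => abs_nonneg _
    linarith
  have hE0 : 0 < Econst (n - 1 + 1) := Econst_pos _ (by omega)
  refine ⟨M ^ (2 * (n - 1) + 6),
    (2 * ((n - 1 : ℕ) + 1) * Econst (n - 1 + 1)) ^ (n - 1), by positivity, by positivity, ?_⟩
  intro κ hκ b hb hbM hirr hprim hD
  obtain ⟨hdeg, hmonic⟩ := abcPolyZ_natDegree n hn a b
  obtain ⟨r, hrinj, hrprod, hrS, hrdd, hrhalf⟩ :=
    real_roots (n - 1) hm a hinj M hM b hb hbM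
  have hp0 : (abcPolyQ n a b) ≠ 0 := hirr.out.ne_zero
  -- the relation satisfied by the root
  have hrel : (∏ i, (AdjoinRoot.root (abcPolyQ n a b) - (a i : AdjoinRoot (abcPolyQ n a b)))) * (AdjoinRoot.root (abcPolyQ n a b) - b) = 1 := by
    have h1 := AdjoinRoot.eval₂_root (abcPolyQ n a b)
    rwa [abcPolyQ_eval₂, sub_eq_zero] at h1
  have hint : ∀ z : ℤ, IsIntegral ℤ (AdjoinRoot.root (abcPolyQ n a b) - (z : AdjoinRoot (abcPolyQ n a b))) := by
    intro z
    refine IsIntegral.sub ⟨abcPolyZ n a b, hmonic, ?_⟩ (isIntegral_algebraMap (A := AdjoinRoot (abcPolyQ n a b)) (x := z))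
    rw [abcPolyZ_eval₂, hrel, sub_self]
  let x : ℤ → 𝓞 (AdjoinRoot (abcPolyQ n a b)) := fun z => ⟨AdjoinRoot.root (abcPolyQ n a b) - (z : AdjoinRoot (abcPolyQ n a b)), hint z⟩
  have hx : ∀ z, algebraMap (𝓞 (AdjoinRoot (abcPolyQ n a b))) (AdjoinRoot (abcPolyQ n a b)) (x z) = AdjoinRoot.root (abcPolyQ n a b) - z :=
    fun z => rfl
  have hxrel : (∏ i, x (a i)) * x b = 1 := by
    apply RingOfIntegers.coe_injective
    rw [map_mul, map_prod, map_one]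
    simp only [hx]
    exact hrel
  have hxu : ∀ i, IsUnit (x (a i)) := by
    intro i
    apply isUnit_of_dvd_one
    rw [← hxrel]
    exact (Finset.dvd_prod_of_mem _ (Finset.mem_univ i)).mul_right _
  choose u hu using hxu
  have hu' : ∀ i, algebraMap (𝓞 (AdjoinRoot (abcPolyQ n a b))) (AdjoinRoot (abcPolyQ n a b)) (u i) =
      AdjoinRoot.root (abcPolyQ n a b) - (a i : AdjoinRoot (abcPolyQ n a b)) := by
    intro i; rw [hu, hx]
  -- the real embeddings
  have hev : ∀ o, (abcPolyQ n a b).eval₂ (algebraMap ℚ ℝ) (r o) = 0 := by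
    intro o
    rw [abcPolyQ_eval₂, hrprod, sub_self]
  let σ : Option (Fin (n - 1)) → AdjoinRoot (abcPolyQ n a b) →+* ℝ := fun o =>
    AdjoinRoot.lift (algebraMap ℚ ℝ) (r o) (hev o)
  have hσr : ∀ o, σ o (AdjoinRoot.root (abcPolyQ n a b)) = r o := fun o => AdjoinRoot.lift_root _
  have hσ : Function.Injective σ := by
    intro o o' h
    apply hrinj
    rw [← hσr, ← hσr, h]
  have hσu : ∀ o i, σ o (algebraMap (𝓞 (AdjoinRoot (abcPolyQ n a b))) (AdjoinRoot (abcPolyQ n a b)) (u i)) = r o - a i := by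
    intro o i
    rw [hu', map_sub, hσr, map_intCast]
  have hfin : Module.finrank ℚ (AdjoinRoot (abcPolyQ n a b)) = n - 1 + 1 := by
    have h1 := (AdjoinRoot.powerBasis hp0).finrank
    have hdq : (abcPolyQ n a b).natDegree = n := by rw [abcPolyQ, hmonic.natDegree_map, hdeg]
    rw [AdjoinRoot.powerBasis_dim, hdq] at h1
    have h2 : n - 1 + 1 = n := by omega
    rw [h2]
    convert h1
  have hb1 : 1 < |(b : ℝ)| := by
    have : M ^ 1 ≤ M ^ (2 * (n - 1) + 6) := pow_le_pow_right₀ (by linarith) (by omega)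
    linarith [pow_one M]
  have hb0 : 0 < |(b : ℝ)| := by linarith
  obtain ⟨h1, h2⟩ := core_index (K := AdjoinRoot (abcPolyQ n a b)) (n - 1) hm hfin
    (by convert hprim) σ hσ u (Real.log |(b : ℝ)|) κ (Real.log_pos hb1) hκ
    (by simpa only [hσu] using hrS) (by simpa only [hσu] using hrdd)
    (by simpa only [hσu] using hrhalf)
    (by
      rw [← Real.log_rpow hb0]
      exact Real.log_le_log (by positivity) hD)
  refine ⟨u, hu', h1, h2.trans (le_of_eq ?_)⟩
  have hexp : (1 : ℝ) - n = -((n - 1 : ℕ) : ℝ) := by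
    rw [Nat.cast_sub (by omega)]; push_cast; ring
  rw [hexp, Real.rpow_neg hκ.le, Real.rpow_natCast, div_pow, div_eq_mul_inv]
end
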